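/- arXiv:1510.05835 — 2 statements merged into one kernel-verified Lean document; each statement's English description precedes it below -/
import Mathlib

section
/- Let r ≥ 1 be an integer, λ_1,…,λ_r, α_1,…,α_r ∈ [0,1), μ_i := λ_1+⋯+λ_i, and let 1 < i_1 < i_2 < ⋯ < i_m (m ≥ 1) be exactly those indices i with μ_i ∈ ℤ, assuming i_1 ≠ 1. Let S be the collection of hyperplanes H_{i_j,k} for 1 ≤ j ≤ m and integers k ≥ 0 with i_j − k ≤ j. Then there exists a function F analytic on ℂ^r ∖ ⋃_{H∈S} H such that F(s) = L_r(λ_1,…,λ_r; α_1,…,α_r; s) for all s ∈ U_r, and all poles of F along members of S are at most simple: for every point p ∈ ℂ^r, the function s ↦ (∏_{H_{i,k}∈S, p∈H_{i,k}} (s_1+⋯+s_i−i+k)) · F(s) extends to a function analytic on a neighborhood of p. -/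
/-!
Summing the series from the largest index `n_1` down, the multiple Lerch zeta function is an iterated
sum: after `i` summations one has a function of the next index `n` and of `s`, given by the tail sum
over `n_1 > ⋯ > n_i > n`. The argument follows these functions through the class of symbols
(`Sy`), that is, functions with asymptotic expansions
`wⁿ ∑_k c_k(s) (n+1)^{-ℓ(s)-k}` which are locally uniform in `s` and have entire coefficients.

The powers `(n+α)^{-z}` are symbols by Taylor's formula (`Sy.shift`), and symbols are closed under
products (`Sy.mul`), the oscillations `w` multiplying and the orders `ℓ` adding. The central fact is
that tail sums of symbols are again symbols (`summation`, `summation_step`). The leading term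
`wⁿ (n+1)^{-z}` is traded for a telescoping difference modulo terms of lower order. If `w ≠ 1`, the
difference of `wⁿ (n+1)^{-z}` itself serves, with a nonzero constant factor, and tail sums continue
to entire functions of the same order. If `w = 1`, the difference of `(n+1)^{-(z-1)}` serves, at the
cost of a factor `z - 1` and of one unit of order; repeated division by
`(z-1), z, z+1, …` is controlled by multiplying with `1/Γ(z-1)`, which is entire.

After `i` summations the oscillation is `e(μ_i)`, so the second case occurs exactly at the indices
with `μ_i ∈ ℤ`. If `i` is the `j`-th of these, the order just before that summation is
`s_1 + ⋯ + s_i - (j - 1)`. Hence (`exists_iter`) the zeta function is an entire function times the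
product of the factors `Γ(s_1 + ⋯ + s_{i_j} - j)`, and the poles of `Γ`, simple and situated at the
nonpositive integers, lie on the hyperplanes `s_1 + ⋯ + s_{i_j} = j - l`, `l ≥ 0`: these are the
members of `S`, and each of them occurs in only one factor.

Analyticity in several variables comes from Osgood's lemma (`osgood`).
-/

open Complex

/-- `e(a) = e^{2πia}`. -/
noncomputable def eR (a : ℝ) : ℂ := Complex.exp (2 * Real.pi * Complex.I * a)

/-- For a real `b > 0` and `z ∈ ℂ`, `b^z := exp (z log b)` (real logarithm). -/
noncomputable def rpowC (b : ℝ) (z : ℂ) : ℂ := Complex.exp (z * Real.log b)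

/-- Strictly decreasing tuples of positive integers `n_1 > n_2 > ⋯ > n_r > 0`. -/
def DTuple (r : ℕ) : Type := {n : Fin r → ℕ // StrictAnti n ∧ ∀ i, 0 < n i}

/-- The term `e(λ_1 n_1)⋯e(λ_r n_r) / ((n_1+α_1)^{s_1}⋯(n_r+α_r)^{s_r})`. -/
noncomputable def lerchTerm {r : ℕ} (lam al : Fin r → ℝ) (s : Fin r → ℂ)
    (n : Fin r → ℕ) : ℂ :=
  (∏ i, eR (lam i * n i)) / ∏ i, rpowC ((n i : ℝ) + al i) (s i)

/-- The multiple Lerch zeta function (as a sum over strictly decreasing tuples). -/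
noncomputable def multipleLerch {r : ℕ} (lam al : Fin r → ℝ) (s : Fin r → ℂ) : ℂ :=
  ∑' n : DTuple r, lerchTerm lam al s n.1

/-- The term `(n_1+α_1)^{-s_1}⋯(n_r+α_r)^{-s_r}`. -/
noncomputable def hzTerm {r : ℕ} (al : Fin r → ℝ) (s : Fin r → ℂ) (n : Fin r → ℕ) : ℂ :=
  ∏ i, rpowC ((n i : ℝ) + al i) (-(s i))

/-- The multiple Hurwitz zeta function (as a sum over strictly decreasing tuples). -/
noncomputable def multipleHurwitz {r : ℕ} (al : Fin r → ℝ) (s : Fin r → ℂ) : ℂ :=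
  ∑' n : DTuple r, hzTerm al s n.1

/-- `U_r(m) = {s ∈ ℂ^r : Re(s_1+⋯+s_i) > i − m for 1 ≤ i ≤ r}` (0-based indexing). -/
def Ur (r : ℕ) (m : ℤ) : Set (Fin r → ℂ) :=
  {s | ∀ i : Fin r, ((i : ℕ) + 1 - m : ℝ) < (∑ j ∈ Finset.Iic i, s j).re}

/-- `(s)_k = s(s+1)⋯(s+k)/(k+1)!` for `k ≥ 0` and `(s)_k = 1` for `k < 0`. -/
noncomputable def pochZ (s : ℂ) (k : ℤ) : ℂ :=
  if 0 ≤ k then (∏ j ∈ Finset.range (k.toNat + 1), (s + j)) / (Nat.factorial (k.toNat + 1))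
  else 1

/-- The hyperplane `H_{i,k} : s_1 + ⋯ + s_i = i − k` (0-based: `i` here is paper's `i−1`). -/
def Hplane (r : ℕ) (i : Fin r) (k : ℕ) : Set (Fin r → ℂ) :=
  {s | ∑ j ∈ Finset.Iic i, s j = ((i : ℕ) + 1 : ℂ) - k}

/-- The union of the hyperplanes `H_{i,k}` for `(i,k)` satisfying the predicate `P`. -/
def polarSet {r : ℕ} (P : Fin r → ℕ → Prop) : Set (Fin r → ℂ) :=
  {s | ∃ i k, P i k ∧ s ∈ Hplane r i k}

/-- `F` has (at most) simple poles along the hyperplanes `H_{i,k}`, `(i,k) ∈ P`: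
around every point `p`, multiplying `F` by the (finitely many) linear factors
`s_1+⋯+s_i−i+k` of the members of `P` passing through `p` yields a function
that extends analytically to a neighbourhood of `p`. -/
def SimplePolesAlong {r : ℕ} (P : Fin r → ℕ → Prop) (F : (Fin r → ℂ) → ℂ) : Prop :=
  ∀ p : Fin r → ℂ, ∀ T : Finset (Fin r × ℕ),
    (∀ i k, (i, k) ∈ T ↔ (P i k ∧ p ∈ Hplane r i k)) →
    ∃ (V : Set (Fin r → ℂ)) (G : (Fin r → ℂ) → ℂ),
      IsOpen V ∧ p ∈ V ∧ AnalyticOnNhd ℂ G V ∧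
      ∀ s ∈ V, s ∉ polarSet P →
        G s = (∏ q ∈ T, ((∑ j ∈ Finset.Iic q.1, s j) - ((q.1 : ℕ) + 1 : ℂ) + (q.2 : ℂ))) * F s

/-- `μ_{i+1} = λ_1 + ⋯ + λ_{i+1} ∈ ℤ` (0-based index `i`). -/
def isIntIdx {r : ℕ} (lam : Fin r → ℝ) (i : Fin r) : Prop :=
  ∃ z : ℤ, ∑ j ∈ Finset.Iic i, lam j = (z : ℝ)

/-- The rank `j` of the index `i` among the indices with `μ ∈ ℤ`,
i.e. the number of indices `i' ≤ i` with `μ_{i'+1} ∈ ℤ`. -/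
noncomputable def rankIdx {r : ℕ} (lam : Fin r → ℝ) (i : Fin r) : ℕ :=
  Nat.card {i' : Fin r // i' ≤ i ∧ isIntIdx lam i'}

/-- The collection `S` of Theorem 2 (case `i_1 ≠ 1`): the hyperplanes `H_{i_j,k}` for
`1 ≤ j ≤ m`, `k ≥ 0` with `i_j − k ≤ j` (here `j = rankIdx lam i`). -/
def S10 {r : ℕ} (lam : Fin (r + 1) → ℝ) (i : Fin (r + 1)) (k : ℕ) : Prop :=
  isIntIdx lam i ∧ (i : ℕ) + 1 ≤ rankIdx lam i + k

/-! ### Analyticity in several variables -/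

open MeasureTheory in
/-- Cauchy integral formula on a polydisc, for continuous functions that are holomorphic in each
variable separately. -/
theorem polydisc_cauchy : ∀ (n : ℕ) (f : (Fin n → ℂ) → ℂ) (c w : Fin n → ℂ) (R : ℝ), 0 < R →
    ContinuousOn f (Metric.closedBall c R) →
    (∀ s ∈ Metric.closedBall c R, ∀ i,
      DifferentiableAt ℂ (fun z => f (Function.update s i z)) (s i)) →
    w ∈ Metric.ball c R →
    f w = ((2 * Real.pi * I : ℂ)⁻¹) ^ n *
      torusIntegral (fun ζ => (∏ i, (ζ i - w i)⁻¹) * f ζ) c (fun _ => R) := by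
  intro n
  induction n with
  | zero =>
    intro f c w R hR hf hd hw
    simp [torusIntegral_dim0, Subsingleton.elim w c]
  | succ n ih =>
    intro f c w R hR hf hd hw
    have hw' : ∀ i, w i ∈ Metric.ball (c i) R := by
      intro i
      rw [Metric.mem_ball] at hw ⊢
      exact (dist_le_pi_dist w c i).trans_lt hw
    have hmem : ∀ θ : Fin (n+1) → ℝ, torusMap c (fun _ => R) θ ∈ Metric.closedBall c R := by
      intro θ
      rw [Metric.mem_closedBall, dist_pi_le_iff hR.le]
      intro i
      simp [torusMap, dist_eq_norm, Complex.norm_exp_ofReal_mul_I, abs_of_pos hR]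
    have hne : ∀ (θ : Fin (n+1) → ℝ) i, torusMap c (fun _ => R) θ i - w i ≠ 0 := by
      intro θ i h
      have h2 := hw' i
      rw [← sub_eq_zero.mp h, Metric.mem_ball] at h2
      simp [torusMap, dist_eq_norm, Complex.norm_exp_ofReal_mul_I, abs_of_pos hR] at h2
    have hcont : Continuous (torusMap c (fun _ => R)) := by
      unfold torusMap; fun_prop
    have hTint : TorusIntegrable (fun ζ => (∏ i, (ζ i - w i)⁻¹) * f ζ) c (fun _ => R) := by
      unfold TorusIntegrable
      apply ContinuousOn.integrableOn_Icc
      apply Continuous.continuousOn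
      refine Continuous.mul ?_ (hf.comp_continuous hcont hmem)
      refine continuous_finsetProd _ fun i _ => ?_
      exact Continuous.inv₀ (((continuous_apply i).comp hcont).sub continuous_const)
        (fun θ => hne θ i)
    rw [torusIntegral_succ hTint]
    have hcons : ∀ x ∈ Metric.closedBall (c 0) R, ∀ y ∈ Metric.closedBall (c ∘ Fin.succ) R,
        (Fin.cons x y : Fin (n+1) → ℂ) ∈ Metric.closedBall c R := by
      intro x hx y hy
      rw [Metric.mem_closedBall] at *
      rw [dist_pi_le_iff hR.le] at *
      intro i
      refine Fin.cases ?_ (fun i => ?_) i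
      · simpa using hx
      · simpa using hy i
    have hwt : w ∘ Fin.succ ∈ Metric.ball (c ∘ Fin.succ) R := by
      rw [Metric.mem_ball, dist_pi_lt_iff hR]
      intro i; exact hw' _
    have hwt' := Metric.ball_subset_closedBall hwt
    have key : ∀ x ∈ Metric.closedBall (c 0) R,
        f (Fin.cons x (w ∘ Fin.succ)) = ((2 * Real.pi * I : ℂ)⁻¹) ^ n *
          torusIntegral (fun ζ => (∏ i, (ζ i - (w ∘ Fin.succ) i)⁻¹) * f (Fin.cons x ζ))
            (c ∘ Fin.succ) (fun _ => R) := by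
      intro x hx
      refine ih (fun y => f (Fin.cons x y)) (c ∘ Fin.succ) (w ∘ Fin.succ) R hR ?_ ?_ hwt
      · refine hf.comp (Continuous.continuousOn ?_) (fun y hy => hcons x hx y hy)
        exact continuous_const.finCons continuous_id
      · intro s hs i
        have := hd _ (hcons x hx s hs) i.succ
        simpa [Fin.cons_update] using this
    have h0 : w = Fin.cons (w 0) (w ∘ Fin.succ) := (Fin.cons_self_tail w).symm
    have hD : DifferentiableOn ℂ (fun x => f (Fin.cons x (w ∘ Fin.succ)))
        (Metric.closedBall (c 0) R) := by
      intro x hx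
      have := hd _ (hcons x hx _ hwt') 0
      simp only [Fin.cons_zero, Fin.update_cons_zero] at this
      exact this.differentiableWithinAt
    have hC := (hD.mono Metric.closure_ball_subset_closedBall).diffContOnCl
      |>.two_pi_i_inv_smul_circleIntegral_sub_inv_smul (hw' 0)
    rw [← h0] at hC
    rw [← hC, pow_succ', mul_assoc ((2 * Real.pi * I : ℂ)⁻¹), smul_eq_mul]
    congr 1
    rw [← circleIntegral.integral_const_mul (((2 * Real.pi * I : ℂ)⁻¹) ^ n)]
    refine circleIntegral.integral_congr hR.le ?_
    intro x hx
    simp only [smul_eq_mul]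
    rw [key x (Metric.sphere_subset_closedBall hx)]
    rw [mul_left_comm, ← torusIntegral_const_mul]
    congr 1
    have : ((fun _ => R) ∘ Fin.succ : Fin n → ℝ) = fun _ => R := rfl
    rw [this]
    congr 1
    funext ζ
    simp [Fin.prod_univ_succ, mul_assoc]
    ring

/-- The Banach algebra of bounded continuous functions of the angles of a torus. -/
abbrev TorusAlg (n : ℕ) : Type := BoundedContinuousFunction (Fin n → ℝ) ℂ

open MeasureTheory BoundedContinuousFunction in
/-- Osgood's lemma: a continuous, separately holomorphic function is jointly analytic. On a small
polydisc it is the integral over the torus of its boundary values times the Cauchy kernel, and that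
kernel is an analytic function of the evaluation point `w` with values in the Banach algebra
`TorusAlg n`, being a product of inverses of units depending affinely on `w`. -/
theorem osgood {n : ℕ} (f : (Fin n → ℂ) → ℂ) (U : Set (Fin n → ℂ)) (hU : IsOpen U)
    (hf : ContinuousOn f U)
    (hd : ∀ s ∈ U, ∀ i, DifferentiableAt ℂ (fun z => f (Function.update s i z)) (s i))
    (c : Fin n → ℂ) (hc : c ∈ U) : AnalyticAt ℂ f c := by
  obtain ⟨R, hR, hRU⟩ := Metric.nhds_basis_closedBall.mem_iff.mp (hU.mem_nhds hc)
  have hmem : ∀ θ : Fin n → ℝ, torusMap c (fun _ => R) θ ∈ Metric.closedBall c R := by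
    intro θ
    rw [Metric.mem_closedBall, dist_pi_le_iff hR.le]
    intro i
    simp [torusMap, dist_eq_norm, Complex.norm_exp_ofReal_mul_I, abs_of_pos hR]
  have hcont : Continuous (torusMap c (fun _ => R)) := by
    unfold torusMap; fun_prop
  let D : Fin n → TorusAlg n := fun i => BoundedContinuousFunction.ofNormedAddCommGroup
    (fun θ => (R : ℂ) * exp (θ i * I)) (by fun_prop) R (by
      intro θ; simp [Complex.norm_exp_ofReal_mul_I, abs_of_pos hR])
  let Di : Fin n → TorusAlg n := fun i => BoundedContinuousFunction.ofNormedAddCommGroup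
    (fun θ => (R : ℂ)⁻¹ * exp (-(θ i * I))) (by fun_prop) R⁻¹ (by
      intro θ
      have : (-(θ i * I) : ℂ) = ((-θ i : ℝ) : ℂ) * I := by push_cast; ring
      rw [this, norm_mul, Complex.norm_exp_ofReal_mul_I]; simp [abs_of_pos hR])
  have hDDi : ∀ i, D i * Di i = 1 := by
    intro i
    ext θ
    have hR' : (R : ℂ) ≠ 0 := by exact_mod_cast hR.ne'
    have h1 : (D i * Di i) θ = ((R : ℂ) * exp (θ i * I)) * ((R : ℂ)⁻¹ * exp (-(θ i * I))) := rfl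
    have h2 : (1 : TorusAlg n) θ = 1 := rfl
    rw [h1, h2, Complex.exp_neg]
    field_simp [Complex.exp_ne_zero]
  let u : Fin n → (TorusAlg n)ˣ := fun i => ⟨D i, Di i, hDDi i, by rw [mul_comm]; exact hDDi i⟩
  let a : Fin n → (Fin n → ℂ) → TorusAlg n := fun i w => D i - algebraMap ℂ (TorusAlg n) (w i - c i)
  have ha0 : ∀ i, a i c = (u i : TorusAlg n) := by intro i; simp [a, u]
  have haan : ∀ i, AnalyticAt ℂ (a i) c := by
    intro i
    refine analyticAt_const.sub ?_
    have h1 : AnalyticAt ℂ (fun w : Fin n → ℂ => w i - c i) c :=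
      ((ContinuousLinearMap.proj (R := ℂ) (φ := fun _ : Fin n => ℂ) i).analyticAt c).sub
        analyticAt_const
    exact ((Algebra.linearMap ℂ (TorusAlg n)).toContinuousLinearMap.analyticAt _).comp h1
  have hinv : ∀ i, AnalyticAt ℂ (fun w => Ring.inverse (a i w)) c := by
    intro i
    refine AnalyticAt.comp (g := Ring.inverse) ?_ (haan i)
    rw [ha0]; exact analyticAt_inverse _
  -- The integrand must be bounded to define an element of `TorusAlg n`; compactness gives this.
  obtain ⟨M, hM⟩ := (isCompact_closedBall c R).exists_bound_of_continuousOn (hf.mono hRU)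
  let fT : TorusAlg n := BoundedContinuousFunction.ofNormedAddCommGroup
    (fun θ => (∏ i, (R : ℂ) * exp (θ i * I) * I) * f (torusMap c (fun _ => R) θ))
    (by
      refine Continuous.mul (by fun_prop) ?_
      exact (hf.mono hRU).comp_continuous hcont hmem)
    (R ^ n * M) (by
      intro θ
      rw [norm_mul]
      refine mul_le_mul ?_ (hM _ (hmem θ)) (norm_nonneg _) (by positivity)
      simp [Complex.norm_exp_ofReal_mul_I, abs_of_pos hR])
  let μ : Measure (Fin n → ℝ) := volume.restrict (Set.Icc 0 fun _ => 2 * Real.pi)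
  have : IsFiniteMeasure μ := ⟨by
    simp only [μ, Measure.restrict_apply MeasurableSet.univ, Set.univ_inter]
    exact measure_Icc_lt_top⟩
  have hIg : ∀ a : TorusAlg n, Integrable (fun θ => a θ) μ := fun a => a.integrable μ
  let Λ : TorusAlg n →L[ℂ] ℂ := LinearMap.mkContinuous
    { toFun := fun a => ∫ θ, a θ ∂μ
      map_add' := fun a b => by
        exact integral_add (hIg a) (hIg b)
      map_smul' := fun r a => by
        exact integral_smul r (fun θ => a θ) } (μ.real Set.univ) (by
      intro a
      simp only [LinearMap.coe_mk, AddHom.coe_mk]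
      rw [mul_comm]
      exact norm_integral_le_of_norm_le_const (Filter.Eventually.of_forall a.norm_coe_le_norm))
  have hG : AnalyticAt ℂ (fun w => ((2 * Real.pi * I : ℂ)⁻¹) ^ n *
      Λ (fT * ∏ i, Ring.inverse (a i w))) c := by
    refine analyticAt_const.mul ?_
    refine (Λ.analyticAt _).comp ?_
    refine analyticAt_const.mul ?_
    exact Finset.analyticAt_fun_prod _ (fun i _ => hinv i)
  refine hG.congr ?_
  have hunit : ∀ᶠ w in nhds c, ∀ i, IsUnit (a i w) := by
    rw [Filter.eventually_all]
    intro i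
    have := (haan i).continuousAt
    refine this.eventually_mem (Units.isOpen.mem_nhds ?_)
    rw [ha0]; exact (u i).isUnit
  filter_upwards [hunit, Metric.ball_mem_nhds c hR] with w hw hwb
  rw [polydisc_cauchy n f c w R hR (hf.mono hRU) (fun s hs => hd s (hRU hs)) hwb]
  congr 1
  simp only [Λ, LinearMap.mkContinuous_apply, LinearMap.coe_mk, AddHom.coe_mk, torusIntegral, μ]
  refine integral_congr_ae (Filter.Eventually.of_forall fun θ => ?_)
  have hev : ∀ i, (Ring.inverse (a i w)) θ = (torusMap c (fun _ => R) θ i - w i)⁻¹ := by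
    intro i
    have h1 := congrArg (fun b : TorusAlg n => b θ) (Ring.mul_inverse_cancel _ (hw i))
    have h2 : a i w θ = torusMap c (fun _ => R) θ i - w i := by
      have h3 : a i w θ = (R : ℂ) * exp (θ i * I) - (w i - c i) := rfl
      rw [h3, torusMap]
      ring
    simp only [BoundedContinuousFunction.mul_apply, h2, BoundedContinuousFunction.coe_one,
      Pi.one_apply] at h1
    exact eq_inv_of_mul_eq_one_right h1
  have hprod : (∏ i, Ring.inverse (a i w)) θ = ∏ i, (torusMap c (fun _ => R) θ i - w i)⁻¹ := by
    rw [BoundedContinuousFunction.coe_prod, Finset.prod_apply]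
    exact Finset.prod_congr rfl fun i _ => hev i
  have h4 : (fT * ∏ i, Ring.inverse (a i w)) θ =
      ((∏ i, (R : ℂ) * exp (θ i * I) * I) * f (torusMap c (fun _ => R) θ)) *
        (∏ i, Ring.inverse (a i w)) θ := rfl
  simp only [h4, hprod, smul_eq_mul]
  ring

open scoped Topology
open Filter

/-- A locally normally convergent series of entire functions of several variables is analytic. -/
theorem tsum_analyticAt {N : ℕ} (f : ℕ → (Fin N → ℂ) → ℂ) (hf : ∀ m, Differentiable ℂ (f m))
    (u : ℕ → ℝ) (hu : Summable u) (s₀ : Fin N → ℂ)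
    (hb : ∀ᶠ s in 𝓝 s₀, ∀ m, ‖f m s‖ ≤ u m) :
    AnalyticAt ℂ (fun s => ∑' m, f m s) s₀ := by
  obtain ⟨U, hUb, hUo, hU0⟩ := eventually_nhds_iff.mp hb
  refine osgood _ U hUo ?_ ?_ s₀ hU0
  · exact continuousOn_tsum (fun m => (hf m).continuous.continuousOn) hu
      (fun m s hs => hUb s hs m)
  · intro s hs i
    have hcont : Continuous (fun z : ℂ => Function.update s i z) :=
      continuous_const.update i continuous_id
    have hop : IsOpen ((fun z : ℂ => Function.update s i z) ⁻¹' U) := hUo.preimage hcont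
    have hin : s i ∈ (fun z : ℂ => Function.update s i z) ⁻¹' U := by simpa using hs
    have hdiff : ∀ m, Differentiable ℂ (fun z : ℂ => f m (Function.update s i z)) := by
      intro m
      refine (hf m).comp ?_
      rw [differentiable_pi]
      intro j
      by_cases hj : j = i
      · subst hj; simp
      · simp [Function.update_of_ne hj]
    have := differentiableOn_tsum_of_summable_norm (F := fun m z => f m (Function.update s i z))
      hu (fun m => (hdiff m).differentiableOn) hop (fun m z hz => hUb _ hz m)
    exact this.differentiableAt (hop.mem_nhds hin)

/-! ### Powers and locally uniform bounds -/

/-- The real weight `(n+1)^{-σ}`. The shift by one makes it positive and antitone in `n` from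
`n = 0` on. -/
noncomputable def wt (n : ℕ) (σ : ℝ) : ℝ := Real.exp (-σ * Real.log ((n : ℝ) + 1))

/-- The complex power `(n+1)^{-z}`. -/
noncomputable def pw (n : ℕ) (z : ℂ) : ℂ := rpowC ((n : ℝ) + 1) (-z)

theorem norm_rpowC (b : ℝ) (z : ℂ) : ‖rpowC b z‖ = Real.exp (z.re * Real.log b) := by
  rw [rpowC, Complex.norm_exp, Complex.re_mul_ofReal]

theorem rpowC_add (b : ℝ) (z z' : ℂ) : rpowC b (z + z') = rpowC b z * rpowC b z' := by
  rw [rpowC, rpowC, rpowC, ← Complex.exp_add, add_mul]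

theorem norm_pw (n : ℕ) (z : ℂ) : ‖pw n z‖ = wt n z.re := by
  rw [pw, norm_rpowC, wt, Complex.neg_re]

theorem pw_add (n : ℕ) (z z' : ℂ) : pw n (z + z') = pw n z * pw n z' := by
  rw [pw, pw, pw, ← rpowC_add]; congr 1; ring

theorem pw_zero (n : ℕ) : pw n 0 = 1 := by simp [pw, rpowC]

theorem wt_pos (n : ℕ) (σ : ℝ) : 0 < wt n σ := Real.exp_pos _

theorem wt_add (n : ℕ) (a b : ℝ) : wt n (a + b) = wt n a * wt n b := by
  rw [wt, wt, wt, ← Real.exp_add]; congr 1; ring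

theorem log_nonneg' (n : ℕ) : 0 ≤ Real.log ((n : ℝ) + 1) :=
  Real.log_nonneg (by have : (0 : ℝ) ≤ n := n.cast_nonneg
                      linarith)

theorem wt_anti (n : ℕ) {a b : ℝ} (h : a ≤ b) : wt n b ≤ wt n a := by
  unfold wt
  have := log_nonneg' n
  apply Real.exp_le_exp.mpr
  nlinarith

theorem wt_anti_left {m n : ℕ} (h : n ≤ m) {σ : ℝ} (hσ : 0 ≤ σ) : wt m σ ≤ wt n σ := by
  unfold wt
  have h2 : Real.log ((n : ℝ) + 1) ≤ Real.log ((m : ℝ) + 1) := by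
    apply Real.log_le_log (by positivity)
    have : (n : ℝ) ≤ m := by exact_mod_cast h
    linarith
  apply Real.exp_le_exp.mpr
  nlinarith

theorem wt_eq_rpow (n : ℕ) (σ : ℝ) : wt n σ = ((n : ℝ) + 1) ^ (-σ) := by
  rw [wt, Real.rpow_def_of_pos (by positivity), mul_comm]

theorem wt_one (n : ℕ) : wt n 1 = ((n : ℝ) + 1)⁻¹ := by
  rw [wt_eq_rpow, Real.rpow_neg_one]

theorem summable_wt {σ : ℝ} (h : 1 < σ) : Summable (fun n => wt n σ) := by
  have h1 : Summable (fun n : ℕ => ((n : ℝ)) ^ (-σ)) := by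
    rw [Real.summable_nat_rpow]; linarith
  have := (summable_nat_add_iff 1).mpr h1
  refine this.congr fun n => ?_
  rw [wt_eq_rpow]; push_cast; rfl

theorem tendsto_wt {σ : ℝ} (h : 0 < σ) : Tendsto (fun n => wt n σ) atTop (𝓝 0) := by
  have h1 := (tendsto_rpow_neg_atTop h).comp
    (tendsto_natCast_atTop_atTop.comp (tendsto_add_atTop_nat 1) :
      Tendsto (fun n : ℕ => ((n + 1 : ℕ) : ℝ)) atTop atTop)
  refine h1.congr fun n => ?_
  rw [wt_eq_rpow]; simp

theorem pw_differentiable (n : ℕ) : Differentiable ℂ (pw n) := by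
  unfold pw rpowC; fun_prop

@[fun_prop]
theorem Differentiable.pw' {N : ℕ} {ℓ : (Fin N → ℂ) → ℂ} (h : Differentiable ℂ ℓ) (n : ℕ) :
    Differentiable ℂ (fun s => pw n (ℓ s)) := (pw_differentiable n).comp h

/-- Locally uniform bound `g n s = O((n+1)^{-Re ℓ(s)})`. Only `n ≥ 1` is constrained, because the
powers `(n+α)^{-z}` being summed degenerate at `n = 0` when `α = 0`. -/
def BO {N : ℕ} (ℓ : (Fin N → ℂ) → ℂ) (g : ℕ → (Fin N → ℂ) → ℂ) : Prop :=
  ∀ s₀, ∃ C : ℝ, ∀ᶠ s in 𝓝 s₀, ∀ n, 1 ≤ n → ‖g n s‖ ≤ C * wt n (ℓ s).re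

section BOlemmas
variable {N : ℕ} {ℓ ℓ' : (Fin N → ℂ) → ℂ} {g g' : ℕ → (Fin N → ℂ) → ℂ}

theorem BO.exists_nonneg (h : BO ℓ g) (s₀) :
    ∃ C : ℝ, 0 ≤ C ∧ ∀ᶠ s in 𝓝 s₀, ∀ n, 1 ≤ n → ‖g n s‖ ≤ C * wt n (ℓ s).re := by
  obtain ⟨C, hC⟩ := h s₀
  refine ⟨|C|, abs_nonneg _, hC.mono fun s hs n hn => (hs n hn).trans ?_⟩
  exact mul_le_mul_of_nonneg_right (le_abs_self C) (wt_pos _ _).le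

theorem BO.mono (hle : ∀ s, (ℓ s).re ≤ (ℓ' s).re) (h : BO ℓ' g) : BO ℓ g := by
  intro s₀
  obtain ⟨C, hC0, hC⟩ := h.exists_nonneg s₀
  exact ⟨C, hC.mono fun s hs n hn => (hs n hn).trans
    (mul_le_mul_of_nonneg_left (wt_anti n (hle s)) hC0)⟩

theorem BO.congr (hl : ∀ s, ℓ s = ℓ' s) (hg : ∀ n, 1 ≤ n → ∀ s, g n s = g' n s)
    (h : BO ℓ g) : BO ℓ' g' := by
  intro s₀
  obtain ⟨C, hC⟩ := h s₀
  refine ⟨C, hC.mono fun s hs n hn => ?_⟩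
  rw [← hg n hn, ← hl]; exact hs n hn

theorem BO.add (h : BO ℓ g) (h' : BO ℓ g') : BO ℓ (fun n s => g n s + g' n s) := by
  intro s₀
  obtain ⟨C, hC⟩ := h s₀
  obtain ⟨C', hC'⟩ := h' s₀
  refine ⟨C + C', ?_⟩
  filter_upwards [hC, hC'] with s h1 h2 n hn
  rw [add_mul]
  exact (norm_add_le _ _).trans (add_le_add (h1 n hn) (h2 n hn))

theorem BO.mul (h : BO ℓ g) (h' : BO ℓ' g') :
    BO (fun s => ℓ s + ℓ' s) (fun n s => g n s * g' n s) := by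
  intro s₀
  obtain ⟨C, hC0, hC⟩ := h.exists_nonneg s₀
  obtain ⟨C', hC'⟩ := h' s₀
  refine ⟨C * C', ?_⟩
  filter_upwards [hC, hC'] with s h1 h2 n hn
  rw [norm_mul, Complex.add_re, wt_add, mul_mul_mul_comm]
  exact mul_le_mul (h1 n hn) (h2 n hn) (norm_nonneg _) (mul_nonneg hC0 (wt_pos _ _).le)

theorem BO.const {c : (Fin N → ℂ) → ℂ} (hc : Continuous c) : BO (fun _ => 0) (fun _ s => c s) := by
  intro s₀
  refine ⟨‖c s₀‖ + 1, ?_⟩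
  have := hc.norm.continuousAt.eventually_lt_const (lt_add_one ‖c s₀‖)
  filter_upwards [this] with s hs n hn
  simpa [wt] using hs.le

theorem BO.smul {c : (Fin N → ℂ) → ℂ} (hc : Continuous c) (h : BO ℓ g) :
    BO ℓ (fun n s => c s * g n s) :=
  ((BO.const hc).mul h).congr (by simp) (by simp)

theorem BO.main {c : (Fin N → ℂ) → ℂ} (hc : Continuous c) {w : ℂ} (hw : ‖w‖ = 1) :
    BO ℓ (fun n s => c s * w ^ n * pw n (ℓ s)) := by
  have h : BO ℓ (fun n s => w ^ n * pw n (ℓ s)) := by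
    intro s₀
    refine ⟨1, Eventually.of_forall fun s n hn => ?_⟩
    simp [norm_pw, hw]
  exact (h.smul hc).congr (fun _ => rfl) (fun n _ s => by ring)

end BOlemmas

/-! ### Symbols -/

/-- Symbols of order `ℓ` and oscillation `w`, with `K` terms of asymptotic expansion:
`g n s = wⁿ ∑_{k<K} c_k(s) (n+1)^{-ℓ(s)-k} + O((n+1)^{-Re ℓ(s)-K})` locally uniformly in `s`, with
entire coefficients `c_k`. -/
def Sy {N : ℕ} (w : ℂ) : ℕ → ((Fin N → ℂ) → ℂ) → (ℕ → (Fin N → ℂ) → ℂ) → Prop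
  | 0, ℓ, g => BO ℓ g
  | K + 1, ℓ, g => ∃ c : (Fin N → ℂ) → ℂ, Differentiable ℂ c ∧
      Sy w K (fun s => ℓ s + 1) (fun n s => g n s - c s * w ^ n * pw n (ℓ s))

section Sylemmas
variable {N : ℕ} {w w' : ℂ}

theorem Sy.congr : ∀ {K : ℕ} {ℓ ℓ' : (Fin N → ℂ) → ℂ} {g g' : ℕ → (Fin N → ℂ) → ℂ},
    (∀ s, ℓ s = ℓ' s) → (∀ n, 1 ≤ n → ∀ s, g n s = g' n s) → Sy w K ℓ g → Sy w K ℓ' g'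
  | 0, _, _, _, _, hl, hg, h => BO.congr hl hg h
  | K + 1, _, _, _, _, hl, hg, ⟨c, hc, h⟩ =>
    ⟨c, hc, h.congr (fun s => by rw [hl]) (fun n hn s => by rw [hl, hg n hn])⟩

theorem Sy.add : ∀ {K : ℕ} {ℓ : (Fin N → ℂ) → ℂ} {g g' : ℕ → (Fin N → ℂ) → ℂ},
    Sy w K ℓ g → Sy w K ℓ g' → Sy w K ℓ (fun n s => g n s + g' n s)
  | 0, _, _, _, h, h' => BO.add h h'
  | K + 1, _, _, _, ⟨c, hc, h⟩, ⟨c', hc', h'⟩ =>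
    ⟨fun s => c s + c' s, hc.add hc', (h.add h').congr (fun _ => rfl) (fun n _ s => by ring)⟩

theorem Sy.smul : ∀ {K : ℕ} {ℓ : (Fin N → ℂ) → ℂ} {g : ℕ → (Fin N → ℂ) → ℂ} {f : (Fin N → ℂ) → ℂ},
    Differentiable ℂ f → Sy w K ℓ g → Sy w K ℓ (fun n s => f s * g n s)
  | 0, _, _, _, hf, h => BO.smul hf.continuous h
  | K + 1, _, _, f, hf, ⟨c, hc, h⟩ =>
    ⟨fun s => f s * c s, hf.mul hc, (h.smul hf).congr (fun _ => rfl) (fun n _ s => by ring)⟩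

theorem Sy.zero : ∀ {K : ℕ} {ℓ : (Fin N → ℂ) → ℂ}, Sy w K ℓ (fun _ _ => 0)
  | 0, _ => fun _ => ⟨0, Eventually.of_forall fun s n _ => by simp⟩
  | K + 1, _ => ⟨fun _ => 0, differentiable_const _,
      Sy.zero.congr (fun _ => rfl) (fun n _ s => by simp)⟩

theorem Sy.main (hw : ‖w‖ = 1) {K : ℕ} {ℓ c : (Fin N → ℂ) → ℂ} (hc : Differentiable ℂ c) :
    Sy w K ℓ (fun n s => c s * w ^ n * pw n (ℓ s)) := by
  cases K with
  | zero => exact BO.main hc.continuous hw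
  | succ K => exact ⟨c, hc, Sy.zero.congr (fun _ => rfl) (fun n _ s => by simp)⟩

theorem Sy.pred (hw : ‖w‖ = 1) : ∀ {K : ℕ} {ℓ : (Fin N → ℂ) → ℂ} {g : ℕ → (Fin N → ℂ) → ℂ},
    Sy w (K + 1) ℓ g → Sy w K ℓ g
  | 0, ℓ, g, ⟨c, hc, h⟩ =>
    BO.congr (fun _ => rfl) (fun n _ s => by ring)
      ((BO.mono (ℓ := ℓ) (by simp) h).add (BO.main hc.continuous hw))
  | K + 1, _, _, ⟨c, hc, h⟩ => ⟨c, hc, h.pred hw⟩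

theorem Sy.toBO (hw : ‖w‖ = 1) : ∀ {K : ℕ} {ℓ : (Fin N → ℂ) → ℂ} {g : ℕ → (Fin N → ℂ) → ℂ},
    Sy w K ℓ g → BO ℓ g
  | 0, _, _, h => h
  | _ + 1, _, _, h => Sy.toBO hw (h.pred hw)

theorem Sy.mul (hw : ‖w‖ = 1) (hw' : ‖w'‖ = 1) :
    ∀ {K : ℕ} {ℓ ℓ' : (Fin N → ℂ) → ℂ} {g g' : ℕ → (Fin N → ℂ) → ℂ},
    Sy w K ℓ g → Sy w' K ℓ' g' → Sy (w * w') K (fun s => ℓ s + ℓ' s) (fun n s => g n s * g' n s)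
  | 0, _, _, _, _, h, h' => BO.mul h h'
  | K + 1, ℓ, ℓ', g, g', h, h' => by
    obtain ⟨c, hc, h1⟩ := h
    have h2 := h'.pred hw'
    obtain ⟨c', hc', h1'⟩ := h'
    refine ⟨fun s => c s * c' s, hc.mul hc', ?_⟩
    have e1 := h1.mul hw hw' h2
    have e2 := (Sy.main (K := K) (ℓ := ℓ) hw hc).mul hw hw' h1'
    have e1' := e1.congr (ℓ' := fun s => ℓ s + ℓ' s + 1) (fun s => by ring) (fun n _ s => rfl)
    have e2' := e2.congr (ℓ' := fun s => ℓ s + ℓ' s + 1) (fun s => by ring) (fun n _ s => rfl)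
    refine (e1'.add e2').congr (fun _ => rfl) (fun n _ s => ?_)
    rw [pw_add, mul_pow]
    ring

/-- A finite expansion with a remainder estimate is a symbol. -/
theorem Sy.of_sum : ∀ {K : ℕ} {ℓ : (Fin N → ℂ) → ℂ} {g : ℕ → (Fin N → ℂ) → ℂ}
    {c : ℕ → (Fin N → ℂ) → ℂ}, (∀ k, Differentiable ℂ (c k)) →
    BO (fun s => ℓ s + K)
      (fun n s => g n s - ∑ k ∈ Finset.range K, c k s * w ^ n * pw n (ℓ s + k)) →
    Sy w K ℓ g
  | 0, _, _, _, _, h => BO.congr (by simp) (by simp) h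
  | K + 1, _, _, c, hc, h =>
    ⟨c 0, hc 0, Sy.of_sum (c := fun k => c (k + 1)) (fun k => hc (k + 1))
      (h.congr (fun s => by push_cast; ring) (fun n _ s => by
        rw [Finset.sum_range_succ']
        simp only [Nat.cast_add, Nat.cast_one, Nat.cast_zero, add_zero]
        simp only [add_assoc, add_comm (1 : ℂ)]
        ring))⟩

/-- The leading coefficient of a symbol is unique, hence independent of the number of terms. -/
theorem Sy.peel (hw : ‖w‖ = 1) {ℓ : (Fin N → ℂ) → ℂ} {g : ℕ → (Fin N → ℂ) → ℂ}
    (h : ∀ K, Sy w K ℓ g) : ∃ c, Differentiable ℂ c ∧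
      ∀ K, Sy w K (fun s => ℓ s + 1) (fun n s => g n s - c s * w ^ n * pw n (ℓ s)) := by
  obtain ⟨c, hc, h1⟩ := h 1
  refine ⟨c, hc, fun K => ?_⟩
  obtain ⟨c', hc', h2⟩ := h (K + 1)
  have h3 := h2.toBO hw
  have : c = c' := by
    funext s
    obtain ⟨C, hC⟩ := h1 s
    obtain ⟨C', hC'⟩ := h3 s
    have a1 := hC.self_of_nhds
    have a2 := hC'.self_of_nhds
    by_contra hne
    have hlim : Tendsto (fun n => (C + C') * wt n 1) atTop (𝓝 0) := by
      simpa using (tendsto_wt one_pos).const_mul (C + C')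
    have hpos : 0 < ‖c s - c' s‖ := norm_pos_iff.mpr (sub_ne_zero.mpr hne)
    obtain ⟨n, hn1, hn2⟩ := ((hlim.eventually_lt_const hpos).and (eventually_ge_atTop 1)).exists
    have b1 := a1 n hn2
    have b2 := a2 n hn2
    have b3 : ‖(c s - c' s) * w ^ n * pw n (ℓ s)‖ ≤ (C + C') * wt n (ℓ s + 1).re := by
      have e : (c s - c' s) * w ^ n * pw n (ℓ s) =
          (g n s - c' s * w ^ n * pw n (ℓ s)) - (g n s - c s * w ^ n * pw n (ℓ s)) := by ring
      rw [e, add_mul, add_comm (C * _)]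
      exact (norm_sub_le _ _).trans (add_le_add b2 b1)
    rw [norm_mul, norm_mul, norm_pow, hw, one_pow, mul_one, norm_pw, Complex.add_re, Complex.one_re,
      wt_add] at b3
    have := wt_pos n (ℓ s).re
    nlinarith
  rw [this]; exact h2

end Sylemmas

/-! ### Taylor expansion of shifted powers -/

/-- The coefficients `z(z+1)⋯(z+k-1)/k!` of the binomial series of `(1-t)^{-z}`. -/
noncomputable def tc (z : ℂ) (k : ℕ) : ℂ := (∏ j ∈ Finset.range k, (z + j)) / (k.factorial : ℂ)

theorem tc_succ (z : ℂ) (k : ℕ) : tc z (k + 1) * ((k : ℂ) + 1) = z * tc (z + 1) k := by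
  have h : (k.factorial : ℂ) ≠ 0 := by exact_mod_cast k.factorial_ne_zero
  have h' : (k : ℂ) + 1 ≠ 0 := by exact_mod_cast k.succ_ne_zero
  unfold tc
  rw [Finset.prod_range_succ', Nat.factorial_succ]
  have e : ∀ j : ℕ, z + ((j + 1 : ℕ) : ℂ) = z + 1 + j := fun j => by push_cast; ring
  simp only [e]
  push_cast
  field_simp
  ring

theorem tc_zero (z : ℂ) : tc z 0 = 1 := by simp [tc]

theorem tc_differentiable (k : ℕ) : Differentiable ℂ (fun z => tc z k) := by
  unfold tc; fun_prop

theorem rpowC_neg_one {b : ℝ} (hb : 0 < b) : rpowC b (-1) = (b : ℂ)⁻¹ := by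
  rw [rpowC, neg_one_mul, Complex.exp_neg, ← Complex.ofReal_exp, Real.exp_log hb]

theorem hasDerivAt_rpowC (z : ℂ) {b t : ℝ} (h : 0 < b - t) :
    HasDerivAt (fun t : ℝ => rpowC (b - t) (-z)) (z * rpowC (b - t) (-(z + 1))) t := by
  have h1 : HasDerivAt (fun t : ℝ => Real.log (b - t)) (-1 / (b - t)) t :=
    ((hasDerivAt_id t).const_sub b).log h.ne'
  have h2 := (h1.ofReal_comp.const_mul (-z)).cexp
  unfold rpowC at *
  convert h2 using 1
  have : rpowC (b - t) (-1) = _ := rpowC_neg_one h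
  rw [neg_add, ← rpowC, rpowC_add, this, rpowC]
  push_cast
  ring

/-- The case of the Taylor expansion with no terms: `n+1-t` and `n+1` agree up to a factor `2`. -/
theorem taylor_base (z₀ : ℂ) : ∃ C : ℝ, ∀ᶠ z in 𝓝 z₀, ∀ n : ℕ, 1 ≤ n → ∀ t ∈ Set.Icc (0 : ℝ) 1,
    ‖rpowC ((n : ℝ) + 1 - t) (-z)‖ ≤ C * wt n z.re := by
  refine ⟨Real.exp ((‖z₀‖ + 1) * Real.log 2), ?_⟩
  have := continuous_norm.continuousAt.eventually_lt_const (lt_add_one ‖z₀‖)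
  filter_upwards [this] with z hz n hn t ht
  have hn' : (1 : ℝ) ≤ n := by exact_mod_cast hn
  rw [norm_rpowC, wt, ← Real.exp_add, Complex.neg_re]
  apply Real.exp_le_exp.mpr
  have hp : 0 < (n : ℝ) + 1 - t := by linarith [ht.2]
  have l1 : Real.log ((n : ℝ) + 1 - t) ≤ Real.log ((n : ℝ) + 1) :=
    Real.log_le_log hp (by linarith [ht.1])
  have l2 : Real.log ((n : ℝ) + 1) ≤ Real.log 2 + Real.log ((n : ℝ) + 1 - t) := by
    rw [← Real.log_mul two_ne_zero hp.ne']
    exact Real.log_le_log (by linarith) (by linarith [ht.2])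
  have hr : z.re ≤ ‖z₀‖ + 1 := (Complex.re_le_norm z).trans hz.le
  have hr' : 0 ≤ ‖z₀‖ + 1 := by positivity
  have hl2 : 0 ≤ Real.log 2 := Real.log_nonneg (by norm_num)
  rcases le_or_gt 0 z.re with h | h <;> nlinarith

/-- Taylor expansion of `(n+1-t)^{-z}` in `t`, with a remainder uniform in `n`, in `t ∈ [0,1]` and
locally in `z`: one integration in `t` takes the remainder at `z + 1` to the next one at `z`. -/
theorem taylor (K : ℕ) : ∀ z₀ : ℂ, ∃ C : ℝ, ∀ᶠ z in 𝓝 z₀, ∀ n : ℕ, 1 ≤ n →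
    ∀ t ∈ Set.Icc (0 : ℝ) 1,
    ‖rpowC ((n : ℝ) + 1 - t) (-z) - ∑ k ∈ Finset.range K, tc z k * (t : ℂ) ^ k * pw n (z + k)‖ ≤
      C * wt n (z.re + K) := by
  induction K with
  | zero => simpa using taylor_base
  | succ K ih =>
    intro z₀
    obtain ⟨C, hC⟩ := ih (z₀ + 1)
    have hC' := ((by fun_prop : Continuous fun z : ℂ => z + 1).tendsto z₀).eventually hC
    have hz' := continuous_norm.continuousAt.eventually_lt_const (lt_add_one ‖z₀‖)
    refine ⟨(‖z₀‖ + 1) * |C|, ?_⟩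
    filter_upwards [hC', hz'] with z hz hzn n hn t ht
    have hn' : (1 : ℝ) ≤ n := by exact_mod_cast hn
    set f : ℝ → ℂ := fun t => rpowC ((n : ℝ) + 1 - t) (-z) -
      ∑ k ∈ Finset.range (K + 1), tc z k * (t : ℂ) ^ k * pw n (z + k) with hf
    set f' : ℝ → ℂ := fun t => z * (rpowC ((n : ℝ) + 1 - t) (-(z + 1)) -
      ∑ k ∈ Finset.range K, tc (z + 1) k * (t : ℂ) ^ k * pw n (z + 1 + k)) with hf'
    have hd : ∀ x ∈ Set.Icc (0 : ℝ) 1, HasDerivWithinAt f (f' x) (Set.Icc (0 : ℝ) 1) x := by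
      intro x hx
      have hp : 0 < (n : ℝ) + 1 - x := by linarith [hx.2]
      have d2 : HasDerivAt (fun t : ℝ =>
          ∑ k ∈ Finset.range (K + 1), tc z k * (t : ℂ) ^ k * pw n (z + k))
          (∑ k ∈ Finset.range (K + 1), tc z k * ((k : ℂ) * (x : ℂ) ^ (k - 1)) * pw n (z + k))
          x := by
        refine HasDerivAt.fun_sum fun k _ => ?_
        have := ((hasDerivAt_id x).ofReal_comp.pow k)
        simpa using (this.const_mul (tc z k)).mul_const (pw n (z + k))
      have d3 := ((hasDerivAt_rpowC z hp).sub d2).hasDerivWithinAt (s := Set.Icc (0 : ℝ) 1)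
      refine HasDerivWithinAt.congr_deriv (f := f) d3 ?_
      rw [hf', Finset.sum_range_succ']
      simp only [mul_sub, Finset.mul_sum, Nat.cast_zero, zero_mul, mul_zero, add_zero]
      congr 1
      refine Finset.sum_congr rfl fun k _ => ?_
      have e := tc_succ z k
      rw [Nat.add_sub_cancel]
      have e2 : z + ((k + 1 : ℕ) : ℂ) = z + 1 + k := by push_cast; ring
      rw [e2]
      push_cast
      linear_combination ((x : ℂ) ^ k * pw n (z + 1 + k)) * e
    have hb : ∀ x ∈ Set.Ico (0 : ℝ) 1, ‖f' x‖ ≤ (‖z₀‖ + 1) * |C| * wt n (z.re + (K + 1 : ℕ)) := by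
      intro x hx
      have h1 := hz n hn x ⟨hx.1, hx.2.le⟩
      have e3 : (z + 1).re + (K : ℝ) = z.re + (K + 1 : ℕ) := by
        push_cast [Complex.add_re, Complex.one_re]; ring
      rw [e3] at h1
      rw [hf', norm_mul, mul_assoc]
      refine mul_le_mul hzn.le (h1.trans ?_) (norm_nonneg _) (by positivity)
      exact mul_le_mul_of_nonneg_right (le_abs_self C) (wt_pos _ _).le
    have h0 : f 0 = 0 := by
      simp [hf, Finset.sum_range_succ', tc_zero, pw]
    have := norm_image_sub_le_of_norm_deriv_le_segment' hd hb t ht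
    rw [h0, sub_zero, sub_zero] at this
    refine this.trans ?_
    have hnn : 0 ≤ (‖z₀‖ + 1) * |C| * wt n (z.re + (K + 1 : ℕ)) :=
      mul_nonneg (by positivity) (wt_pos _ _).le
    exact mul_le_of_le_one_right hnn ht.2

/-- Shifted powers `(n+1-t)^{-x}` and their Taylor remainders are symbols. -/
theorem Sy.shift_tail {N : ℕ} {x : (Fin N → ℂ) → ℂ} (hx : Differentiable ℂ x) {t : ℝ}
    (ht : t ∈ Set.Icc (0 : ℝ) 1) (J K : ℕ) :
    Sy 1 K (fun s => x s + J) (fun n s => rpowC ((n : ℝ) + 1 - t) (-(x s)) -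
      ∑ k ∈ Finset.range J, tc (x s) k * (t : ℂ) ^ k * pw n (x s + k)) := by
  refine Sy.of_sum (c := fun k s => tc (x s) (J + k) * (t : ℂ) ^ (J + k)) (fun k => ?_) ?_
  · exact ((tc_differentiable _).comp hx).mul_const _
  · intro s₀
    obtain ⟨C, hC⟩ := taylor (J + K) (x s₀)
    refine ⟨C, (hx.continuous.continuousAt.eventually hC).mono fun s hs n hn => ?_⟩
    have h := hs n hn t ht
    rw [Finset.sum_range_add] at h
    convert h using 2
    · dsimp only
      rw [sub_sub]
      congr 2
      refine Finset.sum_congr rfl fun k _ => ?_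
      simp [add_assoc]
    · simp [add_assoc]

theorem Sy.shift {N : ℕ} {x : (Fin N → ℂ) → ℂ} (hx : Differentiable ℂ x) {t : ℝ}
    (ht : t ∈ Set.Icc (0 : ℝ) 1) (K : ℕ) :
    Sy 1 K x (fun n s => rpowC ((n : ℝ) + 1 - t) (-(x s))) :=
  (Sy.shift_tail hx ht 0 K).congr (by simp) (by simp)

/-! ### Summation of symbols -/

theorem BO.local {N : ℕ} {ℓ : (Fin N → ℂ) → ℂ} {g : ℕ → (Fin N → ℂ) → ℂ} (h : BO ℓ g)
    (hℓ : Continuous ℓ) {s₀ : Fin N → ℂ} {σ : ℝ} (hσ : σ < (ℓ s₀).re) :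
    ∃ C : ℝ, 0 ≤ C ∧ ∀ᶠ s in 𝓝 s₀, ∀ n, 1 ≤ n → ‖g n s‖ ≤ C * wt n σ := by
  obtain ⟨C, hC0, hC⟩ := h.exists_nonneg s₀
  refine ⟨C, hC0, ?_⟩
  filter_upwards [hC, (Complex.continuous_re.comp hℓ).continuousAt.eventually_const_lt hσ]
    with s hs hs' n hn
  exact (hs n hn).trans (mul_le_mul_of_nonneg_left (wt_anti n (le_of_lt hs')) hC0)

theorem BO.sum {N : ℕ} {ℓ : (Fin N → ℂ) → ℂ} {g : ℕ → ℕ → (Fin N → ℂ) → ℂ} (J : ℕ)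
    (h : ∀ k, BO ℓ (g k)) : BO ℓ (fun n s => ∑ k ∈ Finset.range J, g k n s) := by
  induction J with
  | zero => exact fun _ => ⟨0, Eventually.of_forall fun s n _ => by simp⟩
  | succ J ih =>
    exact (ih.add (h J)).congr (fun _ => rfl) (fun n _ s => by rw [Finset.sum_range_succ])

theorem summable_wt_shift {σ : ℝ} (h : 1 < σ) (n : ℕ) : Summable (fun m => wt (n + 1 + m) σ) := by
  have := (summable_nat_add_iff (n + 1)).mpr (summable_wt h)
  simpa only [add_comm] using this

theorem BO.summable {N : ℕ} {ℓ : (Fin N → ℂ) → ℂ} {g : ℕ → (Fin N → ℂ) → ℂ} (h : BO ℓ g)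
    {s : Fin N → ℂ} (hs : 1 < (ℓ s).re) (n : ℕ) : Summable (fun m => g (n + 1 + m) s) := by
  obtain ⟨C, hC⟩ := h s
  refine Summable.of_norm_bounded ((summable_wt_shift hs n).mul_left C) fun m => ?_
  exact hC.self_of_nhds _ (by omega)

/-- The error made when `wⁿ (n+1)^{-z}`, times `a z`, is replaced by `b z` times the difference
of consecutive values of `wⁿ (n+1)^{-(z-δ)}`. -/
noncomputable def rho (w : ℂ) (δ : ℕ) (a b : ℂ → ℂ) (n : ℕ) (z : ℂ) : ℂ :=
  w ^ n * pw n z * a z - b z * (w ^ (n - 1) * pw (n - 1) (z - δ) - w ^ n * pw n (z - δ))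

section Summation
variable {N : ℕ} {w : ℂ} {δ : ℕ} {γ a b : ℂ → ℂ} {ℓ : (Fin N → ℂ) → ℂ}
  {g : ℕ → (Fin N → ℂ) → ℂ}

/-- Repeatedly trading the leading term of a symbol for a telescoping difference: the remainders
`G k` are symbols of order `ℓ + k`. -/
theorem exists_remainders (hw : ‖w‖ = 1) (ha : Differentiable ℂ a) (hb : Differentiable ℂ b)
    (hρ : ∀ ℓ : (Fin N → ℂ) → ℂ, Differentiable ℂ ℓ →
      ∀ K, Sy w K (fun s => ℓ s + 1) (fun n s => rho w δ a b n (ℓ s)))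
    (hℓ : Differentiable ℂ ℓ) (hgd : ∀ n, Differentiable ℂ (g n)) (hg : ∀ K, Sy w K ℓ g) :
    ∃ (G : ℕ → ℕ → (Fin N → ℂ) → ℂ) (c : ℕ → (Fin N → ℂ) → ℂ), G 0 = g ∧
      (∀ k, Differentiable ℂ (c k)) ∧ (∀ k n, Differentiable ℂ (G k n)) ∧
      (∀ (k K : ℕ), Sy w K (fun s => ℓ s + k) (G k)) ∧
      ∀ k n s, G (k + 1) n s = c k s * rho w δ a b n (ℓ s + k) +
        a (ℓ s + k) * (G k n s - c k s * w ^ n * pw n (ℓ s + k)) := by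
  have hstep : ∀ (k : ℕ) (g' : ℕ → (Fin N → ℂ) → ℂ), (∀ K, Sy w K (fun s => ℓ s + k) g') →
      ∃ c, Differentiable ℂ c ∧ ∀ K, Sy w K (fun s => ℓ s + k + 1)
        (fun n s => g' n s - c s * w ^ n * pw n (ℓ s + k)) := fun k g' h => Sy.peel hw h
  choose! C hC hC' using hstep
  let step : ℕ → (ℕ → (Fin N → ℂ) → ℂ) → (ℕ → (Fin N → ℂ) → ℂ) := fun k g' n s =>
    C k g' s * rho w δ a b n (ℓ s + k) + a (ℓ s + k) * (g' n s - C k g' s * w ^ n * pw n (ℓ s + k))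
  let G : ℕ → ℕ → (Fin N → ℂ) → ℂ := fun k => Nat.rec g step k
  have hS : ∀ (k K : ℕ), Sy w K (fun s => ℓ s + k) (G k) := by
    intro k
    induction k with
    | zero => exact fun K => (hg K).congr (by simp) (fun _ _ _ => rfl)
    | succ k ih =>
      intro K
      have hlk : Differentiable ℂ (fun s => ℓ s + (k : ℂ)) := hℓ.add_const _
      have e1 := (hρ _ hlk K).smul (hC k (G k) ih)
      have e2 := (hC' k (G k) ih K).smul (ha.comp hlk)
      exact (e1.add e2).congr (fun s => by push_cast; ring) (fun n _ s => rfl)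
  refine ⟨G, fun k => C k (G k), rfl, fun k => hC k (G k) (hS k), ?_, hS,
    fun k n s => rfl⟩
  intro k
  induction k with
  | zero => exact hgd
  | succ k ih =>
    intro n
    have hlk : Differentiable ℂ (fun s => ℓ s + (k : ℂ)) := hℓ.add_const _
    have hck := hC k (G k) (hS k)
    have hr : Differentiable ℂ (rho w δ a b n) := by
      have h1 := pw_differentiable n
      have h2 : Differentiable ℂ (fun z => pw n (z - δ)) :=
        h1.comp (differentiable_id.sub_const _)
      have h3 : Differentiable ℂ (fun z => pw (n - 1) (z - δ)) :=
        (pw_differentiable (n - 1)).comp (differentiable_id.sub_const _)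
      unfold rho
      fun_prop
    exact (hck.mul (hr.comp hlk)).add ((ha.comp hlk).mul
      ((ih n).sub ((hck.mul_const _).mul (hlk.pw' n))))

/-- Summation of symbols. The normalised tail sums `γ(ℓ(s)) ∑_{m>n} g m s`, defined where
`Re ℓ(s) > 1`, continue to entire functions of `s`, and these are symbols of order `ℓ - δ`. The
hypothesis `hρ` says that `a z wⁿ (n+1)^{-z}` is, up to lower order, `b z` times a telescoping
difference, and `hrec` lets `γ` absorb the factor `a` at each such replacement. -/
theorem summation (hw : ‖w‖ = 1) (hδ : δ ≤ 1) (hγ : Differentiable ℂ γ) (ha : Differentiable ℂ a)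
    (hb : Differentiable ℂ b) (hrec : ∀ z, γ z = a z * γ (z + 1))
    (hρ : ∀ ℓ : (Fin N → ℂ) → ℂ, Differentiable ℂ ℓ →
      ∀ K, Sy w K (fun s => ℓ s + 1) (fun n s => rho w δ a b n (ℓ s)))
    (hℓ : Differentiable ℂ ℓ) (hgd : ∀ n, Differentiable ℂ (g n)) (hg : ∀ K, Sy w K ℓ g) :
    ∃ h : ℕ → (Fin N → ℂ) → ℂ, (∀ n, Differentiable ℂ (h n)) ∧
      (∀ K, Sy w K (fun s => ℓ s - δ) h) ∧
      ∀ n s, 1 < (ℓ s).re → h n s = γ (ℓ s) * ∑' m, g (n + 1 + m) s := by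
  obtain ⟨G, c, hG0, hc, hGd, hGS, hGrec⟩ := exists_remainders hw ha hb hρ hℓ hgd hg
  have hGB : ∀ k : ℕ, BO (fun s => ℓ s + k) (G k) := fun k => hGS k 0
  have hlk : ∀ z : ℂ, Differentiable ℂ (fun s => ℓ s + z) := fun z => hℓ.add_const _
  have hld : Differentiable ℂ (fun s => ℓ s - (δ : ℂ)) := hℓ.sub_const _
  set cH : ℕ → (Fin N → ℂ) → ℂ := fun k s => γ (ℓ s + (k + 1)) * b (ℓ s + k) * c k s with hcH
  have hcHd : ∀ k, Differentiable ℂ (cH k) := fun k =>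
    ((hγ.comp (hlk _)).mul (hb.comp (hlk _))).mul (hc k)
  set H : ℕ → ℕ → (Fin N → ℂ) → ℂ := fun k n s => cH k s * w ^ n * pw n (ℓ s - δ + k) with hH
  have hHd : ∀ k n, Differentiable ℂ (H k n) := fun k n =>
    ((hcHd k).mul_const _).mul ((hld.add_const _).pw' n)
  have hHB : ∀ k : ℕ, BO (fun s => ℓ s - δ + k) (H k) := fun k => BO.main (hcHd k).continuous hw
  have key : ∀ (k n : ℕ) (s : Fin N → ℂ), γ (ℓ s + k) * G k (n + 1) s =
      H k n s - H k (n + 1) s + γ (ℓ s + (k + 1 : ℕ)) * G (k + 1) (n + 1) s := by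
    intro k n s
    have e : ℓ s + (k : ℂ) - δ = ℓ s - δ + k := by ring
    rw [hGrec, hrec (ℓ s + k), rho, e, Nat.add_sub_cancel]
    simp only [hH, hcH]
    push_cast
    rw [← add_assoc]
    ring
  -- `T K` continues the normalised tail sum to `Re ℓ > 1 - K`: `K` leading terms are telescoped away.
  set T : ℕ → ℕ → (Fin N → ℂ) → ℂ := fun K n s =>
    ∑ k ∈ Finset.range K, H k n s + γ (ℓ s + K) * ∑' m, G K (n + 1 + m) s with hT
  have hre : ∀ (s : Fin N → ℂ) (K : ℕ), (ℓ s + K).re = (ℓ s).re + K := by simp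
  have hsum : ∀ (K n : ℕ) (s : Fin N → ℂ), 1 < (ℓ s).re + K → Summable (fun m => G K (n + 1 + m) s) :=
    fun K n s h => (hGB K).summable (by rw [hre]; exact h) n
  have hTs : ∀ (K n : ℕ) (s : Fin N → ℂ), 1 < (ℓ s).re + K → T (K + 1) n s = T K n s := by
    intro K n s hK
    have s0 := (hsum K n s hK).mul_left (γ (ℓ s + K))
    have s1 := (hsum (K + 1) n s (by push_cast; linarith)).mul_left (γ (ℓ s + (K + 1 : ℕ)))
    have e : ∀ m, H K (n + m) s - H K (n + (m + 1)) s =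
        γ (ℓ s + K) * G K (n + 1 + m) s - γ (ℓ s + (K + 1 : ℕ)) * G (K + 1) (n + 1 + m) s := by
      intro m
      have := key K (n + m) s
      rw [show n + 1 + m = n + m + 1 by ring, this, ← add_assoc n m 1]
      ring
    have s2 : Summable (fun m => H K (n + m) s - H K (n + (m + 1)) s) := by
      simp only [e]; exact s0.sub s1
    have hlim : Tendsto (fun m => H K (n + m) s) atTop (𝓝 0) := by
      obtain ⟨C, hC⟩ := hHB K s
      have h0 : 0 < (ℓ s - δ + K).re := by
        have : (δ : ℝ) ≤ 1 := by exact_mod_cast hδ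
        simp only [Complex.add_re, Complex.sub_re, Complex.natCast_re]
        linarith
      have hb0 : Tendsto (fun m => C * wt m (ℓ s - δ + K).re) atTop (𝓝 0) := by
        simpa using (tendsto_wt h0).const_mul C
      have hl : Tendsto (fun m => H K m s) atTop (𝓝 0) := by
        refine squeeze_zero_norm' ?_ hb0
        filter_upwards [eventually_ge_atTop 1] with m hm
        exact hC.self_of_nhds m hm
      have := hl.comp (tendsto_add_atTop_nat n)
      simpa only [Function.comp_def, add_comm] using this
    have ht : ∑' m, (H K (n + m) s - H K (n + (m + 1)) s) = H K n s := by
      refine tendsto_nhds_unique s2.hasSum.tendsto_sum_nat ?_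
      have e3 : ∀ M, ∑ m ∈ Finset.range M, (H K (n + m) s - H K (n + (m + 1)) s) =
          H K n s - H K (n + M) s := fun M => Finset.sum_range_sub' (fun m => H K (n + m) s) M
      simp only [e3]
      simpa using hlim.const_sub (H K n s)
    simp only [e] at ht
    rw [s0.tsum_sub s1, tsum_mul_left, tsum_mul_left] at ht
    simp only [hT]
    rw [Finset.sum_range_succ]
    linear_combination -ht
  have hTT : ∀ (K J n : ℕ) (s : Fin N → ℂ), 1 < (ℓ s).re + K → T (K + J) n s = T K n s := by
    intro K J n s hK
    induction J with
    | zero => rfl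
    | succ J ih =>
      rw [← add_assoc, hTs _ _ _ (by push_cast; have : (0 : ℝ) ≤ J := J.cast_nonneg
                                     linarith), ih]
  -- Glue the `T K`, taking at each `s` some `K` for which the remaining series converges.
  set h : ℕ → (Fin N → ℂ) → ℂ := fun n s => T ⌈2 - (ℓ s).re⌉₊ n s with hh
  have hhT : ∀ (K n : ℕ) (s : Fin N → ℂ), 1 < (ℓ s).re + K → h n s = T K n s := by
    intro K n s hK
    have h1 := Nat.le_ceil (2 - (ℓ s).re)
    rw [hh]
    dsimp only
    rw [← hTT K ⌈2 - (ℓ s).re⌉₊ n s hK, add_comm K, hTT _ K n s (by linarith)]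
  have hex : ∀ (s₀ : Fin N → ℂ) (K : ℕ), ∃ K' : ℕ, K + 2 ≤ K' ∧ 3 < (ℓ s₀).re + K' := by
    intro s₀ K
    obtain ⟨M, hM⟩ := exists_nat_gt (3 - (ℓ s₀).re)
    refine ⟨K + 2 + M, by omega, ?_⟩
    push_cast
    have : (0 : ℝ) ≤ K := K.cast_nonneg
    linarith
  have hrec' : Continuous (fun s => (ℓ s).re) := Complex.continuous_re.comp hℓ.continuous
  refine ⟨h, fun n => ?_, fun K => ?_, fun n s hs => ?_⟩
  · intro s₀
    obtain ⟨K, -, hK⟩ := hex s₀ 0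
    have hev : h n =ᶠ[𝓝 s₀] T K n := by
      have : ∀ᶠ s in 𝓝 s₀, 3 < (ℓ s).re + K :=
        (hrec'.add continuous_const).continuousAt.eventually_const_lt hK
      filter_upwards [this] with s hs
      exact hhT K n s (by linarith)
    refine DifferentiableAt.congr_of_eventuallyEq ?_ hev
    obtain ⟨C, hC0, hC⟩ := (hGB K).local (hlk K).continuous (σ := 3) (by rw [hre]; exact hK)
    have han := tsum_analyticAt (fun m s => G K (n + 1 + m) s) (fun m => hGd K _)
      (fun m => C * wt (n + 1 + m) 3) ((summable_wt_shift (by norm_num) n).mul_left C) s₀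
      (hC.mono fun s hs m => hs _ (by omega))
    refine DifferentiableAt.add (DifferentiableAt.fun_sum fun k _ => hHd k n s₀) ?_
    exact ((hγ.comp (hlk K)) s₀).mul han.differentiableAt
  · refine Sy.of_sum (c := cH) hcHd ?_
    intro s₀
    -- Two extra terms let the tail of the remaining series be bounded by `(n+1)^{-Re ℓ-K}`.
    obtain ⟨K', hKK', hK'⟩ := hex s₀ K
    obtain ⟨J, rfl⟩ := Nat.exists_eq_add_of_le hKK'
    have hfin : BO (fun s => ℓ s - δ + K)
        (fun n s => ∑ k ∈ Finset.range (2 + J), H (K + k) n s) := by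
      refine BO.sum (g := fun k => H (K + k)) _ fun k => BO.mono ?_ (hHB (K + k))
      intro s
      push_cast
      simp
    have htail : BO (fun s => ℓ s + (K + 2 + J : ℕ))
        (fun n s => γ (ℓ s + (K + 2 + J : ℕ)) * G (K + 2 + J) n s) :=
      (hGB _).smul (hγ.comp (hlk _)).continuous
    obtain ⟨C₁, hC₁⟩ := hfin s₀
    obtain ⟨C₂, hC₂0, hC₂⟩ := htail.exists_nonneg s₀
    have hev : ∀ᶠ s in 𝓝 s₀, 3 < (ℓ s).re + (K + 2 + J : ℕ) :=
      (hrec'.add continuous_const).continuousAt.eventually_const_lt hK'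
    refine ⟨C₁ + C₂ * ∑' m, wt m 2, ?_⟩
    filter_upwards [hC₁, hC₂, hev] with s h1 h2 h3 n hn
    have e : h n s - ∑ k ∈ Finset.range K, cH k s * w ^ n * pw n (ℓ s - δ + k) =
        ∑ k ∈ Finset.range (2 + J), H (K + k) n s +
          ∑' m, γ (ℓ s + (K + 2 + J : ℕ)) * G (K + 2 + J) (n + 1 + m) s := by
      rw [hhT (K + 2 + J) n s (by linarith), tsum_mul_left]
      simp only [hT]
      rw [add_assoc K 2 J, Finset.sum_range_add]
      ring
    rw [e, add_mul]
    refine (norm_add_le _ _).trans (add_le_add (h1 n hn) ?_)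
    have hw2 : Summable (fun m => wt m 2) := summable_wt (by norm_num)
    rw [mul_assoc, mul_comm (tsum _), ← tsum_mul_left, ← tsum_mul_left]
    refine tsum_of_norm_bounded ((hw2.mul_left _).mul_left _).hasSum fun m => ?_
    refine (h2 _ (by omega)).trans (mul_le_mul_of_nonneg_left ?_ hC₂0)
    have e2 : (ℓ s + (K + 2 + J : ℕ)).re = ((ℓ s).re + K + J) + 2 := by
      rw [hre]; push_cast; ring
    rw [e2, wt_add]
    have h3' : 0 ≤ (ℓ s).re + K + J := by push_cast at h3; linarith
    refine mul_le_mul ?_ (wt_anti_left (by omega) (by norm_num)) (wt_pos _ _).le (wt_pos _ _).le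
    refine (wt_anti_left (by omega : n ≤ n + 1 + m) h3').trans (wt_anti n ?_)
    simp only [Complex.add_re, Complex.sub_re, Complex.natCast_re]
    have : (0 : ℝ) ≤ J := J.cast_nonneg
    have : (0 : ℝ) ≤ δ := δ.cast_nonneg
    linarith
  · rw [hhT 0 n s (by simpa using hs)]
    simp [hT, hG0]

end Summation

/-! ### Iteration over the depth -/

/-- The loss of one in the order of a symbol under summation, in the non-oscillating case. -/
noncomputable def dl (w : ℂ) : ℕ := open Classical in if w = 1 then 1 else 0

/-- The entire factor that removes the poles created by a summation. -/
noncomputable def gam (w z : ℂ) : ℂ := open Classical in if w = 1 then (Gamma (z - 1))⁻¹ else 1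

theorem Sy.osc {N : ℕ} {w : ℂ} (hw : ‖w‖ = 1) (K : ℕ) :
    Sy w K (fun _ : Fin N → ℂ => 0) (fun n _ => w ^ n) :=
  (Sy.main (c := fun _ => 1) hw (differentiable_const _)).congr (fun _ => rfl)
    (fun n _ s => by rw [pw_zero]; ring)

theorem rpowC_pred {n : ℕ} (hn : 1 ≤ n) (z : ℂ) :
    rpowC ((n : ℝ) + 1 - (1 : ℝ)) (-z) = pw (n - 1) z := by
  rw [pw, Nat.cast_sub hn]
  congr 1
  push_cast
  ring

/-- Summation of a symbol with oscillation `w`, in both cases `w = 1` and `w ≠ 1`. -/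
theorem summation_step {N : ℕ} {w : ℂ} (hw : ‖w‖ = 1) {ℓ : (Fin N → ℂ) → ℂ}
    {g : ℕ → (Fin N → ℂ) → ℂ} (hℓ : Differentiable ℂ ℓ)
    (hgd : ∀ n, Differentiable ℂ (g n)) (hg : ∀ K, Sy w K ℓ g) :
    ∃ h : ℕ → (Fin N → ℂ) → ℂ, (∀ n, Differentiable ℂ (h n)) ∧
      (∀ K, Sy w K (fun s => ℓ s - dl w) h) ∧
      ∀ n s, 1 < (ℓ s).re → h n s = gam w (ℓ s) * ∑' m, g (n + 1 + m) s := by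
  have h1 : (1 : ℝ) ∈ Set.Icc (0 : ℝ) 1 := by simp
  by_cases hw1 : w = 1
  -- Non-oscillating case: `n^{-(z-1)} - (n+1)^{-(z-1)} = (z-1)(n+1)^{-z} + …`, and
  -- `γ(z) = 1/Γ(z-1)` absorbs the factor `z - 1`.
  · have hd : dl w = 1 := by simp [dl, hw1]
    have hgam : gam w = fun z => (Gamma (z - 1))⁻¹ := by funext z; simp [gam, hw1]
    rw [hd, hgam]
    refine summation (γ := fun z => (Gamma (z - 1))⁻¹) (a := fun z => z - 1) (b := fun _ => 1) hw le_rfl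
      (Complex.differentiable_one_div_Gamma.comp (differentiable_id.sub_const 1))
      (differentiable_id.sub_const 1) (differentiable_const _) (fun z => ?_) ?_ hℓ hgd hg
    · have := Complex.one_div_Gamma_eq_self_mul_one_div_Gamma_add_one (z - 1)
      rw [this, show z - 1 + 1 = z + 1 - 1 by ring]
    · intro ℓ hℓ K
      have := (Sy.shift_tail (hℓ.sub_const 1) h1 2 K).smul (differentiable_const (-1))
      rw [hw1]
      refine this.congr (fun s => by push_cast; ring) fun n hn s => ?_
      rw [rpowC_pred hn, rho]
      simp only [Finset.sum_range_succ, Finset.sum_range_zero, one_pow, tc,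
        Finset.prod_range_one, Nat.factorial, Complex.ofReal_one, Nat.cast_zero, Nat.cast_one,
        sub_add_cancel, add_zero]
      simp
      ring
  -- Oscillating case: `w^{n-1} n^{-z} - wⁿ (n+1)^{-z} = (w⁻¹ - 1) wⁿ (n+1)^{-z} + …`, with a
  -- nonzero constant, so nothing is lost.
  · have hd : dl w = 0 := by simp [dl, hw1]
    have hgam : gam w = fun z => 1 := by funext z; simp [gam, hw1]
    rw [hd, hgam]
    have hw0 : w ≠ 0 := by rintro rfl; simp at hw
    have hw2 : w⁻¹ - 1 ≠ 0 := by
      intro h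
      exact hw1 (inv_eq_one.mp (sub_eq_zero.mp h))
    refine summation (a := fun _ => 1) (b := fun _ => (w⁻¹ - 1)⁻¹) hw zero_le_one
      (differentiable_const _) (differentiable_const _) (differentiable_const _)
      (fun z => by ring) ?_ hℓ hgd hg
    intro ℓ hℓ K
    have := ((Sy.osc hw K).mul hw (by simp) (Sy.shift_tail hℓ h1 1 K)).smul
      (differentiable_const (-((w⁻¹ - 1)⁻¹ * w⁻¹)))
    rw [mul_one] at this
    refine this.congr (fun s => by push_cast; ring) fun n hn s => ?_
    rw [rpowC_pred hn, rho]
    obtain ⟨m, rfl⟩ := Nat.exists_eq_add_of_le' hn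
    simp only [Finset.sum_range_one, tc_zero, Nat.cast_zero, add_zero, pow_zero, sub_zero,
      Nat.add_sub_cancel, pow_succ]
    have e1 : 1 - w ≠ 0 := sub_ne_zero.mpr (Ne.symm hw1)
    have e2 : w⁻¹ - 1 = (1 - w) / w := by field_simp
    rw [e2]
    field_simp
    ring

theorem eR_norm (a : ℝ) : ‖eR a‖ = 1 := by
  rw [eR, show (2 * Real.pi * Complex.I * a : ℂ) = ((2 * Real.pi * a : ℝ) : ℂ) * Complex.I by
    push_cast; ring]
  exact Complex.norm_exp_ofReal_mul_I _

theorem eR_mul_nat (a : ℝ) (n : ℕ) : eR (a * n) = eR a ^ n := by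
  rw [eR, eR, ← Complex.exp_nat_mul]
  congr 1
  push_cast
  ring

/-- The oscillation `e(λ_0 + ⋯ + λ_{i-1})` after `i` summations. -/
noncomputable def osc (lam : ℕ → ℝ) (i : ℕ) : ℂ := ∏ j ∈ Finset.range i, eR (lam j)

theorem osc_norm (lam : ℕ → ℝ) (i : ℕ) : ‖osc lam i‖ = 1 := by
  rw [osc, norm_prod]; simp [eR_norm]

/-- The order of the symbol obtained after `i` summations. -/
noncomputable def ord {N : ℕ} (lam : ℕ → ℝ) (x : ℕ → (Fin N → ℂ) → ℂ) (i : ℕ)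
    (s : Fin N → ℂ) : ℂ :=
  ∑ j ∈ Finset.range i, (x j s - dl (osc lam (j + 1)))

/-- The summand introduced by the `i`-th summation. -/
noncomputable def tm (lam al : ℕ → ℝ) (i n : ℕ) (z : ℂ) : ℂ :=
  eR (lam i * n) * rpowC ((n : ℝ) + al i) (-z)

/-- The iterated sum over `n_0 > n_1 > ⋯ > n_{i-1} > n`. -/
noncomputable def iter {N : ℕ} (lam al : ℕ → ℝ) (x : ℕ → (Fin N → ℂ) → ℂ) (s : Fin N → ℂ) :
    ℕ → ℕ → ℂ
  | 0, _ => 1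
  | i + 1, n => ∑' m, tm lam al i (n + 1 + m) (x i s) * iter lam al x s i (n + 1 + m)

/-- Iterated sums, normalised by one factor for each summation, continue to entire functions. -/
theorem exists_iter {N : ℕ} (lam al : ℕ → ℝ) (hal : ∀ i, al i ∈ Set.Ico (0 : ℝ) 1)
    (x : ℕ → (Fin N → ℂ) → ℂ) (hx : ∀ i, Differentiable ℂ (x i)) (i : ℕ) :
    ∃ h : ℕ → (Fin N → ℂ) → ℂ, (∀ n, Differentiable ℂ (h n)) ∧
      (∀ K, Sy (osc lam i) K (ord lam x i) h) ∧
      ∀ s, (∀ j < i, 1 < (ord lam x j s + x j s).re) → ∀ n,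
        h n s = (∏ j ∈ Finset.range i, gam (osc lam (j + 1)) (ord lam x j s + x j s)) *
          iter lam al x s i n := by
  induction i with
  | zero =>
    refine ⟨fun _ _ => 1, fun _ => differentiable_const _, fun K => ?_, fun s _ n => ?_⟩
    · exact (Sy.osc (osc_norm lam 0) K).congr (by simp [ord]) (by simp [osc])
    · simp [iter]
  | succ i ih =>
    obtain ⟨h, hd, hS, hv⟩ := ih
    have hord : Differentiable ℂ (ord lam x i) := by
      unfold ord
      exact Differentiable.fun_sum fun j _ => (hx j).sub_const _
    have hosc : osc lam (i + 1) = osc lam i * eR (lam i) := by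
      rw [osc, osc, Finset.prod_range_succ]
    have ht : 1 - al i ∈ Set.Icc (0 : ℝ) 1 := by
      have := hal i
      constructor <;> linarith [this.1, this.2]
    have htm : ∀ n s, tm lam al i n (x i s) =
        eR (lam i) ^ n * rpowC ((n : ℝ) + 1 - (1 - al i)) (-(x i s)) := by
      intro n s
      rw [tm, eR_mul_nat]
      congr 2
      ring
    have hgd : ∀ n, Differentiable ℂ (fun s => tm lam al i n (x i s) * h n s) := by
      intro n
      have h1 : Differentiable ℂ (fun s => tm lam al i n (x i s)) := by
        have := hx i
        unfold tm rpowC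
        fun_prop
      exact h1.mul (hd n)
    have hgS : ∀ K, Sy (osc lam (i + 1)) K (fun s => ord lam x i s + x i s)
        (fun n s => tm lam al i n (x i s) * h n s) := by
      intro K
      have h1 := ((Sy.osc (eR_norm (lam i)) K).mul (eR_norm _) (by simp)
        (Sy.shift (hx i) ht K)).mul (by simp [eR_norm]) (osc_norm lam i) (hS K)
      have e : eR (lam i) * 1 * osc lam i = osc lam (i + 1) := by rw [hosc]; ring
      rw [e] at h1
      refine h1.congr (fun s => by ring) fun n hn s => ?_
      rw [htm]
    obtain ⟨h', hd', hS', hv'⟩ := summation_step (osc_norm lam (i + 1))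
      (ℓ := fun s => ord lam x i s + x i s) (hord.add (hx i)) hgd hgS
    refine ⟨h', hd', fun K => (hS' K).congr (fun s => ?_) (fun _ _ _ => rfl), fun s hs n => ?_⟩
    · simp only [ord]
      rw [Finset.sum_range_succ]
      ring
    · rw [hv' n s (hs i (Nat.lt_succ_self i)), Finset.prod_range_succ, iter]
      have hs' := hv s fun j hj => hs j (by omega)
      simp only [hs']
      rw [← tsum_mul_left, ← tsum_mul_left]
      exact tsum_congr fun m => by ring

/-! ### The multiple series as an iterated sum -/

/-- Strictly decreasing `i`-tuples of integers greater than `n₀`. -/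
def Tup (i n₀ : ℕ) : Type := {n : Fin i → ℕ // StrictAnti n ∧ ∀ j, n₀ < n j}

/-- The tuple obtained from `n` by adding the new smallest entry `n₀ + 1 + m`. -/
def Tup.snoc {i n₀ : ℕ} (p : Σ m, Tup i (n₀ + 1 + m)) : Tup (i + 1) n₀ :=
  ⟨Fin.snoc (α := fun _ => ℕ) p.2.1 (n₀ + 1 + p.1), by
    obtain ⟨m, n, hn, hn'⟩ := p
    constructor
    · intro a b hab
      induction b using Fin.lastCases with
      | last =>
        obtain ⟨a', rfl⟩ := Fin.exists_castSucc_eq.mpr hab.ne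
        simpa using hn' a'
      | cast b' =>
        obtain ⟨a', rfl⟩ := Fin.exists_castSucc_eq.mpr (hab.trans_le (Fin.le_last _)).ne
        simpa using hn (Fin.castSucc_lt_castSucc_iff.mp hab)
    · intro j
      induction j using Fin.lastCases with
      | last => simp only [Fin.snoc_last]; omega
      | cast j' => have := hn' j'; simp only [Fin.snoc_castSucc]; omega⟩

theorem Tup.snoc_bijective (i n₀ : ℕ) : Function.Bijective (Tup.snoc (i := i) (n₀ := n₀)) := by
  constructor
  · rintro ⟨m, n⟩ ⟨m', n'⟩ h
    have h1 := congrArg Subtype.val h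
    simp only [Tup.snoc] at h1
    have h2 := congrFun h1 (Fin.last i)
    simp only [Fin.snoc_last] at h2
    obtain rfl : m = m' := by omega
    congr 1
    apply Subtype.ext
    funext j
    simpa using congrFun h1 j.castSucc
  · rintro ⟨n, hn, hn'⟩
    have hl := hn' (Fin.last i)
    refine ⟨⟨n (Fin.last i) - (n₀ + 1), fun j => n j.castSucc, ?_, ?_⟩, ?_⟩
    · intro a b hab
      exact hn (Fin.castSucc_lt_castSucc_iff.mpr hab)
    · intro j
      have := hn (Fin.castSucc_lt_last j)
      dsimp only
      omega
    · apply Subtype.ext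
      funext j
      induction j using Fin.lastCases with
      | last => simp only [Tup.snoc, Fin.snoc_last]; omega
      | cast j' => simp only [Tup.snoc, Fin.snoc_castSucc]

/-- Decreasing tuples are fibred over their smallest entry `n₀ + 1 + m`. -/
noncomputable def Tup.snocEquiv (i n₀ : ℕ) : (Σ m, Tup i (n₀ + 1 + m)) ≃ Tup (i + 1) n₀ :=
  Equiv.ofBijective _ (Tup.snoc_bijective i n₀)

/-- The summand of the depth `i` series, with data indexed by all of `ℕ`. -/
noncomputable def term {N : ℕ} (lam al : ℕ → ℝ) (x : ℕ → (Fin N → ℂ) → ℂ) (s : Fin N → ℂ)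
    {i : ℕ} (n : Fin i → ℕ) : ℂ := ∏ j : Fin i, tm lam al j (n j) (x j s)

theorem tm_bound (lam al : ℕ → ℝ) (hal : ∀ i, al i ∈ Set.Ico (0 : ℝ) 1) (i : ℕ) (z : ℂ) :
    ∃ C : ℝ, 0 ≤ C ∧ ∀ n, 1 ≤ n → ‖tm lam al i n z‖ ≤ C * wt n z.re := by
  obtain ⟨C, hC⟩ := taylor_base z
  have ht : 1 - al i ∈ Set.Icc (0 : ℝ) 1 := by
    have := hal i
    constructor <;> linarith [this.1, this.2]
  refine ⟨|C|, abs_nonneg _, fun n hn => ?_⟩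
  have h := hC.self_of_nhds n hn _ ht
  rw [show (n : ℝ) + 1 - (1 - al i) = n + al i by ring] at h
  rw [tm, norm_mul, eR_norm, one_mul]
  exact h.trans (mul_le_mul_of_nonneg_right (le_abs_self C) (wt_pos _ _).le)

/-- In the region of convergence the series over decreasing tuples converges absolutely and equals
the iterated sum. The bound on the sum over the tuples above `n₀` drives the induction on depth. -/
theorem tup_sum {N : ℕ} (lam al : ℕ → ℝ) (hal : ∀ i, al i ∈ Set.Ico (0 : ℝ) 1)
    (x : ℕ → (Fin N → ℂ) → ℂ) (s : Fin N → ℂ) (i : ℕ)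
    (hs : ∀ j < i, ((j : ℝ) + 1) < (∑ l ∈ Finset.range (j + 1), x l s).re) :
    (∀ θ < (∑ l ∈ Finset.range i, x l s).re - i, ∃ C : ℝ, 0 ≤ C ∧ ∀ n₀,
      (∑' n : Tup i n₀, ‖term lam al x s n.1‖) ≤ C * wt n₀ θ) ∧
    ∀ n₀, Summable (fun n : Tup i n₀ => ‖term lam al x s n.1‖) ∧
      ∑' n : Tup i n₀, term lam al x s n.1 = iter lam al x s i n₀ := by
  induction i with
  | zero =>
    have hu : ∀ n₀, Nonempty (Unique (Tup 0 n₀)) := fun n₀ =>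
      ⟨⟨⟨⟨Fin.elim0, fun a => a.elim0, fun a => a.elim0⟩⟩,
        fun n => Subtype.ext (Subsingleton.elim _ _)⟩⟩
    refine ⟨fun θ hθ => ⟨1, zero_le_one, fun n₀ => ?_⟩, fun n₀ => ?_⟩
    · obtain ⟨hu⟩ := hu n₀
      have h0 : θ ≤ 0 := by simpa using hθ.le
      have := wt_anti n₀ h0
      rw [tsum_fintype]
      simpa [term, wt] using this
    · obtain ⟨hu⟩ := hu n₀
      refine ⟨(hasSum_fintype _).summable, ?_⟩
      rw [tsum_fintype]
      simp [term, iter]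
  | succ i ih =>
    obtain ⟨ihb, ihs⟩ := ih fun j hj => hs j (by omega)
    obtain ⟨C, hC0, hC⟩ := tm_bound lam al hal i (x i s)
    have hterm : ∀ n₀ (p : Σ m, Tup i (n₀ + 1 + m)), term lam al x s (Tup.snocEquiv i n₀ p).1 =
        tm lam al i (n₀ + 1 + p.1) (x i s) * term lam al x s p.2.1 := by
      intro n₀ p
      simp only [Tup.snocEquiv, Equiv.ofBijective_apply, Tup.snoc, term]
      rw [Fin.prod_univ_castSucc, mul_comm]
      simp
    have hpos : 0 < (∑ l ∈ Finset.range (i + 1), x l s).re - (i + 1 : ℕ) := by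
      have := hs i (Nat.lt_succ_self i)
      push_cast
      linarith
    -- The sum over the tuples whose smallest entry is `n₀ + 1 + m`.
    have hfib : ∀ θ, 0 ≤ θ → θ < (∑ l ∈ Finset.range (i + 1), x l s).re - (i + 1 : ℕ) →
        ∃ B : ℝ, 0 ≤ B ∧ ∃ ε > 0, ∀ n₀ m : ℕ,
        ∑' n : Tup i (n₀ + 1 + m), ‖tm lam al i (n₀ + 1 + m) (x i s) * term lam al x s n.1‖ ≤
          B * wt n₀ θ * wt m (1 + ε) := by
      intro θ h0 hθ
      set ρ := (∑ l ∈ Finset.range (i + 1), x l s).re - (i + 1 : ℕ) with hρ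
      have hε : 0 < (ρ - θ) / 2 := by linarith
      obtain ⟨C', hC'0, hC'⟩ := ihb ((∑ l ∈ Finset.range i, x l s).re - i - (ρ - θ) / 2)
        (by linarith)
      refine ⟨C * C', mul_nonneg hC0 hC'0, (ρ - θ) / 2, hε, fun n₀ m => ?_⟩
      simp only [norm_mul]
      rw [tsum_mul_left]
      refine (mul_le_mul (hC _ (by omega)) (hC' _) (tsum_nonneg fun _ => norm_nonneg _)
        (mul_nonneg hC0 (wt_pos _ _).le)).trans ?_
      rw [mul_mul_mul_comm, ← wt_add, mul_assoc (C * C')]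
      refine mul_le_mul_of_nonneg_left ?_ (mul_nonneg hC0 hC'0)
      have e : (x i s).re + ((∑ l ∈ Finset.range i, x l s).re - i - (ρ - θ) / 2) =
          θ + (1 + (ρ - θ) / 2) := by
        have : ρ = (∑ l ∈ Finset.range i, x l s).re + (x i s).re - (i + 1) := by
          rw [hρ, Finset.sum_range_succ, Complex.add_re]
          push_cast
          ring
        linarith
      rw [e, wt_add]
      exact mul_le_mul (wt_anti_left (by omega) h0) (wt_anti_left (by omega) (by linarith))
        (wt_pos _ _).le (wt_pos _ _).le
    have hsig : ∀ n₀, Summable (fun p : Σ m, Tup i (n₀ + 1 + m) =>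
        ‖tm lam al i (n₀ + 1 + p.1) (x i s) * term lam al x s p.2.1‖) := by
      intro n₀
      rw [summable_sigma_of_nonneg fun _ => norm_nonneg _]
      constructor
      · intro m
        simp only [norm_mul]
        exact (ihs (n₀ + 1 + m)).1.mul_left _
      · obtain ⟨B, -, ε, hε, hB⟩ := hfib 0 le_rfl hpos
        exact Summable.of_nonneg_of_le (fun m => tsum_nonneg fun _ => norm_nonneg _) (hB n₀)
          ((summable_wt (by linarith)).mul_left _)
    refine ⟨fun θ hθ => ?_, fun n₀ => ⟨?_, ?_⟩⟩
    · obtain ⟨B, hB0, ε, hε, hB⟩ := hfib (max θ 0) (le_max_right _ _) (max_lt hθ hpos)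
      have hsw : Summable (fun m => wt m (1 + ε)) := summable_wt (by linarith)
      have hS0 : 0 ≤ ∑' m, wt m (1 + ε) := tsum_nonneg fun m => (wt_pos _ _).le
      refine ⟨B * ∑' m, wt m (1 + ε), mul_nonneg hB0 hS0, fun n₀ => ?_⟩
      rw [← (Tup.snocEquiv i n₀).tsum_eq]
      simp only [hterm]
      rw [(hsig n₀).tsum_sigma]
      have h1 := (hsig n₀).sigma.tsum_le_tsum (hB n₀) (hsw.mul_left _)
      refine h1.trans ?_
      rw [tsum_mul_left, mul_right_comm]
      exact mul_le_mul_of_nonneg_left (wt_anti n₀ (le_max_left _ _)) (mul_nonneg hB0 hS0)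
    · rw [← (Tup.snocEquiv i n₀).summable_iff]
      simp only [Function.comp_def, hterm]
      exact hsig n₀
    · rw [← (Tup.snocEquiv i n₀).tsum_eq]
      simp only [hterm]
      rw [(hsig n₀).of_norm.tsum_sigma, iter]
      refine tsum_congr fun m => ?_
      dsimp only
      rw [tsum_mul_left, (ihs _).2]

/-- Extension of a finite family by zero. -/
def ext0 {N : ℕ} {α : Type*} [Zero α] (f : Fin N → α) (i : ℕ) : α :=
  if h : i < N then f ⟨i, h⟩ else 0

theorem ext0_val {N : ℕ} {α : Type*} [Zero α] (f : Fin N → α) (i : Fin N) : ext0 f i = f i := by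
  simp [ext0]

theorem sum_Iic_eq {N : ℕ} {α : Type*} [AddCommMonoid α] (f : Fin N → α) (i : Fin N) :
    ∑ j ∈ Finset.Iic i, f j = ∑ j ∈ Finset.range (i + 1), ext0 f j := by
  rw [Nat.range_succ_eq_Iic, ← Fin.map_valEmbedding_Iic, Finset.sum_map]
  exact Finset.sum_congr rfl fun j _ => (ext0_val f j).symm

theorem rpowC_neg (b : ℝ) (z : ℂ) : rpowC b (-z) = (rpowC b z)⁻¹ := by
  rw [rpowC, rpowC, ← Complex.exp_neg, neg_mul]

/-- On `U_r` the multiple Lerch zeta function is the full iterated sum: `hs` is the condition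
that guarantees absolute convergence of the series over tuples. -/
theorem multipleLerch_eq_iter {N : ℕ} (lam al : Fin N → ℝ)
    (hal : ∀ i, al i ∈ Set.Ico (0 : ℝ) 1) (s : Fin N → ℂ) (hs : s ∈ Ur N 0) :
    multipleLerch lam al s = iter (ext0 lam) (ext0 al) (fun i s => ext0 s i) s N 0 := by
  have hal' : ∀ i, ext0 al i ∈ Set.Ico (0 : ℝ) 1 := by
    intro i
    unfold ext0
    split_ifs with h
    · exact hal _
    · simp
  rw [← ((tup_sum (ext0 lam) (ext0 al) hal' (fun i s => ext0 s i) s N ?_).2 0).2]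
  · unfold multipleLerch
    refine tsum_congr fun n : Tup N 0 => ?_
    rw [lerchTerm, term, ← Finset.prod_div_distrib]
    refine Finset.prod_congr rfl fun j _ => ?_
    rw [tm, ext0_val, ext0_val, ext0_val, rpowC_neg, div_eq_mul_inv]
  · intro j hj
    have := hs ⟨j, hj⟩
    rw [sum_Iic_eq] at this
    simpa using this

/-! ### Gamma factors and hyperplanes -/

theorem eR_add (a b : ℝ) : eR (a + b) = eR a * eR b := by
  rw [eR, eR, eR, ← Complex.exp_add]
  congr 1
  push_cast
  ring

theorem osc_eq (lam : ℕ → ℝ) (i : ℕ) : osc lam i = eR (∑ j ∈ Finset.range i, lam j) := by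
  induction i with
  | zero => simp [osc, eR]
  | succ i ih => rw [Finset.sum_range_succ, eR_add, ← ih, osc, osc, Finset.prod_range_succ]

theorem eR_eq_one_iff (a : ℝ) : eR a = 1 ↔ ∃ z : ℤ, a = z := by
  rw [eR, Complex.exp_eq_one_iff]
  have h0 : (2 * Real.pi * Complex.I : ℂ) ≠ 0 := by simp [Real.pi_ne_zero]
  constructor
  · rintro ⟨z, hz⟩
    refine ⟨z, ?_⟩
    have : (a : ℂ) = z := mul_left_cancel₀ h0 (by rw [hz]; ring)
    exact_mod_cast this
  · rintro ⟨z, rfl⟩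
    exact ⟨z, by push_cast; ring⟩

theorem isIntIdx_iff {r : ℕ} (lam : Fin r → ℝ) (i : Fin r) :
    isIntIdx lam i ↔ osc (ext0 lam) (i + 1) = 1 := by
  rw [isIntIdx, osc_eq, eR_eq_one_iff, sum_Iic_eq]

/-- The rank of an index counts the orders lost through non-oscillating summations. -/
theorem rankIdx_eq {r : ℕ} (lam : Fin r → ℝ) (i : Fin r) :
    rankIdx lam i = ∑ j ∈ Finset.range (i + 1), dl (osc (ext0 lam) (j + 1)) := by
  classical
  have h1 : rankIdx lam i = ∑ j ∈ Finset.Iic i, dl (osc (ext0 lam) ((j : ℕ) + 1)) := by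
    rw [rankIdx, Nat.card_eq_fintype_card, Fintype.card_subtype, ← Finset.filter_filter,
      Finset.card_filter]
    have : Finset.univ.filter (fun j => j ≤ i) = Finset.Iic i := by ext; simp
    rw [this]
    refine Finset.sum_congr rfl fun j _ => ?_
    simp only [isIntIdx_iff, dl]
  rw [h1, sum_Iic_eq]
  refine Finset.sum_congr rfl fun j hj => ?_
  have hj' : j < r := by have := Finset.mem_range.mp hj; omega
  simp [ext0, hj']

theorem dl_le_one (w : ℂ) : dl w ≤ 1 := by unfold dl; split_ifs <;> simp

theorem sum_dl_le (lam : ℕ → ℝ) (i : ℕ) :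
    ∑ j ∈ Finset.range i, dl (osc lam (j + 1)) ≤ i := by
  refine (Finset.sum_le_card_nsmul _ _ 1 fun j _ => dl_le_one _).trans ?_
  simp

theorem analyticAt_of_differentiable {N : ℕ} {f : (Fin N → ℂ) → ℂ} (hf : Differentiable ℂ f)
    (p : Fin N → ℂ) : AnalyticAt ℂ f p := by
  refine osgood f Set.univ isOpen_univ hf.continuous.continuousOn (fun s _ i => ?_) p trivial
  refine (hf _).comp _ ?_
  rw [differentiableAt_pi]
  intro j
  by_cases hj : j = i
  · subst hj; simp
  · simp [Function.update_of_ne hj]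

theorem gam_differentiable (w : ℂ) : Differentiable ℂ (gam w) := by
  unfold gam
  split_ifs
  · exact Complex.differentiable_one_div_Gamma.comp (differentiable_id.sub_const 1)
  · exact differentiable_const _

/-- The poles of the Gamma function are simple. -/
theorem Gamma_simple_pole (l : ℕ) : ∃ G : ℂ → ℂ, AnalyticAt ℂ G (-l) ∧
    ∀ᶠ z : ℂ in 𝓝 (-(l : ℂ)), z ≠ -l → G z = (z + l) * Gamma z := by
  induction l with
  | zero =>
    refine ⟨fun z => Gamma (z + 1), ?_, Eventually.of_forall fun z hz => ?_⟩
    · have h1 : AnalyticAt ℂ (fun z : ℂ => (Gamma (z + 1))⁻¹) (-((0 : ℕ) : ℂ)) :=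
        (Complex.differentiable_one_div_Gamma.comp (differentiable_id.add_const 1)).analyticAt _
      simpa using h1.fun_inv (by simp)
    · dsimp only
      rw [Complex.Gamma_add_one z (by simpa using hz)]
      simp
  | succ l ih =>
    obtain ⟨G, hG, hGe⟩ := ih
    have hl : (-((l + 1 : ℕ) : ℂ)) + 1 = -l := by push_cast; ring
    have hl0 : (-((l + 1 : ℕ) : ℂ)) ≠ 0 := neg_ne_zero.mpr (by exact_mod_cast l.succ_ne_zero)
    have hsh : AnalyticAt ℂ (fun z : ℂ => z + 1) (-((l + 1 : ℕ) : ℂ)) :=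
      (differentiable_id.add_const (1 : ℂ)).analyticAt _
    refine ⟨fun z => G (z + 1) / z, ?_, ?_⟩
    · exact (AnalyticAt.fun_comp (by rw [hl]; exact hG) hsh).fun_div analyticAt_id hl0
    · have h1 := hsh.continuousAt.eventually (hl.symm ▸ hGe)
      filter_upwards [h1, eventually_ne_nhds hl0] with z hz hz0 hne
      rw [hz (fun h => hne (add_right_cancel h)), Complex.Gamma_add_one z hz0]
      push_cast
      field_simp
      ring

theorem gam_eq_zero {w z : ℂ} (h : gam w z = 0) : w = 1 ∧ ∃ l : ℕ, z - 1 = -l := by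
  unfold gam at h
  split_ifs at h with hw
  · exact ⟨hw, Complex.Gamma_eq_zero_iff _ |>.mp (inv_eq_zero.mp h)⟩
  · exact absurd h one_ne_zero

theorem gam_ne_zero {w z : ℂ} (h : 1 < z.re) : gam w z ≠ 0 := by
  intro h0
  obtain ⟨-, l, hl⟩ := gam_eq_zero h0
  have := congrArg Complex.re hl
  simp at this
  have : (0 : ℝ) ≤ l := l.cast_nonneg
  linarith

section Final
variable {N : ℕ}

/-- The argument of the `i`-th Gamma factor, shifted by one. -/
noncomputable def arg0 (lam : Fin N → ℝ) (i : Fin N) (s : Fin N → ℂ) : ℂ :=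
  ord (ext0 lam) (fun i s => ext0 s i) i s + ext0 s i

theorem arg0_eq (lam : Fin N → ℝ) (i : Fin N) (s : Fin N → ℂ) :
    arg0 lam i s = ∑ j ∈ Finset.Iic i, s j -
      ((∑ j ∈ Finset.range i, dl (osc (ext0 lam) (j + 1)) : ℕ) : ℂ) := by
  rw [arg0, ord, Finset.sum_sub_distrib, sum_Iic_eq, Finset.sum_range_succ]
  push_cast
  ring

theorem arg0_eq' (lam : Fin N → ℝ) (i : Fin N) (hi : osc (ext0 lam) (i + 1) = 1)
    (s : Fin N → ℂ) :
    arg0 lam i s - 1 = ∑ j ∈ Finset.Iic i, s j - (rankIdx lam i : ℂ) := by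
  rw [arg0_eq, rankIdx_eq, Finset.sum_range_succ, dl, if_pos hi]
  push_cast
  ring

theorem arg0_differentiable (lam : Fin N → ℝ) (i : Fin N) : Differentiable ℂ (arg0 lam i) := by
  have : arg0 lam i = _ := funext (arg0_eq lam i)
  rw [this]
  fun_prop

/-- A Gamma factor is singular only on the hyperplanes of `S`. -/
theorem exists_of_gam_eq_zero (lam : Fin N → ℝ) (i : Fin N) (s : Fin N → ℂ)
    (h : gam (osc (ext0 lam) (i + 1)) (arg0 lam i s) = 0) :
    osc (ext0 lam) (i + 1) = 1 ∧ ∃ l k : ℕ, arg0 lam i s - 1 = -l ∧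
      (i : ℕ) + 1 + l = rankIdx lam i + k ∧ s ∈ Hplane N i k := by
  obtain ⟨hw, l, hl⟩ := gam_eq_zero h
  have hr : rankIdx lam i ≤ i + 1 := by rw [rankIdx_eq]; exact sum_dl_le _ _
  refine ⟨hw, l, (i : ℕ) + 1 + l - rankIdx lam i, hl, by omega, ?_⟩
  rw [arg0_eq' lam i hw] at hl
  rw [Hplane, Set.mem_ofPred_eq, Nat.cast_sub (by omega)]
  push_cast
  linear_combination hl

theorem Hplane_unique {i : Fin N} {k k' : ℕ} {s : Fin N → ℂ} (h : s ∈ Hplane N i k)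
    (h' : s ∈ Hplane N i k') : k = k' := by
  rw [Hplane, Set.mem_ofPred_eq] at h h'
  have : (k : ℂ) = k' := by linear_combination h - h'
  exact_mod_cast this

/-- Near any point, one Gamma factor times the equations of the hyperplanes of its family through
that point is analytic. -/
theorem local_factor {r : ℕ} (lam : Fin (r + 1) → ℝ) (p : Fin (r + 1) → ℂ)
    (T : Finset (Fin (r + 1) × ℕ))
    (hT : ∀ i k, (i, k) ∈ T ↔ (S10 lam i k ∧ p ∈ Hplane (r + 1) i k)) (i : Fin (r + 1)) :
    ∃ G : (Fin (r + 1) → ℂ) → ℂ, AnalyticAt ℂ G p ∧ ∀ᶠ s in 𝓝 p,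
      gam (osc (ext0 lam) (i + 1)) (arg0 lam i s) ≠ 0 →
      G s = (∏ q ∈ T with q.1 = i,
        ((∑ j ∈ Finset.Iic q.1, s j) - ((q.1 : ℕ) + 1 : ℂ) + (q.2 : ℂ))) *
        (gam (osc (ext0 lam) (i + 1)) (arg0 lam i s))⁻¹ := by
  have hgd : Differentiable ℂ (fun s => gam (osc (ext0 lam) (i + 1)) (arg0 lam i s)) :=
    (gam_differentiable _).comp (arg0_differentiable lam i)
  by_cases h0 : gam (osc (ext0 lam) (i + 1)) (arg0 lam i p) = 0
  · obtain ⟨hw, l, k, hl, hlk, hk⟩ := exists_of_gam_eq_zero lam i p h0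
    have hTi : T.filter (fun q => q.1 = i) = {(i, k)} := by
      ext ⟨i', k'⟩
      simp only [Finset.mem_filter, Finset.mem_singleton, Prod.mk.injEq]
      constructor
      · rintro ⟨hq, rfl⟩
        exact ⟨rfl, Hplane_unique ((hT _ _).mp hq).2 hk⟩
      · rintro ⟨rfl, rfl⟩
        exact ⟨(hT _ _).mpr ⟨⟨(isIntIdx_iff lam _).mpr hw, by omega⟩, hk⟩, rfl⟩
    obtain ⟨G, hG, hGe⟩ := Gamma_simple_pole l
    have hu : AnalyticAt ℂ (fun s => arg0 lam i s - 1) p :=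
      analyticAt_of_differentiable ((arg0_differentiable lam i).sub_const 1) p
    refine ⟨fun s => G (arg0 lam i s - 1), AnalyticAt.fun_comp (by rw [hl]; exact hG) hu, ?_⟩
    have h1 := hu.continuousAt.eventually (hl.symm ▸ hGe)
    filter_upwards [h1] with s hs hne
    have hgam : gam (osc (ext0 lam) (i + 1)) (arg0 lam i s) = (Gamma (arg0 lam i s - 1))⁻¹ := by
      simp [gam, hw]
    have hne' : arg0 lam i s - 1 ≠ -l := by
      intro h
      apply hne
      rw [hgam, h, Complex.Gamma_neg_nat_eq_zero, inv_zero]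
    rw [hs (by rw [hl]; exact hne'), hgam, inv_inv, hTi, Finset.prod_singleton, arg0_eq' lam i hw]
    have e : ((i : ℕ) : ℂ) + 1 + l = rankIdx lam i + k := by exact_mod_cast hlk
    congr 1
    linear_combination e
  · have hpoly : AnalyticAt ℂ (fun s : Fin (r + 1) → ℂ => ∏ q ∈ T with q.1 = i,
        ((∑ j ∈ Finset.Iic q.1, s j) - ((q.1 : ℕ) + 1 : ℂ) + (q.2 : ℂ))) p :=
      Finset.analyticAt_fun_prod _ fun q _ => analyticAt_of_differentiable (by fun_prop) p
    exact ⟨_, hpoly.mul ((analyticAt_of_differentiable hgd p).inv h0),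
      Eventually.of_forall fun s _ => rfl⟩

end Final

/-- **Theorem 2, case `i_1 ≠ 1`.** If `μ_1 ∉ ℤ` but some `μ_i ∈ ℤ`, the multiple Lerch
zeta function continues meromorphically to `ℂ^r` with at most simple poles along the
members of `S`. -/
theorem stmt_10 (r : ℕ) (lam al : Fin (r + 1) → ℝ)
    (hlam : ∀ i, lam i ∈ Set.Ico (0 : ℝ) 1) (hal : ∀ i, al i ∈ Set.Ico (0 : ℝ) 1)
    (h1 : ¬ isIntIdx lam 0) (hm : ∃ i : Fin (r + 1), isIntIdx lam i) :
    ∃ F : (Fin (r + 1) → ℂ) → ℂ,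
      AnalyticOnNhd ℂ F (polarSet (S10 lam))ᶜ ∧
      (∀ s ∈ Ur (r + 1) 0, F s = multipleLerch lam al s) ∧
      SimplePolesAlong (S10 lam) F := by
  have hal' : ∀ i, ext0 al i ∈ Set.Ico (0 : ℝ) 1 := by
    intro i
    unfold ext0
    split_ifs with h
    · exact hal _
    · simp
  have hx : ∀ i, Differentiable ℂ (fun s : Fin (r + 1) → ℂ => ext0 s i) := by
    intro i
    by_cases h : i < r + 1
    · simp only [ext0, h, dite_true]; fun_prop
    · simp only [ext0, h, dite_false]; fun_prop
  -- `h 0` is the zeta function multiplied by all the Gamma factors `g i`.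
  obtain ⟨h, hd, -, hv⟩ := exists_iter (ext0 lam) (ext0 al) hal' (fun i s => ext0 s i) hx (r + 1)
  set g : Fin (r + 1) → (Fin (r + 1) → ℂ) → ℂ := fun i s =>
    gam (osc (ext0 lam) (i + 1)) (arg0 lam i s) with hg
  have hgd : ∀ i, Differentiable ℂ (g i) := fun i =>
    (gam_differentiable _).comp (arg0_differentiable lam i)
  have hg0 : ∀ s, s ∉ polarSet (S10 lam) → ∀ i, g i s ≠ 0 := by
    intro s hs i h0
    obtain ⟨hw, l, k, -, hlk, hk⟩ := exists_of_gam_eq_zero lam i s h0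
    exact hs ⟨i, k, ⟨(isIntIdx_iff lam i).mpr hw, by omega⟩, hk⟩
  refine ⟨fun s => h 0 s * ∏ i, (g i s)⁻¹, fun s hs => ?_, fun s hs => ?_, fun p T hT => ?_⟩
  · refine (analyticAt_of_differentiable (hd 0) s).mul ?_
    exact Finset.analyticAt_fun_prod _ fun i _ =>
      (analyticAt_of_differentiable (hgd i) s).inv (hg0 s hs i)
  · have hre : ∀ i : Fin (r + 1), 1 < (arg0 lam i s).re := by
      intro i
      have h2 := hs i
      have h3 : ((∑ j ∈ Finset.range i, dl (osc (ext0 lam) (j + 1)) : ℕ) : ℝ) ≤ (i : ℕ) := by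
        exact_mod_cast sum_dl_le _ _
      rw [arg0_eq, Complex.sub_re, Complex.natCast_re]
      simp only [Int.cast_zero, sub_zero] at h2
      linarith
    dsimp only
    rw [hv s (fun j hj => hre ⟨j, hj⟩) 0, ← multipleLerch_eq_iter lam al hal s hs,
      Finset.prod_range, mul_right_comm, ← Finset.prod_mul_distrib]
    rw [Finset.prod_eq_one, one_mul]
    intro i _
    exact mul_inv_cancel₀ (gam_ne_zero (hre i))
  · choose G hG hGe using local_factor lam p T hT
    have han : AnalyticAt ℂ (fun s => h 0 s * ∏ i, G i s) p :=
      (analyticAt_of_differentiable (hd 0) p).mul (Finset.analyticAt_fun_prod _ fun i _ => hG i)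
    obtain ⟨V, hV, hVo, hpV⟩ :=
      eventually_nhds_iff.mp (han.eventually_analyticAt.and (eventually_all.mpr hGe))
    refine ⟨V, _, hVo, hpV, fun s hs => (hV s hs).1, fun s hs hsp => ?_⟩
    dsimp only
    -- At most one hyperplane of each family passes through `p`: match it with its Gamma factor.
    rw [← Finset.prod_fiberwise T Prod.fst, mul_left_comm, ← Finset.prod_mul_distrib]
    congr 1
    exact Finset.prod_congr rfl fun i _ => (hV s hs).2 i (hg0 s hsp i)
end

section
/- Let r ≥ 1 be an integer and α_1,…,α_r ∈ [0,1). Let S be the collection of hyperplanes consisting of H_{1,0} together with H_{i,k} for all 2 ≤ i ≤ r and integers k ≥ 0. Then there exists a function F analytic on ℂ^r ∖ ⋃_{H∈S} H such that F(s) = ζ_r(s_1,…,s_r; α_1,…,α_r) for all s ∈ U_r, and all poles of F along members of S are at most simple: for every point p ∈ ℂ^r, the function s ↦ (∏_{H_{i,k}∈S, p∈H_{i,k}} (s_1+⋯+s_i−i+k)) · F(s) extends to a function analytic on a neighborhood of p. -/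
open Complex

/-- The collection `S` of possible polar hyperplanes of the multiple Hurwitz zeta
function: `H_{1,0}` together with `H_{i,k}` for `2 ≤ i ≤ r` and `k ≥ 0`
(0-based: `i = 0, k = 0`, or `i ≥ 1`). -/
def SH {r : ℕ} (i : Fin r) (k : ℕ) : Prop := ((i : ℕ) = 0 ∧ k = 0) ∨ 1 ≤ (i : ℕ)

/-!
Write `β = α₂` (or `β = 1` in depth one). For fixed `n₂ > ⋯ > n_r` the differences
`(n₁ - 1 + β)^{1-s₁} - (n₁ + β)^{1-s₁}` telescope over `n₁ > n₂` to `(n₂ + β)^{1-s₁}`. Hence the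
sum of these differences against the remaining factors is the depth `r - 1` zeta function at
`(s₁ + s₂ - 1, s₃, …)`, or the constant `1` in depth one (`bdry`, `telescope`). On the other hand,
expanding each difference in powers of `n₁ + α₁` gives
`(s₁ - 1) (n₁ + α₁)^{-s₁} + ∑_{1 ≤ k ≤ L} c_k(s₁) (n₁ + α₁)^{-s₁-k}` up to
`O((n₁ + α₁)^{-s₁-L-1})`. Comparing the two (`recursion`) expresses `(s₁ - 1) ζ(s)` through the
depth `r - 1` function, the values `ζ(s₁ + k, s₂, …)` with `1 ≤ k ≤ L`, and a remainder sum.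

The remainder converges and is analytic on
`U_r(L + 1) = {Re(s₁ + ⋯ + s_i) > i - L - 1 for all i}`. Convergence is an Abel summation
argument (`abel_nonneg`, `summable_DTuple`). Analyticity in several variables is obtained by
reading a bounded family of holomorphic functions of one variable as one holomorphic function with
values in the Banach algebra `ℓ^∞` (`analyticAt_family`, `analyticAt_tsum_prod`).

So a double induction, on the depth and on `K`, continues
`(s₁ - 1) ∏_{i ≥ 2, k < K} (s₁ + ⋯ + s_i - i + k) ζ(s)` analytically to `U_r(K)` (`cont_step`,
`cont_all`). No further poles in `s₁` alone occur, since `c_k(s₁)` vanishes at `s₁ = 1 - k`, the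
pole of `ζ(s₁ + k, …)` (`cf_factor`). The regions `U_r(K)` are convex, increase to `ℂ^r`, and each
meets only finitely many members of `S`, so the identity theorem glues the continuations (`main`).
-/

/-! ### Analyticity of absolutely convergent sums of products -/

/-- A family of holomorphic functions on a disc, bounded by `1` uniformly in the family, is a
holomorphic map of the disc into `ℓ^∞(ι)`: by Cauchy's estimates the sequences of Taylor
coefficients lie in `ℓ^∞(ι)` and decay geometrically. The space `ℓ^∞(ι)` is encoded as
`BoundedContinuousFunction ι ℂ` for the discrete topology, which is a Banach algebra. -/
theorem analyticAt_family {ι : Type*} [TopologicalSpace ι] [DiscreteTopology ι]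
    (f : ι → ℂ → ℂ) (p : ℂ) (R : ℝ) (hR : 0 < R)
    (hd : ∀ n, DifferentiableOn ℂ (f n) (Metric.ball p R))
    (hb : ∀ n, ∀ z ∈ Metric.ball p R, ‖f n z‖ ≤ 1) :
    ∃ Ψ : ℂ → BoundedContinuousFunction ι ℂ, AnalyticAt ℂ Ψ p ∧
      ∀ z ∈ Metric.ball p R, ∀ n, Ψ z n = f n z := by
  classical
  -- Cauchy's formula is used on a circle strictly inside the disc.
  let ρ : NNReal := ⟨R / 2, by positivity⟩
  have hρ : 0 < ρ := show (0 : ℝ) < R / 2 by positivity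
  have hρR : (ρ : ℝ) < R := show R / 2 < R by linarith
  have hsub : Metric.closedBall p (ρ : ℝ) ⊆ Metric.ball p R :=
    Metric.closedBall_subset_ball hρR
  have hps : ∀ n, HasFPowerSeriesOnBall (f n) (cauchyPowerSeries (f n) p ρ) p ρ := fun n =>
    ((hd n).mono hsub).hasFPowerSeriesOnBall hρ
  let c : ℕ → ι → ℂ := fun k n => (cauchyPowerSeries (f n) p ρ).coeff k
  have hc : ∀ k n, ‖c k n‖ ≤ ((ρ : ℝ)⁻¹) ^ k := by
    intro k n
    have h1 := norm_cauchyPowerSeries_le (f n) p ρ k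
    have h2 : ‖c k n‖ = ‖cauchyPowerSeries (f n) p ρ k‖ := by
      simp [c, FormalMultilinearSeries.norm_apply_eq_norm_coef]
    rw [h2]
    refine h1.trans ?_
    rw [abs_of_pos (show (0 : ℝ) < ρ from hρ)]
    have h3 : ∫ θ : ℝ in 0..2 * Real.pi, ‖f n (circleMap p ρ θ)‖ ≤ 2 * Real.pi := by
      have h4 : ‖∫ θ : ℝ in 0..2 * Real.pi, ‖f n (circleMap p ρ θ)‖‖ ≤
          1 * |2 * Real.pi - 0| := by
        apply intervalIntegral.norm_integral_le_of_norm_le_const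
        intro θ _
        rw [norm_norm]
        exact hb n _ (hsub (circleMap_mem_closedBall p hρ.le θ))
      rw [sub_zero, abs_of_pos Real.two_pi_pos, one_mul] at h4
      exact (le_abs_self _).trans h4
    have h5 : (2 * Real.pi)⁻¹ * ∫ θ : ℝ in 0..2 * Real.pi, ‖f n (circleMap p ρ θ)‖ ≤ 1 := by
      rw [inv_mul_le_iff₀ Real.two_pi_pos, mul_one]; exact h3
    have h6 : 0 ≤ ((ρ : ℝ)⁻¹) ^ k := by positivity
    nlinarith
  let A : ℕ → BoundedContinuousFunction ι ℂ := fun k =>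
    BoundedContinuousFunction.ofNormedAddCommGroup (c k) continuous_of_discreteTopology _ (hc k)
  have hA : ∀ k, ‖A k‖ ≤ ((ρ : ℝ)⁻¹) ^ k := fun k =>
    BoundedContinuousFunction.norm_ofNormedAddCommGroup_le _ (by positivity) (hc k)
  let Ψ : ℂ → BoundedContinuousFunction ι ℂ := fun z =>
    if hz : z ∈ Metric.ball p R then
      BoundedContinuousFunction.ofNormedAddCommGroup (fun n => f n z)
        continuous_of_discreteTopology 1 (fun n => hb n z hz)
    else 0
  have hΨ : ∀ z ∈ Metric.ball p R, ∀ n, Ψ z n = f n z := by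
    intro z hz n
    simp only [Ψ, dif_pos hz]
    rfl
  refine ⟨Ψ, ?_, hΨ⟩
  let q : FormalMultilinearSeries ℂ ℂ (BoundedContinuousFunction ι ℂ) :=
    fun k => ContinuousMultilinearMap.mkPiRing ℂ (Fin k) (A k)
  refine ⟨q, hasFPowerSeriesAt_iff.2 ?_⟩
  have hev : ∀ᶠ z : ℂ in nhds 0, z ∈ Metric.ball (0 : ℂ) ρ := Metric.ball_mem_nhds _ hρ
  filter_upwards [hev] with z hz
  have hz' : ‖z‖ < ρ := by simpa using hz
  have hzR : p + z ∈ Metric.ball p R := by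
    simp; linarith
  have hcoef : ∀ k, q.coeff k = A k := by
    intro k
    simp [FormalMultilinearSeries.coeff, q]
  simp only [hcoef]
  have hs : Summable (fun k => z ^ k • A k) := by
    refine Summable.of_norm_bounded (g := fun k => (‖z‖ * (ρ : ℝ)⁻¹) ^ k) ?_ ?_
    · apply summable_geometric_of_lt_one (by positivity)
      rw [← div_eq_mul_inv, div_lt_one (show (0 : ℝ) < ρ from hρ)]; exact hz'
    · intro k
      rw [norm_smul, norm_pow, mul_pow]
      gcongr
      exact hA k
  suffices hval : Ψ (p + z) = ∑' k, z ^ k • A k by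
    rw [hval]; exact hs.hasSum
  ext n
  rw [hΨ _ hzR]
  have h1 := (hs.hasSum).map (BoundedContinuousFunction.evalCLM ℂ n :
    BoundedContinuousFunction ι ℂ →L[ℂ] ℂ) (by fun_prop)
  have h2 := (hps n).hasSum (y := z) (by simpa [← ofReal_norm, ENNReal.ofReal_lt_coe_iff] using hz')
  have h3 : (⇑(BoundedContinuousFunction.evalCLM ℂ n :
    BoundedContinuousFunction ι ℂ →L[ℂ] ℂ) ∘ fun k => z ^ k • A k) =
      fun k => (cauchyPowerSeries (f n) p ρ k) fun _ => z := by
    funext k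
    simp [A, c]
  rw [h3] at h1
  exact h2.unique h1

/-- Weierstrass `M`-test in several variables for terms that are products of functions of one
variable: the sum is a continuous linear functional, with weights `∏ i, M n i`, applied to a
product in `ℓ^∞` of the maps of `analyticAt_family`. -/
theorem analyticAt_tsum_prod {ι : Type*} {r : ℕ} (p : Fin r → ℂ) (R : ℝ) (hR : 0 < R)
    (h : ι → Fin r → ℂ → ℂ) (M : ι → Fin r → ℝ) (hM : ∀ n i, 0 < M n i)
    (hd : ∀ n i, DifferentiableOn ℂ (h n i) (Metric.ball (p i) R))
    (hb : ∀ n i, ∀ z ∈ Metric.ball (p i) R, ‖h n i z‖ ≤ M n i)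
    (hs : Summable fun n => ∏ i, M n i) :
    AnalyticAt ℂ (fun s : Fin r → ℂ => ∑' n, ∏ i, h n i (s i)) p := by
  let _ : TopologicalSpace ι := ⊥
  have : DiscreteTopology ι := ⟨rfl⟩
  have key : ∀ i, ∃ Ψ : ℂ → BoundedContinuousFunction ι ℂ, AnalyticAt ℂ Ψ (p i) ∧
      ∀ z ∈ Metric.ball (p i) R, ∀ n, Ψ z n = h n i z / M n i := by
    intro i
    refine analyticAt_family (fun n z => h n i z / M n i) (p i) R hR
      (fun n => (hd n i).div_const _) ?_
    intro n z hz
    rw [norm_div, Complex.norm_real, Real.norm_of_nonneg (hM n i).le, div_le_one (hM n i)]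
    exact hb n i z hz
  choose Ψ hΨa hΨ using key
  have hsum : ∀ g : BoundedContinuousFunction ι ℂ,
      Summable fun n => ((∏ i, M n i : ℝ) : ℂ) * g n := by
    intro g
    refine Summable.of_norm_bounded (g := fun n => (∏ i, M n i) * ‖g‖) (hs.mul_right _) ?_
    intro n
    rw [norm_mul, Complex.norm_real,
      Real.norm_of_nonneg (Finset.prod_nonneg fun i _ => (hM n i).le)]
    exact mul_le_mul_of_nonneg_left (g.norm_coe_le_norm n)
      (Finset.prod_nonneg fun i _ => (hM n i).le)
  let L₀ : BoundedContinuousFunction ι ℂ →ₗ[ℂ] ℂ :=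
    { toFun := fun g => ∑' n, ((∏ i, M n i : ℝ) : ℂ) * g n
      map_add' := fun g g' => by
        rw [← (hsum g).tsum_add (hsum g')]
        simp [mul_add]
      map_smul' := fun c g => by
        simp only [RingHom.id_apply, smul_eq_mul, ← tsum_mul_left]
        congr 1; ext n; simp; ring }
  let L : BoundedContinuousFunction ι ℂ →L[ℂ] ℂ := L₀.mkContinuous (∑' n, ∏ i, M n i) (by
    intro g
    show ‖∑' n, ((∏ i, M n i : ℝ) : ℂ) * g n‖ ≤ _
    rw [← tsum_mul_right]
    refine tsum_of_norm_bounded (hs.mul_right _).hasSum ?_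
    intro n
    rw [norm_mul, Complex.norm_real,
      Real.norm_of_nonneg (Finset.prod_nonneg fun i _ => (hM n i).le)]
    exact mul_le_mul_of_nonneg_left (g.norm_coe_le_norm n)
      (Finset.prod_nonneg fun i _ => (hM n i).le))
  have hprod : AnalyticAt ℂ (fun s : Fin r → ℂ => ∏ i, Ψ i (s i)) p := by
    refine Finset.analyticAt_fun_prod _ fun i _ => ?_
    exact AnalyticAt.fun_comp (f := fun s : Fin r → ℂ => s i) (hΨa i)
      ((ContinuousLinearMap.proj (R := ℂ) (φ := fun _ : Fin r => ℂ) i).analyticAt p)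
  have hL : AnalyticAt ℂ (fun s : Fin r → ℂ => L (∏ i, Ψ i (s i))) p :=
    (L.analyticAt _).fun_comp hprod
  refine hL.congr ?_
  filter_upwards [Metric.ball_mem_nhds p hR] with s hsb
  show ∑' n, ((∏ i, M n i : ℝ) : ℂ) * (∏ i, Ψ i (s i)) n = _
  congr 1
  ext n
  have hsi : ∀ i, s i ∈ Metric.ball (p i) R := fun i =>
    Metric.mem_ball.2 ((dist_le_pi_dist s p i).trans_lt (Metric.mem_ball.1 hsb))
  have h1 : (∏ i, Ψ i (s i)) n = ∏ i, (h n i (s i) / M n i) := by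
    rw [show (∏ i, Ψ i (s i)) n = ∏ i, (Ψ i (s i) n) from ?_]
    · exact Finset.prod_congr rfl fun i _ => hΨ i _ (hsi i) n
    · simp
  rw [h1]
  push_cast
  rw [← Finset.prod_mul_distrib]
  refine Finset.prod_congr rfl fun i _ => ?_
  have : (M n i : ℂ) ≠ 0 := by exact_mod_cast (hM n i).ne'
  field_simp

namespace MHZ

/-! ### Binomial expansion of complex powers with remainder -/

theorem rpowC_norm (b : ℝ) (z : ℂ) : ‖rpowC b z‖ = Real.exp (z.re * Real.log b) := by
  rw [rpowC, Complex.norm_exp, Complex.re_mul_ofReal]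

theorem rpowC_add (b : ℝ) (z w : ℂ) : rpowC b (z + w) = rpowC b z * rpowC b w := by
  rw [rpowC, rpowC, rpowC, ← Complex.exp_add, add_mul]

theorem rpowC_one_arg {b : ℝ} (hb : 0 < b) : rpowC b 1 = b := by
  rw [rpowC, one_mul, ← Complex.ofReal_exp, Real.exp_log hb]

theorem rpowC_differentiable (b : ℝ) : Differentiable ℂ (rpowC b) := by
  unfold rpowC; fun_prop

/-- The generalized binomial coefficient `w(w-1)⋯(w-j+1)/j!`. -/
noncomputable def bc (w : ℂ) (j : ℕ) : ℂ :=
  (∏ i ∈ Finset.range j, (w - i)) / (Nat.factorial j)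

theorem bc_zero (w : ℂ) : bc w 0 = 1 := by simp [bc]

theorem bc_succ_mul (w : ℂ) (j : ℕ) : bc w (j + 1) * (j + 1) = w * bc (w - 1) j := by
  have h : ∏ i ∈ Finset.range (j + 1), (w - (i : ℕ)) =
      w * ∏ i ∈ Finset.range j, (w - 1 - (i : ℕ)) := by
    rw [Finset.prod_range_succ', mul_comm]
    simp only [Nat.cast_zero, sub_zero, Nat.cast_add, Nat.cast_one]
    congr 1
    exact Finset.prod_congr rfl fun i _ => by ring
  have h1 : ((Nat.factorial j : ℕ) : ℂ) ≠ 0 := by exact_mod_cast Nat.factorial_ne_zero j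
  have h2 : (j : ℂ) + 1 ≠ 0 := by exact_mod_cast Nat.succ_ne_zero j
  rw [bc, bc, h, Nat.factorial_succ]
  push_cast
  field_simp

theorem bc_differentiable (j : ℕ) : Differentiable ℂ (fun w => bc w j) := by
  unfold bc; fun_prop

/-- The remainder of the binomial expansion of `(x+t)^w` in powers of `t` after `K` terms. -/
noncomputable def tRem (K : ℕ) (w : ℂ) (x t : ℝ) : ℂ :=
  rpowC (x + t) w - ∑ j ∈ Finset.range K, bc w j * (t : ℂ) ^ j * rpowC x (w - j)

theorem rpowC_hasDerivAt (w : ℂ) (x t : ℝ) (h : 0 < x + t) :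
    HasDerivAt (fun u : ℝ => rpowC (x + u) w) (w * rpowC (x + t) (w - 1)) t := by
  have h1 : HasDerivAt (fun u : ℝ => Real.log (x + u)) (x + t)⁻¹ t := by
    simpa using ((hasDerivAt_id t).const_add x).log h.ne'
  have h2 := (h1.ofReal_comp.const_mul w).cexp
  refine HasDerivAt.congr_deriv (f := fun u : ℝ => rpowC (x + u) w) h2 ?_
  have h3 : rpowC (x + t) w = rpowC (x + t) (w - 1) * ((x + t : ℝ) : ℂ) := by
    rw [← rpowC_one_arg h, ← rpowC_add, sub_add_cancel]
  have h4 : ((x + t : ℝ) : ℂ) ≠ 0 := by exact_mod_cast h.ne'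
  change rpowC (x + t) w * (w * (((x + t)⁻¹ : ℝ) : ℂ)) = _
  rw [h3, Complex.ofReal_inv]
  field_simp

theorem tRem_zero_right (K : ℕ) (w : ℂ) (x : ℝ) : tRem (K + 1) w x 0 = 0 := by
  rw [tRem, Finset.sum_range_succ']
  simp [bc_zero]

/-- Differentiation in `t` lowers the order of the remainder by one; this drives the induction
in `tRem_bound`. -/
theorem tRem_hasDerivAt (K : ℕ) (w : ℂ) (x t : ℝ) (h : 0 < x + t) :
    HasDerivAt (fun u : ℝ => tRem (K + 1) w x u) (w * tRem K (w - 1) x t) t := by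
  have h1 := rpowC_hasDerivAt w x t h
  have h2 : HasDerivAt
      (fun u : ℝ => ∑ j ∈ Finset.range (K + 1), bc w j * (u : ℂ) ^ j * rpowC x (w - j))
      (∑ j ∈ Finset.range (K + 1), bc w j * (j * (t : ℂ) ^ (j - 1)) * rpowC x (w - j)) t := by
    refine HasDerivAt.fun_sum fun j _ => ?_
    have h3 : HasDerivAt (fun u : ℝ => (u : ℂ) ^ j) (j * (t : ℂ) ^ (j - 1)) t := by
      simpa using (hasDerivAt_pow j (t : ℂ)).comp_ofReal
    exact (h3.const_mul _).mul_const _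
  refine (h1.sub h2).congr_deriv ?_
  rw [Finset.sum_range_succ', tRem, mul_sub, Finset.mul_sum]
  simp only [Nat.cast_zero, zero_mul, mul_zero, add_zero]
  congr 1
  refine Finset.sum_congr rfl fun j _ => ?_
  have h4 := bc_succ_mul w j
  simp only [Nat.add_sub_cancel]
  push_cast
  rw [show w - 1 - (j : ℂ) = w - (j + 1) by ring]
  linear_combination ((t : ℂ) ^ j * rpowC x (w - (j + 1))) * h4

/-- The remainder of order `K` is `O(x^{Re w - K})`, locally uniformly in `w`. The condition
`x / 3 ≤ x + t` keeps the whole segment from `x` to `x + t` comparable to `x`. -/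
theorem tRem_bound (K : ℕ) : ∀ M : ℝ, ∃ C : ℝ, 0 < C ∧ ∀ w : ℂ, ‖w‖ ≤ M → ∀ x t : ℝ, 1 ≤ x →
    |t| ≤ 2 → x / 3 ≤ x + t → ‖tRem K w x t‖ ≤ C * Real.exp ((w.re - K) * Real.log x) := by
  induction K with
  | zero =>
    intro M
    refine ⟨Real.exp (|M| * Real.log 3), Real.exp_pos _, ?_⟩
    intro w hw x t hx ht hxt
    have hx0 : 0 < x := by linarith
    have hxt0 : 0 < x + t := by linarith
    simp only [tRem, Finset.range_zero, Finset.sum_empty, sub_zero, rpowC_norm, Nat.cast_zero]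
    rw [← Real.exp_add, Real.exp_le_exp]
    have h1 : |Real.log (x + t) - Real.log x| ≤ Real.log 3 := by
      rw [abs_le]
      constructor
      · have := Real.log_le_log (by positivity) hxt
        rw [Real.log_div hx0.ne' (by norm_num)] at this
        linarith
      · have h2 : x + t ≤ 3 * x := by have := (abs_le.1 ht).2; linarith
        have := Real.log_le_log hxt0 h2
        rw [Real.log_mul (by norm_num) hx0.ne'] at this
        linarith
    have h2 : w.re * (Real.log (x + t) - Real.log x) ≤ |M| * Real.log 3 := by
      refine (le_abs_self _).trans ?_
      rw [abs_mul]
      exact mul_le_mul (((Complex.abs_re_le_norm w).trans hw).trans (le_abs_self _)) h1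
        (abs_nonneg _) (abs_nonneg _)
    linarith
  | succ K ih =>
    intro M
    obtain ⟨C, hC, hb⟩ := ih (M + 1)
    refine ⟨(|M| + 1) * C * 2, by positivity, ?_⟩
    intro w hw x t hx ht hxt
    have hx0 : 0 < x := by linarith
    have hseg : ∀ u ∈ Set.uIcc 0 t, |u| ≤ 2 ∧ x / 3 ≤ x + u := by
      intro u hu
      rw [Set.mem_uIcc] at hu
      rw [abs_le] at ht ⊢
      rcases hu with hu | hu
      · exact ⟨⟨by linarith, by linarith⟩, by linarith⟩
      · exact ⟨⟨by linarith, by linarith⟩, by linarith⟩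
    have hmv := Convex.norm_image_sub_le_of_norm_hasDerivWithin_le
      (f := fun u : ℝ => tRem (K + 1) w x u) (f' := fun u => w * tRem K (w - 1) x u)
      (s := Set.uIcc 0 t) (x := 0) (y := t)
      (C := (|M| + 1) * C * Real.exp ((w.re - (K + 1)) * Real.log x))
      (fun u hu => (tRem_hasDerivAt K w x u (by have := (hseg u hu).2; linarith)).hasDerivWithinAt)
      (fun u hu => by
        rw [norm_mul, mul_assoc]
        have h1 := hb (w - 1) ((norm_sub_le _ _).trans (by simpa using hw)) x u hx
          (hseg u hu).1 (hseg u hu).2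
        have h2 : (w - 1).re - (K : ℝ) = w.re - (K + 1) := by simp; ring
        rw [h2] at h1
        exact mul_le_mul ((hw.trans (le_abs_self _)).trans (by linarith)) h1 (norm_nonneg _)
          (by positivity))
      (convex_uIcc 0 t) Set.left_mem_uIcc Set.right_mem_uIcc
    simp only [tRem_zero_right, sub_zero] at hmv
    refine hmv.trans ?_
    rw [Real.norm_eq_abs]
    push_cast
    have : 0 ≤ (|M| + 1) * C * Real.exp ((w.re - (K + 1)) * Real.log x) := by positivity
    nlinarith

theorem tRem_differentiable (K : ℕ) (x t : ℝ) : Differentiable ℂ (fun w => tRem K w x t) := by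
  unfold tRem rpowC bc; fun_prop

/-! ### Convergence of the multiple sums -/

theorem sum_Iic_succ {r : ℕ} {M : Type*} [AddCommMonoid M] (f : Fin (r + 1) → M) (i : Fin r) :
    ∑ j ∈ Finset.Iic i.succ, f j = f 0 + ∑ j ∈ Finset.Iic i, f j.succ := by
  have h : ∀ (n : ℕ) (g : Fin n → M) (k : Fin n),
      ∑ j ∈ Finset.Iic k, g j = ∑ j, if j ≤ k then g j else 0 := by
    intro n g k
    rw [← Finset.sum_filter]
    congr 1; ext j; simp
  rw [h, h, Fin.sum_univ_succ]
  simp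

theorem sum_Iic_zero {r : ℕ} {M : Type*} [AddCommMonoid M] (f : Fin (r + 1) → M) :
    ∑ j ∈ Finset.Iic (0 : Fin (r + 1)), f j = f 0 := by
  have : Finset.Iic (0 : Fin (r + 1)) = {0} := by ext j; simp
  rw [this, Finset.sum_singleton]

/-- Abel summation: if all partial sums `c + σ₁ + ⋯ + σᵢ` are nonnegative and
`b ≥ y₁ ≥ y₂ ≥ ⋯ ≥ 0`, then `c b + σ₁ y₁ + ⋯ + σᵣ yᵣ ≥ 0`. -/
theorem abel_nonneg : ∀ (r : ℕ) (σ y : Fin r → ℝ) (c b : ℝ), 0 ≤ c → Antitone y →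
    (∀ i, 0 ≤ y i) → (∀ i, y i ≤ b) → (∀ i, 0 ≤ c + ∑ j ∈ Finset.Iic i, σ j) → 0 ≤ b →
    0 ≤ c * b + ∑ i, σ i * y i := by
  intro r
  induction r with
  | zero => intro σ y c b hc _ _ _ _ hb; simp; positivity
  | succ r ih =>
    intro σ y c b hc hy hy0 hyb hσ hb
    have h0 : 0 ≤ c + σ 0 := by simpa [sum_Iic_zero] using hσ 0
    have := ih (fun i => σ i.succ) (fun i => y i.succ) (c + σ 0) (y 0) h0
      (fun i j hij => hy (Fin.succ_le_succ_iff.2 hij)) (fun i => hy0 _)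
      (fun i => hy (Fin.zero_le _)) (fun i => by
        have := hσ i.succ
        rw [sum_Iic_succ] at this
        linarith) (hy0 0)
    rw [Fin.sum_univ_succ]
    have h1 : c * y 0 ≤ c * b := mul_le_mul_of_nonneg_left (hyb 0) hc
    linarith

theorem summable_pi : ∀ (r : ℕ) (f : ℕ → ℝ), (∀ n, 0 ≤ f n) → Summable f →
    Summable fun n : Fin r → ℕ => ∏ i, f (n i) := by
  intro r f h0 hf
  induction r with
  | zero => exact Summable.of_finite
  | succ r ih =>
    rw [← (Fin.consEquiv (fun _ : Fin (r + 1) => ℕ)).summable_iff]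
    have := hf.mul_of_nonneg ih h0 (fun n => Finset.prod_nonneg fun i _ => h0 _)
    refine this.congr fun n => ?_
    simp [Fin.consEquiv, Fin.prod_univ_succ]

/-- Convergence of the sum over decreasing tuples when the exponents satisfy
`σ₁ + ⋯ + σᵢ ≥ i (1 + ε)` for all `i`. By Abel summation, applied to the decreasing sequence of
the logarithms `log (nᵢ + αᵢ)`, the general term is at most `∏ nᵢ^{-(1+ε)}`. -/
theorem summable_DTuple (r : ℕ) (al : Fin r → ℝ) (hal : ∀ i, al i ∈ Set.Ico (0 : ℝ) 1)
    (σ : Fin r → ℝ) (ε : ℝ) (hε : 0 < ε)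
    (hσ : ∀ i : Fin r, ((i : ℕ) + 1 : ℝ) * (1 + ε) ≤ ∑ j ∈ Finset.Iic i, σ j) :
    Summable fun n : DTuple r => ∏ i, Real.exp (-(σ i) * Real.log ((n.1 i : ℝ) + al i)) := by
  have h1 : Summable fun n : Fin r → ℕ => ∏ i, ((n i : ℝ) ^ (1 + ε))⁻¹ :=
    summable_pi r (fun n => ((n : ℝ) ^ (1 + ε))⁻¹) (fun n => by positivity)
      (Real.summable_nat_rpow_inv.2 (by linarith))
  have h2 : Summable fun n : DTuple r => ∏ i, ((n.1 i : ℝ) ^ (1 + ε))⁻¹ :=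
    h1.comp_injective (i := fun n : DTuple r => n.1) Subtype.val_injective
  refine Summable.of_nonneg_of_le (fun n => Finset.prod_nonneg fun i _ => (Real.exp_pos _).le)
    (fun n => ?_) h2
  have hn1 : ∀ i, (1 : ℝ) ≤ n.1 i := fun i => by exact_mod_cast n.2.2 i
  have hx1 : ∀ i, (1 : ℝ) ≤ (n.1 i : ℝ) + al i := fun i => by
    have := hn1 i; have := (hal i).1; linarith
  have hanti : Antitone fun i => Real.log ((n.1 i : ℝ) + al i) := by
    intro i j hij
    rcases hij.eq_or_lt with rfl | hij
    · exact le_rfl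
    · refine Real.log_le_log (by have := hx1 j; linarith) ?_
      have h3 : n.1 j + 1 ≤ n.1 i := n.2.1 hij
      have h4 : (n.1 j : ℝ) + 1 ≤ n.1 i := by exact_mod_cast h3
      have := (hal i).1; have := (hal j).2; linarith
  have hA := abel_nonneg r (fun i => σ i - (1 + ε)) (fun i => Real.log ((n.1 i : ℝ) + al i)) 0
    (∑ i, Real.log ((n.1 i : ℝ) + al i)) le_rfl hanti (fun i => Real.log_nonneg (hx1 i))
    (fun i => Finset.single_le_sum (f := fun i => Real.log ((n.1 i : ℝ) + al i))
      (fun j _ => Real.log_nonneg (hx1 j)) (Finset.mem_univ i))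
    (fun i => by
      have := hσ i
      rw [Finset.sum_sub_distrib, Finset.sum_const, Fin.card_Iic, nsmul_eq_mul]
      push_cast
      linarith)
    (Finset.sum_nonneg fun i _ => Real.log_nonneg (hx1 i))
  calc ∏ i, Real.exp (-(σ i) * Real.log ((n.1 i : ℝ) + al i))
      ≤ ∏ i, Real.exp (-(1 + ε) * Real.log ((n.1 i : ℝ) + al i)) := by
        rw [← Real.exp_sum, ← Real.exp_sum, Real.exp_le_exp]
        simp only [sub_mul, Finset.sum_sub_distrib, zero_mul, zero_add] at hA
        simp only [neg_mul, Finset.sum_neg_distrib]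
        linarith
    _ ≤ _ := by
        refine Finset.prod_le_prod (fun i _ => (Real.exp_pos _).le) fun i _ => ?_
        have hn0 : (0 : ℝ) < n.1 i := by have := hn1 i; linarith
        rw [← Real.rpow_neg hn0.le, Real.rpow_def_of_pos hn0, Real.exp_le_exp]
        have := Real.log_le_log hn0 (show (n.1 i : ℝ) ≤ (n.1 i : ℝ) + al i by
          have := (hal i).1; linarith)
        nlinarith

/-! ### Sums with a general first factor -/

/-- The first entry of a tuple, and `0` for the empty tuple, so that `(n, m)` is a decreasing
tuple of positive integers exactly when `bnd m < n`. -/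
def bnd : {r : ℕ} → DTuple r → ℕ
  | 0, _ => 0
  | _ + 1, m => m.1 0

/-- The shift `β` used for telescoping in the first variable: the second shift `α₂`, or `1` in
depth one. With this choice the boundary term at `n₁ = n₂ + 1` is a power of `n₂ + α₂`, which
merges with the second factor, and in depth one it equals `1`. -/
def bet : {r : ℕ} → (Fin (r + 1) → ℝ) → ℝ
  | 0, _ => 1
  | _ + 1, al => al 1

/-- The factors of the general term of the zeta function other than the first. -/
noncomputable def tailProd {r : ℕ} (al : Fin (r + 1) → ℝ) (s : Fin (r + 1) → ℂ)
    (n : Fin (r + 1) → ℕ) : ℂ :=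
  ∏ i : Fin r, rpowC ((n i.succ : ℝ) + al i.succ) (-(s i.succ))

/-- The multiple zeta sum with its first factor `(n₁ + α₁)^{-s₁}` replaced by `a s₁ n₁`. -/
noncomputable def fs {r : ℕ} (al : Fin (r + 1) → ℝ) (a : ℂ → ℕ → ℂ)
    (s : Fin (r + 1) → ℂ) : ℂ :=
  ∑' n : DTuple (r + 1), a (s 0) (n.1 0) * tailProd al s n.1

theorem multipleHurwitz_eq_fs {r : ℕ} (al : Fin (r + 1) → ℝ) (s : Fin (r + 1) → ℂ) :
    multipleHurwitz al s = fs al (fun w n => rpowC ((n : ℝ) + al 0) (-w)) s := by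
  unfold multipleHurwitz fs hzTerm tailProd
  congr 1; ext n
  rw [Fin.prod_univ_succ]

/-- The first factor `a w n` is entire in `w` and `O((n + α₁)^{-Re w - K})` locally uniformly
in `w`. The bound is required only for `n ≥ 1` with `n - 1 + β ≥ 1`; this holds for the first
entry of every decreasing tuple, see `valid`. -/
def Adm {r : ℕ} (al : Fin (r + 1) → ℝ) (K : ℕ) (a : ℂ → ℕ → ℂ) : Prop :=
  (∀ n, Differentiable ℂ fun w => a w n) ∧
  ∀ M : ℝ, ∃ C : ℝ, 0 < C ∧ ∀ w : ℂ, ‖w‖ ≤ M → ∀ n : ℕ, 1 ≤ n → 1 ≤ (n : ℝ) - 1 + bet al →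
    ‖a w n‖ ≤ C * Real.exp ((-w.re - K) * Real.log ((n : ℝ) + al 0))

theorem bet_mem {r : ℕ} (al : Fin (r + 1) → ℝ) (hal : ∀ i, al i ∈ Set.Ico (0 : ℝ) 1) :
    0 ≤ bet al ∧ bet al ≤ 1 := by
  cases r with
  | zero => simp [bet]
  | succ r => exact ⟨(hal 1).1, (hal 1).2.le⟩

theorem valid {r : ℕ} (al : Fin (r + 1) → ℝ) (hal : ∀ i, al i ∈ Set.Ico (0 : ℝ) 1)
    (n : DTuple (r + 1)) : 1 ≤ (n.1 0 : ℝ) - 1 + bet al := by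
  cases r with
  | zero =>
    have : (1 : ℝ) ≤ n.1 0 := by exact_mod_cast n.2.2 0
    simp only [bet]; linarith
  | succ r =>
    have h1 : n.1 1 < n.1 0 := n.2.1 (by simp)
    have h2 : 0 < n.1 1 := n.2.2 1
    have h3 : (2 : ℝ) ≤ n.1 0 := by exact_mod_cast (by omega : 2 ≤ n.1 0)
    have := (hal 1).1
    simp only [bet]; linarith

theorem mem_Ur {r : ℕ} {K : ℕ} {s : Fin r → ℂ} :
    s ∈ Ur r (K : ℤ) ↔ ∀ i : Fin r, ((i : ℕ) + 1 - K : ℝ) < (∑ j ∈ Finset.Iic i, s j).re := by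
  simp [Ur]

/-- A first factor that decays `K` orders better than `(n₁ + α₁)^{-s₁}` gives a sum converging
absolutely to an analytic function on the larger region `U_r(K)`. -/
theorem adm_aux {r : ℕ} (al : Fin (r + 1) → ℝ) (hal : ∀ i, al i ∈ Set.Ico (0 : ℝ) 1) {K : ℕ}
    {a : ℂ → ℕ → ℂ} (ha : Adm al K a) {p : Fin (r + 1) → ℂ} (hp : p ∈ Ur (r + 1) (K : ℤ)) :
    (Summable fun n : DTuple (r + 1) => a (p 0) (n.1 0) * tailProd al p n.1) ∧
      AnalyticAt ℂ (fs al a) p := by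
  rw [mem_Ur] at hp
  obtain ⟨ε, hε, hε1, hεp⟩ : ∃ ε : ℝ, 0 < ε ∧ ε ≤ 1 ∧ ∀ i : Fin (r + 1),
      ((i : ℕ) + 1 : ℝ) * (1 + ε) ≤ (∑ j ∈ Finset.Iic i, p j).re + K - ((i : ℕ) + 1) * ε := by
    have h : ∀ i : Fin (r + 1), ∀ᶠ ε : ℝ in nhdsWithin 0 (Set.Ioi 0),
        ((i : ℕ) + 1 : ℝ) * (1 + ε) < (∑ j ∈ Finset.Iic i, p j).re + K - ((i : ℕ) + 1) * ε := by
      intro i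
      apply Filter.Eventually.filter_mono nhdsWithin_le_nhds
      apply ContinuousAt.eventually_lt (by fun_prop) (by fun_prop)
      have := hp i
      simp only [mul_zero, add_zero, mul_one, sub_zero]; linarith
    have h2 : ∀ᶠ ε : ℝ in nhdsWithin 0 (Set.Ioi 0), ε < 1 :=
      Filter.Eventually.filter_mono nhdsWithin_le_nhds (eventually_lt_nhds one_pos)
    obtain ⟨ε, h3, h4, h5⟩ :=
      ((Filter.eventually_all.2 h).and (h2.and self_mem_nhdsWithin)).exists
    exact ⟨ε, h5, h4.le, fun i => (h3 i).le⟩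
  obtain ⟨C, hC, hCb⟩ := ha.2 (‖p 0‖ + 1)
  -- Lower bounds for the decay exponents, valid on the polydisc of radius `ε` around `p`.
  let σ : Fin (r + 1) → ℝ := Fin.cons ((p 0).re - ε + K) fun i => (p i.succ).re - ε
  have hσ : ∀ i, ∑ j ∈ Finset.Iic i, σ j =
      (∑ j ∈ Finset.Iic i, p j).re + K - ((i : ℕ) + 1) * ε := by
    intro i
    refine Fin.cases ?_ (fun i => ?_) i
    · rw [sum_Iic_zero, sum_Iic_zero]; simp [σ]; ring
    · rw [sum_Iic_succ, sum_Iic_succ]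
      simp [σ, Finset.sum_sub_distrib]; ring
  have hsum := summable_DTuple (r + 1) al hal σ ε hε (fun i => by rw [hσ]; exact hεp i)
  have hlog : ∀ (n : DTuple (r + 1)) i, 0 ≤ Real.log ((n.1 i : ℝ) + al i) := by
    intro n i
    have h1 : (1 : ℝ) ≤ n.1 i := by exact_mod_cast n.2.2 i
    exact Real.log_nonneg (by have := (hal i).1; linarith)
  let h : DTuple (r + 1) → Fin (r + 1) → ℂ → ℂ := fun n =>
    Fin.cons (fun z => a z (n.1 0)) fun i z => rpowC ((n.1 i.succ : ℝ) + al i.succ) (-z)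
  let M : DTuple (r + 1) → Fin (r + 1) → ℝ := fun n =>
    Fin.cons (C * Real.exp (-(σ 0) * Real.log ((n.1 0 : ℝ) + al 0)))
      fun i => Real.exp (-(σ i.succ) * Real.log ((n.1 i.succ : ℝ) + al i.succ))
  have hprod : ∀ n (s : Fin (r + 1) → ℂ),
      ∏ i, h n i (s i) = a (s 0) (n.1 0) * tailProd al s n.1 := by
    intro n s; rw [Fin.prod_univ_succ]; simp [h, tailProd]
  have hMprod : Summable fun n => ∏ i, M n i := by
    refine (hsum.mul_left C).congr fun n => ?_
    rw [Fin.prod_univ_succ, Fin.prod_univ_succ]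
    simp only [M, Fin.cons_zero, Fin.cons_succ]
    ring
  have hM : ∀ n i, 0 < M n i := by
    intro n i
    refine Fin.cases ?_ (fun i => ?_) i
    · simp only [M, Fin.cons_zero]; positivity
    · simp only [M, Fin.cons_succ]; positivity
  have hd : ∀ n i, Differentiable ℂ (h n i) := by
    intro n i
    refine Fin.cases ?_ (fun i => ?_) i
    · simp only [h, Fin.cons_zero]; exact ha.1 _
    · simp only [h, Fin.cons_succ]
      exact (rpowC_differentiable _).comp differentiable_neg
  have hre : ∀ (z w : ℂ), z ∈ Metric.ball w ε → w.re - ε ≤ z.re := by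
    intro z w hz
    rw [Metric.mem_ball, dist_eq_norm] at hz
    have := (abs_le.1 (Complex.abs_re_le_norm (z - w))).1
    rw [Complex.sub_re] at this; linarith
  have hb : ∀ n i, ∀ z ∈ Metric.ball (p i) ε, ‖h n i z‖ ≤ M n i := by
    intro n i
    refine Fin.cases ?_ (fun i => ?_) i
    · intro z hz
      simp only [M, h, Fin.cons_zero]
      have hz1 : ‖z‖ ≤ ‖p 0‖ + 1 := by
        have := norm_sub_norm_le z (p 0)
        rw [Metric.mem_ball, dist_eq_norm] at hz; linarith
      refine (hCb z hz1 _ (n.2.2 0) (valid al hal n)).trans ?_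
      refine mul_le_mul_of_nonneg_left (Real.exp_le_exp.2 ?_) hC.le
      refine mul_le_mul_of_nonneg_right ?_ (hlog n 0)
      have := hre _ _ hz
      simp only [σ, Fin.cons_zero]; linarith
    · intro z hz
      simp only [M, h, Fin.cons_succ]
      rw [rpowC_norm]
      refine Real.exp_le_exp.2 (mul_le_mul_of_nonneg_right ?_ (hlog n i.succ))
      have := hre _ _ hz
      simp only [σ, Fin.cons_succ, Complex.neg_re]; linarith
  constructor
  · refine Summable.of_norm_bounded hMprod fun n => ?_
    rw [← hprod, norm_prod]
    exact Finset.prod_le_prod (fun i _ => norm_nonneg _) fun i _ =>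
      hb n i _ (Metric.mem_ball_self hε)
  · have := analyticAt_tsum_prod p ε hε h M hM (fun n i => (hd n i).differentiableOn) hb hMprod
    simp only [hprod] at this
    exact this

theorem adm_hz {r : ℕ} (al : Fin (r + 1) → ℝ) :
    Adm al 0 (fun w n => rpowC ((n : ℝ) + al 0) (-w)) := by
  refine ⟨fun n => (rpowC_differentiable _).comp differentiable_neg, fun M => ⟨1, one_pos, ?_⟩⟩
  intro w _ n _ _
  rw [rpowC_norm]; simp

/-! ### The telescoping difference and its expansion -/

/-- The remainder of order `K + 1` in the expansion of `(n-1+β)^{1-w} - (n+β)^{1-w}` in powers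
of `n + α₁`. -/
noncomputable def dRem {r : ℕ} (al : Fin (r + 1) → ℝ) (K : ℕ) (w : ℂ) (n : ℕ) : ℂ :=
  tRem (K + 1) (1 - w) ((n : ℝ) + al 0) (bet al - al 0 - 1) -
    tRem (K + 1) (1 - w) ((n : ℝ) + al 0) (bet al - al 0)

theorem adm_dRem {r : ℕ} (al : Fin (r + 1) → ℝ) (hal : ∀ i, al i ∈ Set.Ico (0 : ℝ) 1) (K : ℕ) :
    Adm al K (dRem al K) := by
  constructor
  · intro n
    unfold dRem
    exact ((tRem_differentiable _ _ _).comp (by fun_prop)).sub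
      ((tRem_differentiable _ _ _).comp (by fun_prop))
  · intro M
    obtain ⟨C, hC, hb⟩ := tRem_bound (K + 1) (M + 1)
    refine ⟨2 * C, by positivity, ?_⟩
    intro w hw n hn hv
    have hn' : (1 : ℝ) ≤ n := by exact_mod_cast hn
    have h0 := (hal 0).1
    have h1 := (hal 0).2
    obtain ⟨h2, h3⟩ := bet_mem al hal
    have hw' : ‖1 - w‖ ≤ M + 1 := by
      have := norm_sub_le 1 w
      simp at this; linarith
    have hx : 1 ≤ (n : ℝ) + al 0 := by linarith
    have b1 := hb (1 - w) hw' ((n : ℝ) + al 0) (bet al - al 0 - 1) hx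
      (abs_le.2 ⟨by linarith, by linarith⟩) (by linarith)
    have b2 := hb (1 - w) hw' ((n : ℝ) + al 0) (bet al - al 0) hx
      (abs_le.2 ⟨by linarith, by linarith⟩) (by linarith)
    have he : (1 - w).re - ((K + 1 : ℕ) : ℝ) = -w.re - K := by simp; ring
    rw [he] at b1 b2
    refine (norm_sub_le _ _).trans ?_
    linarith

/-- The coefficient of `(n + α₁)^{-w-k}` in the expansion of `(n-1+β)^{1-w} - (n+β)^{1-w}`. -/
noncomputable def cf {r : ℕ} (al : Fin (r + 1) → ℝ) (k : ℕ) (w : ℂ) : ℂ :=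
  bc (1 - w) (k + 1) * ((((bet al - al 0 - 1 : ℝ) : ℂ)) ^ (k + 1) -
    (((bet al - al 0 : ℝ) : ℂ)) ^ (k + 1))

theorem cf_zero {r : ℕ} (al : Fin (r + 1) → ℝ) (w : ℂ) : cf al 0 w = w - 1 := by
  simp [cf, bc]

/-- The expansion starts at `k = 0`, since the terms `(n + α₁)^{1-w}` cancel. -/
theorem delta_eq {r : ℕ} (al : Fin (r + 1) → ℝ) (K : ℕ) (w : ℂ) (n : ℕ) :
    rpowC ((n : ℝ) - 1 + bet al) (1 - w) - rpowC ((n : ℝ) + bet al) (1 - w) =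
      dRem al K w n + ∑ k ∈ Finset.range K, cf al k w * rpowC ((n : ℝ) + al 0) (-(w + k)) := by
  rw [dRem, tRem, tRem, Finset.sum_range_succ', Finset.sum_range_succ']
  rw [show (n : ℝ) + al 0 + (bet al - al 0 - 1) = (n : ℝ) - 1 + bet al by ring,
    show (n : ℝ) + al 0 + (bet al - al 0) = (n : ℝ) + bet al by ring]
  have h : ∑ k ∈ Finset.range K, cf al k w * rpowC ((n : ℝ) + al 0) (-(w + k)) =
      ∑ k ∈ Finset.range K, bc (1 - w) (k + 1) * (((bet al - al 0 - 1 : ℝ) : ℂ)) ^ (k + 1) *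
        rpowC ((n : ℝ) + al 0) (1 - w - ((k + 1 : ℕ) : ℂ)) -
      ∑ k ∈ Finset.range K, bc (1 - w) (k + 1) * (((bet al - al 0 : ℝ) : ℂ)) ^ (k + 1) *
        rpowC ((n : ℝ) + al 0) (1 - w - ((k + 1 : ℕ) : ℂ)) := by
    rw [← Finset.sum_sub_distrib]
    refine Finset.sum_congr rfl fun k _ => ?_
    rw [show 1 - w - ((k + 1 : ℕ) : ℂ) = -(w + k) by push_cast; ring, cf]
    ring
  rw [h]
  simp only [pow_zero]
  ring

/-- A decreasing tuple of length `r + 1` is a decreasing tuple `m` of length `r` together with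
the excess `n₁ - m₁ - 1 ≥ 0`. -/
def splitEquiv (r : ℕ) : DTuple r × ℕ ≃ DTuple (r + 1) where
  toFun q := ⟨Fin.cons (bnd q.1 + 1 + q.2) q.1.1, by
    obtain ⟨m, j⟩ := q
    constructor
    · intro a b hab
      have hb0 : b ≠ 0 := by rintro rfl; simp at hab
      obtain ⟨b, rfl⟩ := Fin.exists_succ_eq.2 hb0
      revert hab
      refine Fin.cases (fun _ => ?_) (fun a hab => ?_) a
      · simp only [Fin.cons_zero, Fin.cons_succ]
        cases r with
        | zero => exact b.elim0
        | succ r =>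
          have : m.1 b ≤ m.1 0 := m.2.1.antitone (Fin.zero_le b)
          simp only [bnd]; omega
      · simp only [Fin.cons_succ]
        exact m.2.1 (Fin.succ_lt_succ_iff.1 hab)
    · intro i
      refine Fin.cases ?_ (fun i => ?_) i
      · simp only [Fin.cons_zero]; omega
      · simp only [Fin.cons_succ]; exact m.2.2 i⟩
  invFun n := (⟨fun i => n.1 i.succ, fun a b hab => n.2.1 (Fin.succ_lt_succ_iff.2 hab),
      fun i => n.2.2 _⟩,
    n.1 0 - (bnd (⟨fun i => n.1 i.succ, fun a b hab => n.2.1 (Fin.succ_lt_succ_iff.2 hab),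
      fun i => n.2.2 _⟩ : DTuple r) + 1))
  left_inv q := by
    obtain ⟨m, j⟩ := q
    refine Prod.ext ?_ ?_
    · apply Subtype.ext; funext i; simp
    · have : (⟨fun i => (Fin.cons (bnd m + 1 + j) m.1 : Fin (r + 1) → ℕ) i.succ,
        fun a b hab => by simpa using m.2.1 hab,
        fun i => by simpa using m.2.2 i⟩ : DTuple r) = m := by
        apply Subtype.ext; funext i; simp
      simp only [Fin.cons_zero]
      rw [this]; omega
  right_inv n := by
    apply Subtype.ext
    funext i
    refine Fin.cases ?_ (fun i => ?_) i
    · simp only [Fin.cons_zero]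
      have h : bnd (⟨fun i => n.1 i.succ, fun a b hab => n.2.1 (Fin.succ_lt_succ_iff.2 hab),
          fun i => n.2.2 _⟩ : DTuple r) < n.1 0 := by
        cases r with
        | zero => exact n.2.2 0
        | succ r => exact n.2.1 (Fin.succ_pos 0)
      omega
    · simp

/-- The sum left over after telescoping in `n₁`: the first factor becomes `(n₂ + β)^{1-s₁}`,
with `n₂` read as `0` in depth one. -/
noncomputable def bdry {r : ℕ} (al : Fin (r + 1) → ℝ) (s : Fin (r + 1) → ℂ) : ℂ :=
  ∑' m : DTuple r, rpowC ((bnd m : ℝ) + bet al) (1 - s 0) *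
    ∏ i, rpowC ((m.1 i : ℝ) + al i.succ) (-(s i.succ))

theorem rpowC_tendsto_zero (b : ℝ) (w : ℂ) (hw : w.re < 0) :
    Filter.Tendsto (fun N : ℕ => rpowC ((N : ℝ) + b) w) Filter.atTop (nhds 0) := by
  rw [tendsto_zero_iff_norm_tendsto_zero]
  simp only [rpowC_norm]
  refine Real.tendsto_exp_atBot.comp ?_
  refine Filter.Tendsto.const_mul_atTop_of_neg hw ?_
  exact Real.tendsto_log_atTop.comp
    (Filter.tendsto_atTop_add_const_right _ _ tendsto_natCast_atTop_atTop)

theorem tsum_split {r : ℕ} (f : DTuple (r + 1) → ℂ) (hf : Summable f) :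
    (∀ m, Summable fun j => f (splitEquiv r (m, j))) ∧
      ∑' n, f n = ∑' m, ∑' j, f (splitEquiv r (m, j)) := by
  have hsum' : Summable fun q => f (splitEquiv r q) := (splitEquiv r).summable_iff.2 hf
  refine ⟨fun m => hsum'.prod_factor m, ?_⟩
  rw [← (splitEquiv r).tsum_eq f]
  exact hsum'.tsum_prod

/-- For fixed `n₂, …, n_r` the sum over `n₁ > n₂` telescopes, and the term at infinity vanishes
because `Re s₁ > 1`. -/
theorem telescope {r : ℕ} (al : Fin (r + 1) → ℝ) (s : Fin (r + 1) → ℂ) (hs : 1 < (s 0).re)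
    (hsum : Summable fun n : DTuple (r + 1) =>
      (rpowC ((n.1 0 : ℝ) - 1 + bet al) (1 - s 0) - rpowC ((n.1 0 : ℝ) + bet al) (1 - s 0)) *
        tailProd al s n.1) :
    ∑' n : DTuple (r + 1),
      (rpowC ((n.1 0 : ℝ) - 1 + bet al) (1 - s 0) - rpowC ((n.1 0 : ℝ) + bet al) (1 - s 0)) *
        tailProd al s n.1 = bdry al s := by
  have he := tsum_split _ hsum
  rw [he.2, bdry]
  refine tsum_congr fun m => ?_
  have hf := he.1 m
  let c : ℂ := ∏ i, rpowC ((m.1 i : ℝ) + al i.succ) (-(s i.succ))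
  let g : ℕ → ℂ := fun N => rpowC ((N : ℝ) + ((bnd m : ℝ) + bet al)) (1 - s 0) * c
  have hterm : ∀ j : ℕ, (rpowC (((splitEquiv r (m, j)).1 0 : ℝ) - 1 + bet al) (1 - s 0) -
      rpowC (((splitEquiv r (m, j)).1 0 : ℝ) + bet al) (1 - s 0)) *
        tailProd al s (splitEquiv r (m, j)).1 = g j - g (j + 1) := by
    intro j
    have e1 : (splitEquiv r (m, j)).1 0 = bnd m + 1 + j := rfl
    have e2 : tailProd al s (splitEquiv r (m, j)).1 = c := rfl
    rw [e1, e2, sub_mul]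
    have e3 : ((bnd m + 1 + j : ℕ) : ℝ) - 1 + bet al = (j : ℝ) + ((bnd m : ℝ) + bet al) := by
      push_cast; ring
    have e4 : ((bnd m + 1 + j : ℕ) : ℝ) + bet al =
        ((j + 1 : ℕ) : ℝ) + ((bnd m : ℝ) + bet al) := by
      push_cast; ring
    rw [e3, e4]
  have hlim : Filter.Tendsto g Filter.atTop (nhds 0) := by
    have := (rpowC_tendsto_zero ((bnd m : ℝ) + bet al) (1 - s 0) (by simp; linarith)).mul_const c
    simpa using this
  have h1 : Filter.Tendsto (fun N => ∑ j ∈ Finset.range N, (g j - g (j + 1))) Filter.atTop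
      (nhds (g 0)) := by
    simp only [Finset.sum_range_sub']
    simpa using hlim.const_sub (g 0)
  replace hf : Summable fun j => g j - g (j + 1) := hf.congr hterm
  have h2 : ∑' j, (g j - g (j + 1)) = g 0 := (hf.hasSum_iff_tendsto_nat.2 h1).tsum_eq
  refine (tsum_congr hterm).trans (h2.trans ?_)
  simp only [g, c, Nat.cast_zero, zero_add]

/-! ### The recursion -/

theorem bdry_zero (al : Fin 1 → ℝ) (s : Fin 1 → ℂ) : bdry al s = 1 := by
  have hsub : ∀ m m' : DTuple 0, m = m' := fun m m' =>
    Subtype.ext (funext fun i => i.elim0)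
  let m₀ : DTuple 0 := ⟨fun i => i.elim0, fun i => i.elim0, fun i => i.elim0⟩
  rw [bdry, tsum_eq_single m₀ fun m hm => absurd (hsub m m₀) hm]
  simp [bnd, bet, rpowC]

/-- The map `(s₁, s₂, s₃, …) ↦ (s₁ + s₂ - 1, s₃, …)`, which lowers the depth by one. -/
def merge {r : ℕ} (s : Fin (r + 2) → ℂ) : Fin (r + 1) → ℂ :=
  Fin.cons (s 0 + s 1 - 1) fun i => s i.succ.succ

/-- The boundary term is a zeta function of smaller depth, because `β = α₂`. -/
theorem bdry_succ {r : ℕ} (al : Fin (r + 2) → ℝ) (s : Fin (r + 2) → ℂ) :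
    bdry al s = multipleHurwitz (fun i => al i.succ) (merge s) := by
  rw [bdry, multipleHurwitz]
  refine tsum_congr fun m => ?_
  rw [hzTerm, Fin.prod_univ_succ, Fin.prod_univ_succ, ← mul_assoc]
  simp only [bnd, bet, merge, Fin.cons_zero, Fin.cons_succ, Fin.succ_zero_eq_one]
  rw [← rpowC_add]
  congr 2
  ring

/-- The translation `s₁ ↦ s₁ + k` of the first variable. -/
def shift {r : ℕ} (k : ℕ) (s : Fin (r + 1) → ℂ) : Fin (r + 1) → ℂ := s + Pi.single 0 (k : ℂ)

theorem shift_zero {r : ℕ} (k : ℕ) (s : Fin (r + 1) → ℂ) : shift k s 0 = s 0 + k := by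
  simp [shift]

theorem shift_succ {r : ℕ} (k : ℕ) (s : Fin (r + 1) → ℂ) (i : Fin r) :
    shift k s i.succ = s i.succ := by
  simp [shift]

theorem sum_shift {r : ℕ} (k : ℕ) (s : Fin (r + 1) → ℂ) (i : Fin (r + 1)) :
    ∑ j ∈ Finset.Iic i, shift k s j = ∑ j ∈ Finset.Iic i, s j + k := by
  refine Fin.cases ?_ (fun i => ?_) i
  · rw [sum_Iic_zero, sum_Iic_zero, shift_zero]
  · rw [sum_Iic_succ, sum_Iic_succ, shift_zero]
    simp only [shift_succ]; ring

theorem sum_merge {r : ℕ} (s : Fin (r + 2) → ℂ) (i : Fin (r + 1)) :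
    ∑ j ∈ Finset.Iic i, merge s j = ∑ j ∈ Finset.Iic i.succ, s j - 1 := by
  rw [sum_Iic_succ]
  refine Fin.cases ?_ (fun i => ?_) i
  · rw [sum_Iic_zero, sum_Iic_zero]; simp [merge]
  · rw [sum_Iic_succ, sum_Iic_succ]; simp [merge]; ring

theorem shift_mem {r K : ℕ} {k : ℕ} {s : Fin (r + 1) → ℂ} (hs : s ∈ Ur (r + 1) ((K + k : ℕ) : ℤ)) :
    shift k s ∈ Ur (r + 1) (K : ℤ) := by
  rw [mem_Ur] at hs ⊢
  intro i
  have := hs i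
  rw [sum_shift]
  push_cast at this
  simp only [Complex.add_re, Complex.natCast_re]
  linarith

theorem merge_mem {r K : ℕ} {s : Fin (r + 2) → ℂ} (hs : s ∈ Ur (r + 2) (K : ℤ)) :
    merge s ∈ Ur (r + 1) (K : ℤ) := by
  rw [mem_Ur] at hs ⊢
  intro i
  have := hs i.succ
  rw [sum_merge]
  simp only [Fin.val_succ, Nat.cast_add, Nat.cast_one] at this
  simp only [Complex.sub_re, Complex.one_re]
  linarith

theorem Ur_mono {r K L : ℕ} (h : K ≤ L) : Ur r (K : ℤ) ⊆ Ur r (L : ℤ) := by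
  intro s hs
  rw [mem_Ur] at hs ⊢
  intro i
  have := hs i
  have h' : (K : ℝ) ≤ L := by exact_mod_cast h
  linarith

theorem shift_analytic {r : ℕ} (k : ℕ) (s : Fin (r + 1) → ℂ) : AnalyticAt ℂ (shift k) s :=
  analyticAt_id.add analyticAt_const

theorem coord_analytic {r : ℕ} (i : Fin r) (s : Fin r → ℂ) :
    AnalyticAt ℂ (fun s : Fin r → ℂ => s i) s :=
  (ContinuousLinearMap.proj (R := ℂ) (φ := fun _ : Fin r => ℂ) i).analyticAt s

theorem merge_analytic {r : ℕ} (s : Fin (r + 2) → ℂ) :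
    AnalyticAt ℂ (merge : (Fin (r + 2) → ℂ) → _) s := by
  rw [show (merge : (Fin (r + 2) → ℂ) → Fin (r + 1) → ℂ) = fun s i => merge s i from rfl,
    analyticAt_pi_iff]
  intro i
  refine Fin.cases ?_ (fun i => ?_) i
  · simp only [merge, Fin.cons_zero]
    exact ((coord_analytic 0 s).add (coord_analytic 1 s)).sub analyticAt_const
  · simp only [merge, Fin.cons_succ]
    exact coord_analytic _ s

/-- The linear form `s_1 + ⋯ + s_i - i + k` defining `H_{i,k}`; the index `i` is 0-based. -/
noncomputable def lin {r : ℕ} (i : Fin r) (k : ℕ) (s : Fin r → ℂ) : ℂ :=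
  (∑ j ∈ Finset.Iic i, s j) - ((i : ℕ) + 1 : ℂ) + (k : ℂ)

theorem lin_analytic {r : ℕ} (i : Fin r) (k : ℕ) (s : Fin r → ℂ) : AnalyticAt ℂ (lin i k) s := by
  unfold lin
  refine (AnalyticAt.sub ?_ analyticAt_const).add analyticAt_const
  exact Finset.analyticAt_fun_sum _ fun j _ => coord_analytic j s

theorem lin_shift {r : ℕ} (i : Fin (r + 1)) (j k : ℕ) (s : Fin (r + 1) → ℂ) :
    lin i j (shift k s) = lin i (k + j) s := by
  rw [lin, lin, sum_shift]; push_cast; ring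

theorem lin_merge {r : ℕ} (i : Fin (r + 1)) (k : ℕ) (s : Fin (r + 2) → ℂ) :
    lin i k (merge s) = lin i.succ k s := by
  rw [lin, lin, sum_merge]; simp; ring

/-- The product of the linear forms of `H_{i,k}` over all `i ≥ 2` and `0 ≤ k < K`. -/
noncomputable def Qp {r : ℕ} (K : ℕ) (s : Fin (r + 1) → ℂ) : ℂ :=
  ∏ i : Fin r, ∏ k ∈ Finset.range K, lin i.succ k s

theorem Qp_analytic {r : ℕ} (K : ℕ) (s : Fin (r + 1) → ℂ) : AnalyticAt ℂ (Qp K) s := by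
  unfold Qp
  exact Finset.analyticAt_fun_prod _ fun i _ =>
    Finset.analyticAt_fun_prod _ fun k _ => lin_analytic _ _ _

theorem Qp_shift {r : ℕ} (K k : ℕ) (s : Fin (r + 1) → ℂ) :
    Qp (k + K) s = Qp k s * Qp K (shift k s) := by
  rw [Qp, Qp, Qp, ← Finset.prod_mul_distrib]
  refine Finset.prod_congr rfl fun i _ => ?_
  rw [Finset.prod_range_add]
  simp only [lin_shift]

/-- In the pulled back polar factors, the pole `s₁' = 1` of the merged zeta function becomes
`H_{2,0}`. The factors of `H_{2,k}` with `k ≥ 1` have no counterpart there. -/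
theorem Qp_merge {r : ℕ} (K : ℕ) (s : Fin (r + 2) → ℂ) :
    Qp (K + 1) s = (∏ k ∈ Finset.range K, lin 1 (k + 1) s) *
      ((merge s 0 - 1) * Qp (K + 1) (merge s)) := by
  rw [Qp, Fin.prod_univ_succ, Finset.prod_range_succ', mul_assoc, Qp]
  simp only [lin_merge, Fin.succ_zero_eq_one]
  congr 2
  rw [lin, show (1 : Fin (r + 2)) = Fin.succ 0 from rfl, sum_Iic_succ, sum_Iic_zero]
  simp [merge]; ring

theorem hz_analytic {r : ℕ} (al : Fin (r + 1) → ℝ) (hal : ∀ i, al i ∈ Set.Ico (0 : ℝ) 1)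
    {s : Fin (r + 1) → ℂ} (hs : s ∈ Ur (r + 1) ((0 : ℕ) : ℤ)) :
    AnalyticAt ℂ (multipleHurwitz al) s := by
  have := (adm_aux al hal (adm_hz al) hs).2
  rwa [show multipleHurwitz al = fs al _ from funext (multipleHurwitz_eq_fs al)]

theorem one_lt_re {r : ℕ} {s : Fin (r + 1) → ℂ} (hs : s ∈ Ur (r + 1) ((0 : ℕ) : ℤ)) :
    1 < (s 0).re := by
  have := mem_Ur.1 hs 0
  rw [sum_Iic_zero] at this
  simpa using this

/-- The functional equation expressing `ζ(s₁, …)` through the boundary term, a sum converging on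
`U_r(L + 1)`, and the values `ζ(s₁ + k, …)` for `1 ≤ k ≤ L`. -/
theorem recursion {r : ℕ} (al : Fin (r + 1) → ℝ) (hal : ∀ i, al i ∈ Set.Ico (0 : ℝ) 1) (L : ℕ)
    {s : Fin (r + 1) → ℂ} (hs : s ∈ Ur (r + 1) ((0 : ℕ) : ℤ)) :
    (s 0 - 1) * multipleHurwitz al s = bdry al s - fs al (dRem al (L + 1)) s -
      ∑ k ∈ Finset.range L, cf al (k + 1) (s 0) * multipleHurwitz al (shift (k + 1) s) := by
  have hs' : ∀ k : ℕ, s ∈ Ur (r + 1) (k : ℤ) := fun k => Ur_mono (Nat.zero_le k) hs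
  have hD : ∀ K, Summable fun n : DTuple (r + 1) => dRem al K (s 0) (n.1 0) * tailProd al s n.1 :=
    fun K => (adm_aux al hal (adm_dRem al hal K) (hs' K)).1
  have hz : ∀ k : ℕ, Summable fun n : DTuple (r + 1) =>
      rpowC ((n.1 0 : ℝ) + al 0) (-(s 0 + k)) * tailProd al s n.1 := by
    intro k
    have := (adm_aux al hal (adm_hz al) (shift_mem (K := 0) (k := k) (hs' (0 + k)))).1
    simpa only [shift_zero, shift_succ, tailProd] using this
  have hzs : ∀ k : ℕ, ∑' n : DTuple (r + 1),
      rpowC ((n.1 0 : ℝ) + al 0) (-(s 0 + k)) * tailProd al s n.1 =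
        multipleHurwitz al (shift k s) := by
    intro k
    rw [multipleHurwitz_eq_fs, fs]
    simp only [shift_zero, shift_succ, tailProd]
  have hsumΔ : Summable fun n : DTuple (r + 1) =>
      (rpowC ((n.1 0 : ℝ) - 1 + bet al) (1 - s 0) - rpowC ((n.1 0 : ℝ) + bet al) (1 - s 0)) *
        tailProd al s n.1 := by
    refine (hD 0).congr fun n => ?_
    rw [delta_eq al 0]; simp
  have htel := telescope al s (one_lt_re hs) hsumΔ
  have hexp : ∀ n : DTuple (r + 1),
      (rpowC ((n.1 0 : ℝ) - 1 + bet al) (1 - s 0) - rpowC ((n.1 0 : ℝ) + bet al) (1 - s 0)) *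
        tailProd al s n.1 = dRem al (L + 1) (s 0) (n.1 0) * tailProd al s n.1 +
          ∑ k ∈ Finset.range (L + 1), cf al k (s 0) *
            (rpowC ((n.1 0 : ℝ) + al 0) (-(s 0 + k)) * tailProd al s n.1) := by
    intro n
    rw [delta_eq al (L + 1), add_mul, Finset.sum_mul]
    simp only [mul_assoc]
  rw [tsum_congr hexp, (hD (L + 1)).tsum_add
    (summable_sum fun k _ => (hz k).mul_left _),
    Summable.tsum_finsetSum fun k _ => (hz k).mul_left _] at htel
  simp only [tsum_mul_left, hzs] at htel
  rw [Finset.sum_range_succ', cf_zero] at htel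
  have h0 : shift 0 s = s := by simp [shift]
  rw [h0] at htel
  rw [← htel, fs]
  ring

/-! ### Continuation by induction on depth and region -/

/-- The function `(s₁ - 1) · Qp K s · ζ(s)` continues analytically from `U_r(0)` to `U_r(K)`. -/
def Cont {r : ℕ} (K : ℕ) (al : Fin (r + 1) → ℝ) : Prop :=
  ∃ G : (Fin (r + 1) → ℂ) → ℂ, AnalyticOnNhd ℂ G (Ur (r + 1) (K : ℤ)) ∧
    ∀ s ∈ Ur (r + 1) ((0 : ℕ) : ℤ), G s = (s 0 - 1) * Qp K s * multipleHurwitz al s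

/-- The coefficient of `ζ(s₁ + k + 1, …)` in the recursion vanishes at `s₁ = -k`, which is where
that function has its pole in the first variable. Hence only `H_{1,0}` survives among the
hyperplanes `H_{1,k}`. -/
theorem cf_factor {r : ℕ} (al : Fin (r + 1) → ℝ) (k : ℕ) : ∃ d : ℂ → ℂ, Differentiable ℂ d ∧
    ∀ w, cf al (k + 1) w = (w + k) * d w := by
  refine ⟨fun w => -(∏ i ∈ Finset.range (k + 1), (1 - w - i)) / (Nat.factorial (k + 2)) *
    ((((bet al - al 0 - 1 : ℝ) : ℂ)) ^ (k + 2) - (((bet al - al 0 : ℝ) : ℂ)) ^ (k + 2)),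
    by fun_prop, fun w => ?_⟩
  rw [cf, bc, Finset.prod_range_succ]
  push_cast
  ring

/-- The recursion, multiplied by `Qp (L + 1)`, continues the zeta function to `U_r(L + 1)`: the
boundary term is `hB`, the remainder is analytic there, and the value at the shift by `k + 1` comes
from the region `U_r(L - k)`, its polar factors being absorbed by `Qp_shift`. -/
theorem cont_step {r : ℕ} (al : Fin (r + 1) → ℝ) (hal : ∀ i, al i ∈ Set.Ico (0 : ℝ) 1) (L : ℕ)
    (hB : ∃ E : (Fin (r + 1) → ℂ) → ℂ, AnalyticOnNhd ℂ E (Ur (r + 1) ((L + 1 : ℕ) : ℤ)) ∧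
      ∀ s ∈ Ur (r + 1) ((0 : ℕ) : ℤ), E s = Qp (L + 1) s * bdry al s)
    (ih : ∀ K ≤ L, Cont K al) : Cont (L + 1) al := by
  obtain ⟨E, hEa, hE⟩ := hB
  -- The condition `k < L` sits inside the quantifier so that `choose` yields total functions.
  have ih' : ∀ k : ℕ, ∃ G : (Fin (r + 1) → ℂ) → ℂ, k < L →
      AnalyticOnNhd ℂ G (Ur (r + 1) ((L - k : ℕ) : ℤ)) ∧
      ∀ s ∈ Ur (r + 1) ((0 : ℕ) : ℤ), G s = (s 0 - 1) * Qp (L - k) s * multipleHurwitz al s := by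
    intro k
    obtain ⟨G, hG⟩ := ih (L - k) (Nat.sub_le _ _)
    exact ⟨G, fun _ => hG⟩
  choose G hG using ih'
  choose d hda hd using cf_factor al
  refine ⟨fun s => E s - Qp (L + 1) s * fs al (dRem al (L + 1)) s -
    ∑ k ∈ Finset.range L, d k (s 0) * Qp (k + 1) s * G k (shift (k + 1) s), ?_, ?_⟩
  · intro s hs
    refine ((hEa s hs).sub ((Qp_analytic _ s).mul
      (adm_aux al hal (adm_dRem al hal (L + 1)) hs).2)).sub ?_
    refine Finset.analyticAt_fun_sum _ fun k hk => ?_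
    have hk' : k < L := Finset.mem_range.1 hk
    refine (AnalyticAt.mul ?_ (Qp_analytic _ s)).mul ?_
    · exact AnalyticAt.fun_comp (f := fun s : Fin (r + 1) → ℂ => s 0)
        ((hda k).analyticAt _) (coord_analytic 0 s)
    · refine AnalyticAt.fun_comp ((hG k hk').1 _ ?_) (shift_analytic (k + 1) s)
      apply shift_mem
      rwa [show L - k + (k + 1) = L + 1 by omega]
  · intro s hs
    have hrec := recursion al hal L hs
    beta_reduce
    rw [hE s hs]
    have hterm : ∀ k ∈ Finset.range L, d k (s 0) * Qp (k + 1) s * G k (shift (k + 1) s) =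
        Qp (L + 1) s * (cf al (k + 1) (s 0) * multipleHurwitz al (shift (k + 1) s)) := by
      intro k hk
      have hk' : k < L := Finset.mem_range.1 hk
      have hQ : Qp (L + 1) s = Qp (k + 1) s * Qp (L - k) (shift (k + 1) s) := by
        rw [← Qp_shift, show (k + 1) + (L - k) = L + 1 by omega]
      rw [(hG k hk').2 _ (shift_mem (Ur_mono (Nat.zero_le _) hs)), hd, hQ, shift_zero]
      push_cast
      ring
    rw [Finset.sum_congr rfl hterm, ← Finset.mul_sum]
    linear_combination (-Qp (L + 1) s) * hrec

theorem cont_all : ∀ (r : ℕ) (al : Fin (r + 1) → ℝ), (∀ i, al i ∈ Set.Ico (0 : ℝ) 1) →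
    ∀ K, Cont K al := by
  intro r
  induction r with
  | zero =>
    intro al hal K
    induction K using Nat.strong_induction_on with
    | _ K ih =>
      cases K with
      | zero =>
        exact ⟨_, fun s hs => (((coord_analytic 0 s).sub analyticAt_const).mul
          (Qp_analytic 0 s)).mul (hz_analytic al hal hs), fun s _ => rfl⟩
      | succ L =>
        refine cont_step al hal L ⟨fun _ => 1, fun s _ => analyticAt_const, fun s _ => ?_⟩
          fun K hK => ih K (by omega)
        rw [bdry_zero]; simp [Qp]
  | succ r ihr =>
    intro al hal K
    induction K using Nat.strong_induction_on with
    | _ K ih =>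
      cases K with
      | zero =>
        exact ⟨_, fun s hs => (((coord_analytic 0 s).sub analyticAt_const).mul
          (Qp_analytic 0 s)).mul (hz_analytic al hal hs), fun s _ => rfl⟩
      | succ L =>
        refine cont_step al hal L ?_ fun K hK => ih K (by omega)
        obtain ⟨G, hGa, hG⟩ := ihr (fun i => al i.succ) (fun i => hal _) (L + 1)
        refine ⟨fun s => (∏ k ∈ Finset.range L, lin 1 (k + 1) s) * G (merge s), ?_, ?_⟩
        · intro s hs
          refine AnalyticAt.mul (Finset.analyticAt_fun_prod _ fun k _ => lin_analytic _ _ _) ?_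
          exact AnalyticAt.fun_comp (hGa _ (merge_mem hs)) (merge_analytic s)
        · intro s hs
          beta_reduce
          rw [hG _ (merge_mem hs), bdry_succ, Qp_merge]
          ring

/-! ### Gluing -/

theorem Ur_isOpen (r K : ℕ) : IsOpen (Ur r (K : ℤ)) := by
  have : Ur r (K : ℤ) = ⋂ i : Fin r,
      {s | ((i : ℕ) + 1 - K : ℝ) < (∑ j ∈ Finset.Iic i, s j).re} := by
    ext s; simp [mem_Ur]
  rw [this]
  exact isOpen_iInter_of_finite fun i => isOpen_lt (by fun_prop) (by fun_prop)

theorem Ur_convex (r K : ℕ) : Convex ℝ (Ur r (K : ℤ)) := by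
  have : Ur r (K : ℤ) = ⋂ i : Fin r,
      {s | ((i : ℕ) + 1 - K : ℝ) < (∑ j ∈ Finset.Iic i, s j).re} := by
    ext s; simp [mem_Ur]
  rw [this]
  refine convex_iInter fun i => convex_halfSpace_gt ⟨?_, ?_⟩ _
  · intro x y; simp [Finset.sum_add_distrib]
  · intro c x; simp [Finset.mul_sum]

theorem Ur_nonempty (r : ℕ) : (Ur r ((0 : ℕ) : ℤ)).Nonempty := by
  refine ⟨fun _ => 2, mem_Ur.2 fun i => ?_⟩
  rw [Finset.sum_const, Fin.card_Iic, nsmul_eq_mul]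
  have h : ((((i : ℕ) + 1 : ℕ) : ℂ) * 2).re = ((i : ℕ) + 1) * 2 := by
    rw [Complex.mul_re]; simp
  rw [h]
  have : (0 : ℝ) ≤ (i : ℕ) := Nat.cast_nonneg _
  push_cast; linarith

theorem exists_mem_Ur {r : ℕ} (s : Fin r → ℂ) : ∃ K : ℕ, s ∈ Ur r ((K + 1 : ℕ) : ℤ) := by
  have h : ∀ᶠ K : ℕ in Filter.atTop, ∀ i : Fin r,
      ((i : ℕ) + 1 : ℝ) - (∑ j ∈ Finset.Iic i, s j).re < K := by
    refine Filter.eventually_all.2 fun i => ?_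
    exact tendsto_natCast_atTop_atTop.eventually_gt_atTop _
  obtain ⟨K, hK⟩ := h.exists
  refine ⟨K, mem_Ur.2 fun i => ?_⟩
  have := hK i
  push_cast; linarith

/-- The pairs `(i, k)` of the hyperplanes of `S` with `k < K`, together with `H_{1,0}`; the index
`i` is 0-based. -/
noncomputable def idx (r K : ℕ) : Finset (Fin (r + 1) × ℕ) :=
  insert (0, 0) ((Finset.univ ×ˢ Finset.range K).map
    ⟨fun q : Fin r × ℕ => (q.1.succ, q.2), fun a b h => by
      simp only [Prod.mk.injEq, Fin.succ_inj] at h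
      exact Prod.ext h.1 h.2⟩)

theorem prod_idx {r K : ℕ} (s : Fin (r + 1) → ℂ) :
    ∏ q ∈ idx r K, lin q.1 q.2 s = (s 0 - 1) * Qp K s := by
  rw [idx, Finset.prod_insert, Finset.prod_map, Finset.prod_product, Qp]
  · congr 1
    rw [lin, sum_Iic_zero]; simp
  · simp only [Finset.mem_map, not_exists, not_and]
    intro q _ h
    exact absurd (congrArg Prod.fst h) (Fin.succ_ne_zero _)

/-- For `K ≥ 1`, only the finitely many hyperplanes of `S` with `k < K` meet `U_r(K)`. -/
theorem mem_idx {r K : ℕ} {s : Fin (r + 1) → ℂ} (hs : s ∈ Ur (r + 1) ((K + 1 : ℕ) : ℤ))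
    {i : Fin (r + 1)} {k : ℕ} (hik : SH i k) (hsk : s ∈ Hplane (r + 1) i k) :
    (i, k) ∈ idx r (K + 1) := by
  have hk : k < K + 1 := by
    have h1 := mem_Ur.1 hs i
    rw [show ∑ j ∈ Finset.Iic i, s j = ((i : ℕ) + 1 : ℂ) - k from hsk] at h1
    have h2 : (((i : ℕ) + 1 : ℂ) - k).re = (i : ℕ) + 1 - k := by simp
    rw [h2] at h1
    have h3 : (k : ℝ) < ((K + 1 : ℕ) : ℝ) := by linarith
    exact_mod_cast h3
  revert hik hsk
  refine Fin.cases ?_ (fun i => ?_) i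
  · intro hik _
    have : k = 0 := by
      rcases hik with h | h
      · exact h.2
      · simp at h
    subst this
    simp [idx]
  · intro _ _
    simp only [idx, Finset.mem_insert, Finset.mem_map]
    exact Or.inr ⟨(i, k), by simp; omega, rfl⟩

theorem SH_of_mem_idx {r K : ℕ} {q : Fin (r + 1) × ℕ} (hq : q ∈ idx r K) : SH q.1 q.2 := by
  simp only [idx, Finset.mem_insert, Finset.mem_map] at hq
  rcases hq with rfl | ⟨q', _, rfl⟩
  · left; simp
  · right
    change 1 ≤ ((q'.1.succ : Fin (r + 1)) : ℕ)
    rw [Fin.val_succ]; omega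

theorem lin_eq_zero {r : ℕ} {i : Fin r} {k : ℕ} {s : Fin r → ℂ} :
    lin i k s = 0 ↔ s ∈ Hplane r i k := by
  change _ ↔ ∑ j ∈ Finset.Iic i, s j = ((i : ℕ) + 1 : ℂ) - k
  rw [lin]
  constructor
  · intro h; linear_combination h
  · intro h; linear_combination h

theorem prod_idx_ne_zero_iff {r K : ℕ} {s : Fin (r + 1) → ℂ}
    (hs : s ∈ Ur (r + 1) ((K + 1 : ℕ) : ℤ)) :
    ∏ q ∈ idx r (K + 1), lin q.1 q.2 s ≠ 0 ↔ s ∉ polarSet (SH (r := r + 1)) := by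
  rw [Finset.prod_ne_zero_iff]
  constructor
  · rintro h ⟨i, k, hik, hsk⟩
    exact h (i, k) (mem_idx hs hik hsk) (lin_eq_zero.2 hsk)
  · intro h q hq h0
    exact h ⟨q.1, q.2, SH_of_mem_idx hq, lin_eq_zero.1 h0⟩

/-- The continuations to the regions `U_r(K + 1)` exhaust `ℂ^r` and, by the identity theorem on
the convex set `U_r(K + 1)`, agree after division by their polar factors. -/
theorem main (r : ℕ) (al : Fin (r + 1) → ℝ) (hal : ∀ i, al i ∈ Set.Ico (0 : ℝ) 1) :
    ∃ F : (Fin (r + 1) → ℂ) → ℂ,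
      AnalyticOnNhd ℂ F (polarSet (SH (r := r + 1)))ᶜ ∧
      (∀ s ∈ Ur (r + 1) 0, F s = multipleHurwitz al s) ∧
      SimplePolesAlong (SH (r := r + 1)) F := by
  have hc : ∀ K : ℕ, ∃ G : (Fin (r + 1) → ℂ) → ℂ,
      AnalyticOnNhd ℂ G (Ur (r + 1) ((K + 1 : ℕ) : ℤ)) ∧
      ∀ s ∈ Ur (r + 1) ((0 : ℕ) : ℤ),
        G s = (∏ q ∈ idx r (K + 1), lin q.1 q.2 s) * multipleHurwitz al s := by
    intro K
    simp only [prod_idx]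
    exact cont_all r al hal (K + 1)
  choose G hGa hG using hc
  have hPa : ∀ (A : Finset (Fin (r + 1) × ℕ)) s,
      AnalyticAt ℂ (fun s => ∏ q ∈ A, lin q.1 q.2 s) s := fun A s =>
    Finset.analyticAt_fun_prod _ fun q _ => lin_analytic _ _ _
  have hcons : ∀ K L : ℕ, K ≤ L → ∀ s ∈ Ur (r + 1) ((K + 1 : ℕ) : ℤ),
      G K s * (∏ q ∈ idx r (L + 1), lin q.1 q.2 s) =
        G L s * ∏ q ∈ idx r (K + 1), lin q.1 q.2 s := by
    intro K L hKL
    obtain ⟨z, hz⟩ := Ur_nonempty (r + 1)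
    have hzK : z ∈ Ur (r + 1) ((K + 1 : ℕ) : ℤ) := Ur_mono (Nat.zero_le _) hz
    refine AnalyticOnNhd.eqOn_of_preconnected_of_eventuallyEq (z₀ := z)
      (fun s hs => (hGa K s hs).mul (hPa _ s))
      (fun s hs => (hGa L s (Ur_mono (by omega) hs)).mul (hPa _ s))
      (Ur_convex _ _).isPreconnected hzK ?_
    filter_upwards [(Ur_isOpen (r + 1) 0).mem_nhds hz] with s hs
    rw [hG K s hs, hG L s hs]; ring
  choose κ hκ using fun s : Fin (r + 1) → ℂ => exists_mem_Ur s
  -- On the polar set the value of `F` is irrelevant.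
  let F : (Fin (r + 1) → ℂ) → ℂ := fun s =>
    G (κ s) s / ∏ q ∈ idx r (κ s + 1), lin q.1 q.2 s
  have hF : ∀ K : ℕ, ∀ s ∈ Ur (r + 1) ((K + 1 : ℕ) : ℤ), s ∉ polarSet (SH (r := r + 1)) →
      F s = G K s / ∏ q ∈ idx r (K + 1), lin q.1 q.2 s := by
    intro K s hs hsp
    have h1 := (prod_idx_ne_zero_iff hs).2 hsp
    have h2 := (prod_idx_ne_zero_iff (hκ s)).2 hsp
    rw [div_eq_div_iff h2 h1]
    rcases le_total K (κ s) with h | h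
    · exact (hcons K _ h s hs).symm
    · exact hcons _ K h s (hκ s)
  refine ⟨F, ?_, ?_, ?_⟩
  · intro p hp
    have hpK := hκ p
    have hne := (prod_idx_ne_zero_iff hpK).2 hp
    refine ((hGa (κ p) p hpK).div (hPa _ p) hne).congr ?_
    filter_upwards [(Ur_isOpen (r + 1) (κ p + 1)).mem_nhds hpK,
      (hPa (idx r (κ p + 1)) p).continuousAt.eventually_ne hne] with s hs hs0
    exact (hF _ s hs ((prod_idx_ne_zero_iff hs).1 hs0)).symm
  · intro s hs
    have hs0 : s ∈ Ur (r + 1) ((0 : ℕ) : ℤ) := hs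
    have hs1 : s ∈ Ur (r + 1) ((0 + 1 : ℕ) : ℤ) := Ur_mono (Nat.zero_le _) hs0
    have hsp : s ∉ polarSet (SH (r := r + 1)) := by
      rintro ⟨i, k, _, hik⟩
      have h1 := mem_Ur.1 hs0 i
      rw [show ∑ j ∈ Finset.Iic i, s j = ((i : ℕ) + 1 : ℂ) - k from hik] at h1
      have h2 : (((i : ℕ) + 1 : ℂ) - k).re = (i : ℕ) + 1 - k := by simp
      rw [h2] at h1
      have : (0 : ℝ) ≤ k := Nat.cast_nonneg _
      push_cast at h1; linarith
    rw [hF 0 s hs1 hsp, hG 0 s hs0, mul_div_cancel_left₀ _ ((prod_idx_ne_zero_iff hs1).2 hsp)]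
  · intro p T hT
    have hpK := hκ p
    have hTsub : T ⊆ idx r (κ p + 1) := by
      rintro ⟨i, k⟩ hq
      obtain ⟨h1, h2⟩ := (hT i k).1 hq
      exact mem_idx hpK h1 h2
    -- The polar factors of the region that do not vanish at `p`.
    let R : (Fin (r + 1) → ℂ) → ℂ := fun s => ∏ q ∈ idx r (κ p + 1) \ T, lin q.1 q.2 s
    have hRp : R p ≠ 0 := by
      refine Finset.prod_ne_zero_iff.2 fun q hq h0 => ?_
      rw [Finset.mem_sdiff] at hq
      exact hq.2 ((hT q.1 q.2).2 ⟨SH_of_mem_idx hq.1, lin_eq_zero.1 h0⟩)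
    have hRc : Continuous R := continuous_iff_continuousAt.2 fun s => (hPa _ s).continuousAt
    refine ⟨Ur (r + 1) ((κ p + 1 : ℕ) : ℤ) ∩ {s | R s ≠ 0}, fun s => G (κ p) s / R s,
      (Ur_isOpen _ _).inter (isOpen_ne_fun hRc continuous_const), ⟨hpK, hRp⟩,
      fun s hs => (hGa _ s hs.1).div (hPa _ s) hs.2, ?_⟩
    rintro s ⟨hs, hsR⟩ hsp
    have hne := (prod_idx_ne_zero_iff hs).2 hsp
    rw [hF _ s hs hsp]
    have hsplit : (∏ q ∈ idx r (κ p + 1) \ T, lin q.1 q.2 s) * ∏ q ∈ T, lin q.1 q.2 s =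
        ∏ q ∈ idx r (κ p + 1), lin q.1 q.2 s := Finset.prod_sdiff hTsub
    change G (κ p) s / R s = (∏ q ∈ T, lin q.1 q.2 s) * _
    change R s * _ = _ at hsplit
    rw [← hsplit] at hne ⊢
    have hsR' : R s ≠ 0 := hsR
    have hT0 := right_ne_zero_of_mul hne
    field_simp

end MHZ

/-- The multiple Hurwitz zeta function continues meromorphically to `ℂ^r` with
at most simple poles along `H_{1,0}` and `H_{i,k}` for `2 ≤ i ≤ r`, `k ≥ 0`. -/
theorem stmt_11 (r : ℕ) (al : Fin (r + 1) → ℝ) (hal : ∀ i, al i ∈ Set.Ico (0 : ℝ) 1) :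
    ∃ F : (Fin (r + 1) → ℂ) → ℂ,
      AnalyticOnNhd ℂ F (polarSet (SH (r := r + 1)))ᶜ ∧
      (∀ s ∈ Ur (r + 1) 0, F s = multipleHurwitz al s) ∧
      SimplePolesAlong (SH (r := r + 1)) F := by
  exact MHZ.main r al hal
end
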